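/- arXiv:1109.4835 — 4 statements merged into one kernel-verified Lean document; each statement's English description precedes it below -/
import Mathlib

section
/- Let C be a quasicategory and let X and Y be objects of C. Then the two models of the mapping space, Hom_C(X,Y) and Hom^L_C(X,Y), are homotopy equivalent simplicial sets. -/
open CategoryTheory Simplicial Opposite

namespace SSetPaper

universe u

/-- Extend a morphism of `SimplexCategory` by one extra top vertex on each side,
sending the new top vertex to the new top vertex. -/
def joinPt {x y : SimplexCategory} (u : x ⟶ y) :
    (⦋x.len + 1⦌ : SimplexCategory) ⟶ ⦋y.len + 1⦌ :=
  SimplexCategory.mkHom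
    { toFun := fun i =>
        if h : (i : ℕ) < x.len + 1 then (u.toOrderHom ⟨i, h⟩).castSucc else Fin.last _
      monotone' := by
        intro i j hij
        dsimp only
        split_ifs with hi hj hj
        · exact Fin.castSucc_le_castSucc_iff.mpr (u.toOrderHom.monotone hij)
        · exact Fin.le_last _
        · exact absurd (lt_of_le_of_lt (show (i : ℕ) ≤ j from hij) hj) hi
        · exact le_rfl }

lemma joinPt_apply_of_lt {x y : SimplexCategory} (u : x ⟶ y) (i : Fin (x.len + 2))
    (h : (i : ℕ) < x.len + 1) :
    (joinPt u).toOrderHom i = (u.toOrderHom ⟨i, h⟩).castSucc :=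
  dif_pos h

lemma joinPt_apply_of_ge {x y : SimplexCategory} (u : x ⟶ y) (i : Fin (x.len + 2))
    (h : ¬ (i : ℕ) < x.len + 1) :
    (joinPt u).toOrderHom i = Fin.last (y.len + 1) :=
  dif_neg h

lemma joinPt_id (x : SimplexCategory) :
    joinPt (𝟙 x) = 𝟙 (⦋x.len + 1⦌ : SimplexCategory) := by
  apply SimplexCategory.Hom.ext
  apply OrderHom.ext
  funext i
  by_cases h : (i : ℕ) < x.len + 1
  · rw [joinPt_apply_of_lt _ i h]
    exact Fin.ext (by simp)
  · rw [joinPt_apply_of_ge _ i h]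
    have hi := i.isLt
    simp only [SimplexCategory.len_mk] at hi
    refine Fin.ext ?_
    simp only [Fin.val_last, SimplexCategory.id_toOrderHom, OrderHom.id_coe, id_eq]
    omega

lemma joinPt_comp {x y z : SimplexCategory} (u : x ⟶ y) (v : y ⟶ z) :
    joinPt (u ≫ v) = joinPt u ≫ joinPt v := by
  apply SimplexCategory.Hom.ext
  apply OrderHom.ext
  funext i
  rw [SimplexCategory.comp_toOrderHom, OrderHom.comp_coe]
  show (joinPt (u ≫ v)).toOrderHom i = (joinPt v).toOrderHom ((joinPt u).toOrderHom i)
  by_cases h : (i : ℕ) < x.len + 1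
  · rw [joinPt_apply_of_lt (u ≫ v) i h, joinPt_apply_of_lt u i h,
      joinPt_apply_of_lt v _ (by simpa using (u.toOrderHom ⟨i, h⟩).isLt)]
    rw [SimplexCategory.comp_toOrderHom, OrderHom.comp_coe]
    rfl
  · rw [joinPt_apply_of_ge (u ≫ v) i h, joinPt_apply_of_ge u i h,
      joinPt_apply_of_ge v _ (by simp)]

/-- The inclusion of `x` into `[x.len + 1]` as the initial segment
(the face opposite the final vertex). -/
def botIncl (x : SimplexCategory) : x ⟶ ⦋x.len + 1⦌ :=
  SimplexCategory.Hom.mk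
    { toFun := Fin.castSucc
      monotone' := fun _ _ h => Fin.castSucc_le_castSucc_iff.mpr h }

/-- The final vertex of `[x.len + 1]`. -/
def lastVtx (x : SimplexCategory) : (⦋0⦌ : SimplexCategory) ⟶ ⦋x.len + 1⦌ :=
  SimplexCategory.const ⦋0⦌ ⦋x.len + 1⦌ (Fin.last (x.len + 1))

lemma botIncl_joinPt {x y : SimplexCategory} (u : x ⟶ y) :
    botIncl x ≫ joinPt u = u ≫ botIncl y := by
  apply SimplexCategory.Hom.ext
  apply OrderHom.ext
  funext i
  rw [SimplexCategory.comp_toOrderHom, OrderHom.comp_coe, SimplexCategory.comp_toOrderHom,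
    OrderHom.comp_coe]
  show (joinPt u).toOrderHom ((botIncl x).toOrderHom i)
      = (botIncl y).toOrderHom (u.toOrderHom i)
  have hlt : ((botIncl x).toOrderHom i : ℕ) < x.len + 1 := by
    show ((Fin.castSucc i : Fin (x.len + 2)) : ℕ) < x.len + 1
    simpa using i.isLt
  rw [joinPt_apply_of_lt _ _ hlt]
  have e : (⟨((botIncl x).toOrderHom i : ℕ), hlt⟩ : Fin (x.len + 1)) = i := Fin.ext rfl
  rw [e]
  rfl

lemma lastVtx_joinPt {x y : SimplexCategory} (u : x ⟶ y) :
    lastVtx x ≫ joinPt u = lastVtx y := by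
  apply SimplexCategory.Hom.ext
  apply OrderHom.ext
  funext i
  rw [SimplexCategory.comp_toOrderHom, OrderHom.comp_coe]
  show (joinPt u).toOrderHom ((lastVtx x).toOrderHom i) = (lastVtx y).toOrderHom i
  have hge : ¬ (((lastVtx x).toOrderHom i : ℕ) < x.len + 1) := by
    show ¬ (((Fin.last (x.len + 1) : Fin (x.len + 2)) : ℕ) < x.len + 1)
    simp
  rw [joinPt_apply_of_ge _ _ hge]
  rfl

lemma toZero_unique {x : SimplexCategory} (f g : x ⟶ ⦋0⦌) : f = g := by
  apply SimplexCategory.Hom.ext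
  apply OrderHom.ext
  funext i
  have h1 := (f.toOrderHom i).isLt
  have h2 := (g.toOrderHom i).isLt
  simp only [SimplexCategory.len_mk] at h1 h2
  exact Fin.ext (by omega)

/-- The mapping space `Hom_C(X,Y)`: its `k`-simplices are the `(k+1)`-simplices of `C`
whose face opposite the final vertex is the totally degenerate `k`-simplex at `X` and whose
final vertex is `Y`, with faces and degeneracies inherited from `C`. -/
def RightHom (C : SSet.{u}) (X Y : C _⦋0⦌) : SSet.{u} where
  obj a := { σ : C.obj (op ⦋a.unop.len + 1⦌) //
      C.map (botIncl a.unop).op σ = C.map (SimplexCategory.const a.unop ⦋0⦌ 0).op X ∧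
      C.map (lastVtx a.unop).op σ = Y }
  map {a b} f := ↾fun σ => ⟨C.map (joinPt f.unop).op σ.1, by
    constructor
    · rw [← FunctorToTypes.map_comp_apply, ← op_comp, botIncl_joinPt, op_comp,
        FunctorToTypes.map_comp_apply, σ.2.1, ← FunctorToTypes.map_comp_apply, ← op_comp,
        toZero_unique (f.unop ≫ SimplexCategory.const a.unop ⦋0⦌ 0)
          (SimplexCategory.const b.unop ⦋0⦌ 0)]
    · rw [← FunctorToTypes.map_comp_apply, ← op_comp, lastVtx_joinPt]
      exact σ.2.2⟩
  map_id a := by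
    refine ConcreteCategory.hom_ext _ _ fun σ => ?_
    apply Subtype.ext
    show C.map (joinPt (𝟙 a).unop).op σ.1 = σ.1
    rw [unop_id, joinPt_id, op_id, FunctorToTypes.map_id_apply]
  map_comp {a b c} f g := by
    refine ConcreteCategory.hom_ext _ _ fun σ => ?_
    apply Subtype.ext
    show C.map (joinPt (f ≫ g).unop).op σ.1 = C.map (joinPt g.unop).op (C.map (joinPt f.unop).op σ.1)
    rw [unop_comp, joinPt_comp, op_comp, FunctorToTypes.map_comp_apply]


/-- Extend a morphism of `SimplexCategory` by one extra bottom vertex on each side,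
sending the new bottom vertex to the new bottom vertex. -/
def joinPtL {x y : SimplexCategory} (u : x ⟶ y) :
    (⦋x.len + 1⦌ : SimplexCategory) ⟶ ⦋y.len + 1⦌ :=
  SimplexCategory.mkHom
    { toFun := fun i =>
        if _ : (i : ℕ) = 0 then 0
        else (u.toOrderHom ⟨(i : ℕ) - 1, by have := i.isLt; omega⟩).succ
      monotone' := by
        intro i j hij
        have hij' : (i : ℕ) ≤ j := hij
        dsimp only
        split_ifs with hi hj hj
        · exact le_rfl
        · exact Fin.zero_le _
        · omega
        · exact Fin.succ_le_succ_iff.mpr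
            (u.toOrderHom.monotone (show ((i : ℕ) - 1) ≤ ((j : ℕ) - 1) by omega)) }

lemma joinPtL_apply_zero {x y : SimplexCategory} (u : x ⟶ y) (i : Fin (x.len + 2))
    (h : (i : ℕ) = 0) : (joinPtL u).toOrderHom i = 0 :=
  dif_pos h

lemma joinPtL_apply_pos {x y : SimplexCategory} (u : x ⟶ y) (i : Fin (x.len + 2))
    (h : ¬ (i : ℕ) = 0) :
    (joinPtL u).toOrderHom i
      = (u.toOrderHom ⟨(i : ℕ) - 1, by have := i.isLt; omega⟩).succ :=
  dif_neg h

lemma joinPtL_id (x : SimplexCategory) :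
    joinPtL (𝟙 x) = 𝟙 (⦋x.len + 1⦌ : SimplexCategory) := by
  apply SimplexCategory.Hom.ext
  apply OrderHom.ext
  funext i
  by_cases h : (i : ℕ) = 0
  · rw [joinPtL_apply_zero _ i h]
    exact Fin.ext (by simp [h])
  · rw [joinPtL_apply_pos _ i h]
    refine Fin.ext ?_
    show ((i : ℕ) - 1) + 1 = _
    simp only [SimplexCategory.id_toOrderHom, OrderHom.id_coe, id_eq]
    omega

lemma joinPtL_comp {x y z : SimplexCategory} (u : x ⟶ y) (v : y ⟶ z) :
    joinPtL (u ≫ v) = joinPtL u ≫ joinPtL v := by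
  apply SimplexCategory.Hom.ext
  apply OrderHom.ext
  funext i
  rw [SimplexCategory.comp_toOrderHom, OrderHom.comp_coe]
  show (joinPtL (u ≫ v)).toOrderHom i = (joinPtL v).toOrderHom ((joinPtL u).toOrderHom i)
  by_cases h : (i : ℕ) = 0
  · rw [joinPtL_apply_zero (u ≫ v) i h, joinPtL_apply_zero u i h,
      joinPtL_apply_zero v _ rfl]
  · rw [joinPtL_apply_pos (u ≫ v) i h, joinPtL_apply_pos u i h,
      joinPtL_apply_pos v _ (by simp)]
    rw [SimplexCategory.comp_toOrderHom, OrderHom.comp_coe]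
    rfl

/-- The inclusion of `x` into `[x.len + 1]` as the final segment
(the face opposite the initial vertex). -/
def topIncl (x : SimplexCategory) : x ⟶ ⦋x.len + 1⦌ :=
  SimplexCategory.Hom.mk
    { toFun := Fin.succ
      monotone' := fun _ _ h => Fin.succ_le_succ_iff.mpr h }

/-- The initial vertex of `[x.len + 1]`. -/
def zeroVtx (x : SimplexCategory) : (⦋0⦌ : SimplexCategory) ⟶ ⦋x.len + 1⦌ :=
  SimplexCategory.const ⦋0⦌ ⦋x.len + 1⦌ 0

lemma topIncl_joinPtL {x y : SimplexCategory} (u : x ⟶ y) :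
    topIncl x ≫ joinPtL u = u ≫ topIncl y := by
  apply SimplexCategory.Hom.ext
  apply OrderHom.ext
  funext i
  rw [SimplexCategory.comp_toOrderHom, OrderHom.comp_coe, SimplexCategory.comp_toOrderHom,
    OrderHom.comp_coe]
  show (joinPtL u).toOrderHom ((topIncl x).toOrderHom i)
      = (topIncl y).toOrderHom (u.toOrderHom i)
  have hne : ¬ (((topIncl x).toOrderHom i : ℕ) = 0) := by
    show ¬ ((Fin.succ i : Fin (x.len + 2)) : ℕ) = 0
    simp
  rw [joinPtL_apply_pos _ _ hne]
  have e : (⟨(((topIncl x).toOrderHom i : ℕ)) - 1, by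
      have hlt := ((topIncl x).toOrderHom i).isLt
      simp only [SimplexCategory.len_mk] at hlt
      omega⟩ : Fin (x.len + 1)) = i := by
    refine Fin.ext ?_
    show ((Fin.succ i : Fin (x.len + 2)) : ℕ) - 1 = (i : ℕ)
    simp
  rw [e]
  rfl

lemma zeroVtx_joinPtL {x y : SimplexCategory} (u : x ⟶ y) :
    zeroVtx x ≫ joinPtL u = zeroVtx y := by
  apply SimplexCategory.Hom.ext
  apply OrderHom.ext
  funext i
  rw [SimplexCategory.comp_toOrderHom, OrderHom.comp_coe]
  show (joinPtL u).toOrderHom ((zeroVtx x).toOrderHom i) = (zeroVtx y).toOrderHom i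
  rw [joinPtL_apply_zero _ _ rfl]
  rfl

/-- The mapping space `Hom^L_C(X,Y)`: its `k`-simplices are the `(k+1)`-simplices of `C`
whose `0`-th vertex is `X` and whose face opposite the `0`-th vertex is the totally
degenerate `k`-simplex at `Y`, with faces and degeneracies inherited from `C`. -/
def LeftHom (C : SSet.{u}) (X Y : C _⦋0⦌) : SSet.{u} where
  obj a := { σ : C.obj (op ⦋a.unop.len + 1⦌) //
      C.map (zeroVtx a.unop).op σ = X ∧
      C.map (topIncl a.unop).op σ = C.map (SimplexCategory.const a.unop ⦋0⦌ 0).op Y }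
  map {a b} f := ↾fun σ => ⟨C.map (joinPtL f.unop).op σ.1, by
    constructor
    · rw [← FunctorToTypes.map_comp_apply, ← op_comp, zeroVtx_joinPtL]
      exact σ.2.1
    · rw [← FunctorToTypes.map_comp_apply, ← op_comp, topIncl_joinPtL, op_comp,
        FunctorToTypes.map_comp_apply, σ.2.2, ← FunctorToTypes.map_comp_apply, ← op_comp,
        toZero_unique (f.unop ≫ SimplexCategory.const a.unop ⦋0⦌ 0)
          (SimplexCategory.const b.unop ⦋0⦌ 0)]⟩
  map_id a := by
    refine ConcreteCategory.hom_ext _ _ fun σ => ?_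
    apply Subtype.ext
    show C.map (joinPtL (𝟙 a).unop).op σ.1 = σ.1
    rw [unop_id, joinPtL_id, op_id, FunctorToTypes.map_id_apply]
  map_comp {a b c} f g := by
    refine ConcreteCategory.hom_ext _ _ fun σ => ?_
    apply Subtype.ext
    show C.map (joinPtL (f ≫ g).unop).op σ.1
        = C.map (joinPtL g.unop).op (C.map (joinPtL f.unop).op σ.1)
    rw [unop_comp, joinPtL_comp, op_comp, FunctorToTypes.map_comp_apply]

/-- The constant map at a vertex `i` of `Δ[1]`. -/
def constVertexMap (A : SSet.{0}) (i : Fin 2) : A ⟶ (Δ[1] : SSet) where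
  app m := ↾fun _ => SSet.stdSimplex.const 1 i m
  naturality _ _ _ := rfl

/-- The inclusion `A ≅ {i} × A ⟶ Δ[1] × A` at a vertex `i` of `Δ[1]`. -/
noncomputable def atVertex (A : SSet.{0}) (i : Fin 2) :
    A ⟶ MonoidalCategory.tensorObj (Δ[1] : SSet) A :=
  CartesianMonoidalCategory.lift (constVertexMap A i) (𝟙 A)

/-- An elementary homotopy between maps of simplicial sets: a map `H : Δ[1] × A ⟶ B`
restricting to `f` on `{0} × A` and to `g` on `{1} × A`. -/
def ElemHomotopic {A B : SSet.{0}} (f g : A ⟶ B) : Prop :=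
  ∃ H : MonoidalCategory.tensorObj (Δ[1] : SSet) A ⟶ B,
    atVertex A 0 ≫ H = f ∧ atVertex A 1 ≫ H = g

/-- Two maps of simplicial sets are homotopic if they are related by the equivalence
relation generated by elementary homotopies. -/
def Homotopic {A B : SSet.{0}} (f g : A ⟶ B) : Prop :=
  Relation.EqvGen ElemHomotopic f g

/-- A map of simplicial sets is a homotopy equivalence if it admits an inverse up to
homotopy. -/
def IsHomotopyEquivalence {A B : SSet.{0}} (f : A ⟶ B) : Prop :=
  ∃ g : B ⟶ A, Homotopic (f ≫ g) (𝟙 A) ∧ Homotopic (g ≫ f) (𝟙 B)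

end SSetPaper

/-!
Write `k ⋆ l` for the join of simplices. The `k`-simplices of `Hom_C(X,Y)` and `Hom^L_C(X,Y)` are
the simplices of `C` of shape `k ⋆ 0` and `0 ⋆ k` that are constant at `X` on the left and at `Y` on
the right factor. Both mapping spaces are homotopy equivalent to the analogous one of shape `k ⋆ k`;
the two cases are dual, so consider `k ⋆ 0`. The space of shape `k ⋆ (k ⋆ 0)` restricts to those of
shape `k ⋆ 0` and `k ⋆ k`, along the final vertex and the initial segment of `k ⋆ 0`.

The first restriction is a homotopy equivalence because `k ⋆ 0` contracts, naturally in `k`, onto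
its final vertex. The second is a trivial fibration: a lifting problem against `∂Δ[n] ⟶ Δ[n]` asks
to extend a map to `C` from the union of the faces `n ⋆ n`, `n ⋆ 0` and `k ⋆ (k ⋆ 0)` of
`n ⋆ (n ⋆ 0)`, where `n ⋆ 0` is the right factor and `k` runs through the proper faces of `n`. With
`p i` and `o i` the vertices of the two copies of `n`, and `z` the final vertex, the missing
simplices contain `z`, some `p i`, and for each `i` at least one of `p i` and `o i`. Inserting or
erasing `o i` for the least `i` such that `p i` is present pairs them up, and since
`p i < o i < z`, they can be attached along inner horns.
-/

namespace SSetPaper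

open AugmentedSimplexCategory (tensorObjOf tensorHomOf inl' inr')

universe u w

/-! ### Inner anodyne extensions from pivots -/

section VertexSet

variable {N m m' : ℕ}

/-- The set of vertices of a simplex of the standard simplex `Δ[N]`. Nondegenerate simplices of
`Δ[N]` are determined by it. -/
def vertexSet (g : (Δ[N] : SSet.{u}) _⦋m⦌) : Finset (Fin (N + 1)) :=
  Finset.univ.image fun i => g i

lemma mem_vertexSet {g : (Δ[N] : SSet.{u}) _⦋m⦌} {v : Fin (N + 1)} :
    v ∈ vertexSet g ↔ ∃ i, g i = v := by
  simp [vertexSet]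

lemma card_vertexSet {g : (Δ[N] : SSet.{u}) _⦋m⦌} (hg : StrictMono fun i => g i) :
    (vertexSet g).card = m + 1 := by
  rw [vertexSet, Finset.card_image_of_injective _ hg.injective, Finset.card_univ, Fintype.card_fin]

lemma vertexSet_δ {g : (Δ[N] : SSet.{u}) _⦋m + 1⦌} (hg : StrictMono fun i => g i)
    (i : Fin (m + 2)) :
    vertexSet (SimplicialObject.δ (Δ[N] : SSet.{u}) i g) = (vertexSet g).erase (g i) := by
  ext v
  simp only [mem_vertexSet, Finset.mem_erase]
  constructor
  · rintro ⟨j, rfl⟩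
    exact ⟨fun h => Fin.succAbove_ne i j (hg.injective h), i.succAbove j, rfl⟩
  · rintro ⟨hv, j, rfl⟩
    obtain ⟨k, rfl⟩ := Fin.exists_succAbove_eq fun h : j = i => hv (h ▸ rfl)
    exact ⟨k, rfl⟩

lemma eq_of_vertexSet_eq {g g' : (Δ[N] : SSet.{u}) _⦋m⦌} (hg : StrictMono fun i => g i)
    (hg' : StrictMono fun i => g' i) (h : vertexSet g = vertexSet g') : g = g' := by
  have e := Finset.orderEmbOfFin_unique (card_vertexSet hg) (f := fun i => g i)
    (fun i => mem_vertexSet.2 ⟨i, rfl⟩) hg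
  have e' := Finset.orderEmbOfFin_unique (card_vertexSet hg) (f := fun i => g' i)
    (fun i => h ▸ mem_vertexSet.2 ⟨i, rfl⟩) hg'
  exact SSet.stdSimplex.ext _ _ fun i => congrFun (e.trans e'.symm) i

lemma S_mk_eq_iff_vertexSet_eq {g : (Δ[N] : SSet.{u}) _⦋m⦌} {g' : (Δ[N] : SSet.{u}) _⦋m'⦌}
    (hg : StrictMono fun i => g i) (hg' : StrictMono fun i => g' i) :
    SSet.S.mk g = SSet.S.mk g' ↔ vertexSet g = vertexSet g' := by
  refine ⟨fun h => congrArg (fun s : SSet.S Δ[N] => vertexSet s.simplex) h, fun h => ?_⟩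
  obtain rfl : m = m' := by
    have := card_vertexSet hg
    rw [h, card_vertexSet hg'] at this
    omega
  rw [eq_of_vertexSet_eq hg hg' h]

lemma exists_strictMono_vertexSet_eq {F : Finset (Fin (N + 1))} (hF : F.card = m + 1) :
    ∃ g : (Δ[N] : SSet.{u}) _⦋m⦌, (StrictMono fun i => g i) ∧ vertexSet g = F := by
  refine ⟨SSet.stdSimplex.objMk (F.orderEmbOfFin hF).toOrderHom,
    (F.orderEmbOfFin hF).strictMono, ?_⟩
  ext v
  rw [mem_vertexSet, ← Finset.mem_coe, ← Finset.range_orderEmbOfFin F hF]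
  rfl

lemma vertexSet_subset_of_le {g : (Δ[N] : SSet.{u}) _⦋m⦌} {g' : (Δ[N] : SSet.{u}) _⦋m'⦌}
    (h : SSet.S.mk g ≤ SSet.S.mk g') : vertexSet g ⊆ vertexSet g' := by
  obtain ⟨f, hf : (Δ[N] : SSet.{u}).map f.op g' = g⟩ := SSet.S.le_iff.1 h
  intro v hv
  rw [← hf] at hv
  obtain ⟨i, rfl⟩ := mem_vertexSet.1 hv
  exact mem_vertexSet.2 ⟨f i, rfl⟩

end VertexSet

/-- A combinatorial recipe for filling in the simplices of `Δ[N]` missing from a subcomplex `A`.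
Whether a nondegenerate simplex is missing depends only on its vertex set; the missing vertex sets
are paired off by inserting or erasing a pivot that lies strictly between two of their elements,
and `rank` decreases along the attachments, so that the fillings can be carried out in turn. -/
structure PivotRule {N : ℕ} (A : (Δ[N] : SSet.{u}).Subcomplex) where
  missing : Finset (Fin (N + 1)) → Prop
  pivot : Finset (Fin (N + 1)) → Fin (N + 1)
  rank : Finset (Fin (N + 1)) → ℕ
  notMem_iff {m : ℕ} (g : (Δ[N] : SSet.{u}) _⦋m⦌) : g ∉ A.obj _ ↔ missing (vertexSet g)
  missing_insert {F} (hF : missing F) : missing (insert (pivot F) F)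
  pivot_insert {F} (hF : missing F) : pivot (insert (pivot F) F) = pivot F
  missing_erase {F} (hF : missing F) : missing (F.erase (pivot F))
  pivot_erase {F} (hF : missing F) : pivot (F.erase (pivot F)) = pivot F
  exists_lt_pivot {F} (hF : missing F) : ∃ v ∈ F, v < pivot F
  exists_pivot_lt {F} (hF : missing F) : ∃ v ∈ F, pivot F < v
  rank_lt {F v} (hF : missing F) (hp : pivot F ∈ F) (hv : v ∈ F) (hvp : v ≠ pivot F)
    (hFv : missing (F.erase v)) (hpv : pivot (F.erase v) ∉ F.erase v) :
    rank (F.erase v) < rank (F.erase (pivot F))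

namespace PivotRule

variable {N : ℕ} {A : (Δ[N] : SSet.{u}).Subcomplex} (T : PivotRule A)

/-- The missing vertex sets containing their pivot: the simplices whose inner horn opposite the
pivot gets filled. -/
abbrev Filler : Type := {F : Finset (Fin (N + 1)) // T.missing F ∧ T.pivot F ∈ F}

namespace Filler

variable {T} (F G : T.Filler)

lemma card_eq : F.1.card = F.1.card - 2 + 1 + 1 := by
  obtain ⟨v, hv, hlt⟩ := T.exists_lt_pivot F.2.1
  have : 1 < F.1.card := Finset.one_lt_card.2 ⟨v, hv, _, F.2.2, hlt.ne⟩
  omega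

/-- The nondegenerate simplex with the given set of vertices. -/
noncomputable def simplex : (Δ[N] : SSet.{u}) _⦋F.1.card - 2 + 1⦌ :=
  (exists_strictMono_vertexSet_eq F.card_eq).choose

lemma strictMono_simplex : StrictMono fun i => F.simplex i :=
  (exists_strictMono_vertexSet_eq F.card_eq).choose_spec.1

@[simp]
lemma vertexSet_simplex : vertexSet F.simplex = F.1 :=
  (exists_strictMono_vertexSet_eq F.card_eq).choose_spec.2

lemma exists_simplex_apply_eq {v : Fin (N + 1)} (hv : v ∈ F.1) : ∃ i, F.simplex i = v :=
  mem_vertexSet.1 (F.vertexSet_simplex.symm ▸ hv)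

/-- The position of the pivot among the vertices. -/
noncomputable def index : Fin (F.1.card - 2 + 2) := (F.exists_simplex_apply_eq F.2.2).choose

lemma simplex_index : F.simplex F.index = T.pivot F.1 :=
  (F.exists_simplex_apply_eq F.2.2).choose_spec

lemma strictMono_δ_simplex :
    StrictMono fun i => SimplicialObject.δ (Δ[N] : SSet.{u}) F.index F.simplex i :=
  F.strictMono_simplex.comp (Fin.strictMono_succAbove _)

@[simp]
lemma vertexSet_δ_simplex :
    vertexSet (SimplicialObject.δ (Δ[N] : SSet.{u}) F.index F.simplex) =
      F.1.erase (T.pivot F.1) := by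
  rw [vertexSet_δ F.strictMono_simplex, vertexSet_simplex, simplex_index]

variable {F G} in
lemma eq_of_erase_pivot_eq (h : F.1.erase (T.pivot F.1) = G.1.erase (T.pivot G.1)) : F = G := by
  have hp : T.pivot F.1 = T.pivot G.1 := by
    rw [← T.pivot_erase F.2.1, h, T.pivot_erase G.2.1]
  apply Subtype.ext
  rw [← Finset.insert_erase F.2.2, ← Finset.insert_erase G.2.2, h, hp]

lemma ne_erase_pivot : F.1 ≠ G.1.erase (T.pivot G.1) := by
  intro h
  have hp := F.2.2
  rw [h, T.pivot_erase G.2.1] at hp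
  exact Finset.notMem_erase _ _ hp

end Filler

lemma exists_filler {m : ℕ} {g : (Δ[N] : SSet.{u}) _⦋m⦌} (hg : StrictMono fun i => g i)
    (hA : g ∉ A.obj _) :
    ∃ F : T.Filler, SSet.S.mk g = SSet.S.mk F.simplex ∨
      SSet.S.mk g = SSet.S.mk (SimplicialObject.δ (Δ[N] : SSet.{u}) F.index F.simplex) := by
  have hF := (T.notMem_iff g).1 hA
  by_cases hp : T.pivot (vertexSet g) ∈ vertexSet g
  · refine ⟨⟨_, hF, hp⟩, Or.inl ?_⟩
    rw [S_mk_eq_iff_vertexSet_eq hg (Filler.strictMono_simplex _), Filler.vertexSet_simplex]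
  · refine ⟨⟨_, T.missing_insert hF, ?_⟩, Or.inr ?_⟩
    · rw [T.pivot_insert hF]
      exact Finset.mem_insert_self _ _
    · rw [S_mk_eq_iff_vertexSet_eq hg (Filler.strictMono_δ_simplex _),
        Filler.vertexSet_δ_simplex]
      dsimp only
      rw [T.pivot_insert hF, Finset.erase_insert hp]

/-- The pairing of the missing simplices containing their pivot with their face opposite the
pivot. -/
noncomputable def pairingCore : A.PairingCore where
  ι := T.Filler
  dim F := F.1.card - 2
  simplex F := F.simplex
  index F := F.index
  nonDegenerate₁ F := (SSet.stdSimplex.mem_nonDegenerate_iff_strictMono _).2 F.strictMono_simplex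
  nonDegenerate₂ F := (SSet.stdSimplex.mem_nonDegenerate_iff_strictMono _).2 F.strictMono_δ_simplex
  notMem₁ F := (T.notMem_iff _).2 (by simpa using F.2.1)
  notMem₂ F := (T.notMem_iff _).2 (by simpa using T.missing_erase F.2.1)
  injective_type₁' {F G} h := Subtype.ext <| by
    simpa using (S_mk_eq_iff_vertexSet_eq F.strictMono_simplex G.strictMono_simplex).1 h
  injective_type₂' {F G} h := Filler.eq_of_erase_pivot_eq <| by
    simpa using (S_mk_eq_iff_vertexSet_eq F.strictMono_δ_simplex G.strictMono_δ_simplex).1 h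
  type₁_ne_type₂' F G h := Filler.ne_erase_pivot F G <| by
    simpa using (S_mk_eq_iff_vertexSet_eq F.strictMono_simplex G.strictMono_δ_simplex).1 h
  surjective' x := by
    obtain ⟨m, g, hg, hA, rfl⟩ := x.mk_surjective
    exact T.exists_filler ((SSet.stdSimplex.mem_nonDegenerate_iff_strictMono _).1 hg) hA

instance : T.pairingCore.IsInner where
  ne_zero F h := by
    obtain ⟨v, hv, hlt⟩ := T.exists_lt_pivot F.2.1
    obtain ⟨i, rfl⟩ := Filler.exists_simplex_apply_eq F hv
    rw [← Filler.simplex_index F] at hlt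
    exact (Fin.zero_le i).not_gt (h ▸ (Filler.strictMono_simplex F).lt_iff_lt.1 hlt)
  ne_last F h := by
    obtain ⟨v, hv, hlt⟩ := T.exists_pivot_lt F.2.1
    obtain ⟨i, rfl⟩ := Filler.exists_simplex_apply_eq F hv
    rw [← Filler.simplex_index F] at hlt
    exact (Fin.le_last i).not_gt (h ▸ (Filler.strictMono_simplex F).lt_iff_lt.1 hlt)

lemma exists_erase_eq_of_ancestralRel {F G : T.Filler} (h : T.pairingCore.AncestralRel F G)
    (hcard : F.1.card = G.1.card) :
    ∃ v ∈ G.1, v ≠ T.pivot G.1 ∧ F.1.erase (T.pivot F.1) = G.1.erase v := by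
  have hsub : F.1.erase (T.pivot F.1) ⊆ G.1 := by
    rw [← Filler.vertexSet_δ_simplex, ← Filler.vertexSet_simplex G]
    exact vertexSet_subset_of_le h.2.le
  obtain ⟨v, hvF, hv⟩ : ∃ v ∉ F.1.erase (T.pivot F.1), insert v (F.1.erase (T.pivot F.1)) = G.1 :=
    Finset.exists_eq_insert_iff.2 ⟨hsub, by rw [Finset.card_erase_add_one F.2.2, hcard]⟩
  have hFG : F.1.erase (T.pivot F.1) = G.1.erase v := by rw [← hv, Finset.erase_insert hvF]
  refine ⟨v, hv ▸ Finset.mem_insert_self _ _, ?_, hFG⟩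
  rintro rfl
  exact h.1 (Filler.eq_of_erase_pivot_eq hFG)

lemma rank_lt_of_ancestralRel {F G : T.Filler} (h : T.pairingCore.AncestralRel F G)
    (hdim : F.1.card - 2 = G.1.card - 2) :
    T.rank (F.1.erase (T.pivot F.1)) < T.rank (G.1.erase (T.pivot G.1)) := by
  have hcard : F.1.card = G.1.card := by rw [F.card_eq, G.card_eq, hdim]
  obtain ⟨v, hv, hvp, hFG⟩ := T.exists_erase_eq_of_ancestralRel h hcard
  rw [hFG]
  refine T.rank_lt G.2.1 G.2.2 hv hvp (hFG ▸ T.missing_erase F.2.1) ?_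
  rw [← hFG, T.pivot_erase F.2.1]
  exact Finset.notMem_erase _ _

/-- The rank function witnessing that the pairing is regular. -/
noncomputable def weakRankFunction : T.pairingCore.WeakRankFunction ℕ where
  rank (F : T.Filler) := T.rank (F.1.erase (T.pivot F.1))
  lt := T.rank_lt_of_ancestralRel

end PivotRule

theorem PivotRule.innerAnodyneExtensions {N : ℕ} {A : (Δ[N] : SSet.{u}).Subcomplex}
    (T : PivotRule A) : SSet.innerAnodyneExtensions A.ι :=
  have : T.pairingCore.IsRegular := T.weakRankFunction.isRegular
  T.pairingCore.pairing.innerAnodyneExtensions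

section Missing

variable {n : ℕ} {V : Type*} {P O : Fin (n + 1) → V} {z : V} {F : Finset V}

variable (P O z) in
/-- The vertex sets that contain `z`, some `P i`, and for each `i` one of `P i` and `O i`. They are
the ones not contained in `range P ∪ range O`, `range O ∪ {z}` or the complement of some
`{P i, O i}` when these vertices exhaust `V`. -/
def IsTransverse (F : Finset V) : Prop :=
  z ∈ F ∧ (∃ i, P i ∈ F) ∧ ∀ i, P i ∈ F ∨ O i ∈ F

variable [DecidableEq V]

variable (P) in
/-- The least index `i` with `P i ∈ F`; the junk value `0` if there is none. -/
def leastIndex (F : Finset V) : Fin (n + 1) :=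
  if h : ∃ i, P i ∈ F then Fin.find _ h else 0

lemma apply_leastIndex_mem (h : ∃ i, P i ∈ F) : P (leastIndex P F) ∈ F := by
  rw [leastIndex, dif_pos h]
  exact Fin.find_spec h

lemma leastIndex_le {i : Fin (n + 1)} (hi : P i ∈ F) : leastIndex P F ≤ i := by
  rw [leastIndex, dif_pos ⟨i, hi⟩]
  exact Fin.find_le_of_pos _ hi

lemma leastIndex_congr {F' : Finset V} (h : ∀ i, P i ∈ F ↔ P i ∈ F') :
    leastIndex P F = leastIndex P F' := by
  by_cases hF : ∃ i, P i ∈ F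
  · exact (leastIndex_le ((h _).2 (apply_leastIndex_mem (hF.imp fun i => (h i).1)))).antisymm
      (leastIndex_le ((h _).1 (apply_leastIndex_mem hF)))
  · rw [leastIndex, leastIndex, dif_neg hF, dif_neg (by simpa only [h] using hF)]

lemma leastIndex_insert {v : V} (hv : ∀ i, P i ≠ v) :
    leastIndex P (insert v F) = leastIndex P F :=
  leastIndex_congr fun i => by simp [hv i]

lemma leastIndex_erase {v : V} (hv : ∀ i, P i ≠ v) :
    leastIndex P (F.erase v) = leastIndex P F :=
  leastIndex_congr fun i => by simp [hv i]

lemma leastIndex_le_leastIndex_erase {v : V} (h : ∃ i, P i ∈ F.erase v) :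
    leastIndex P F ≤ leastIndex P (F.erase v) :=
  leastIndex_le (Finset.mem_of_mem_erase (apply_leastIndex_mem h))

lemma IsTransverse.insert (hF : IsTransverse P O z F) (v : V) :
    IsTransverse P O z (insert v F) :=
  ⟨Finset.mem_insert_of_mem hF.1, hF.2.1.imp fun _ => Finset.mem_insert_of_mem,
    fun i => (hF.2.2 i).imp Finset.mem_insert_of_mem Finset.mem_insert_of_mem⟩

lemma IsTransverse.erase (hF : IsTransverse P O z F) (hO : Function.Injective O)
    {i : Fin (n + 1)} (hi : P i ∈ F) (hP : ∀ j, P j ≠ O i) (hz : z ≠ O i) :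
    IsTransverse P O z (F.erase (O i)) := by
  refine ⟨Finset.mem_erase.2 ⟨hz, hF.1⟩, ⟨i, Finset.mem_erase.2 ⟨hP i, hi⟩⟩, fun j => ?_⟩
  obtain rfl | hij := eq_or_ne j i
  · exact Or.inl (Finset.mem_erase.2 ⟨hP j, hi⟩)
  · exact (hF.2.2 j).imp (fun h => Finset.mem_erase.2 ⟨hP j, h⟩)
      fun h => Finset.mem_erase.2 ⟨hO.ne hij, h⟩

end Missing

section Transverse

variable {N n : ℕ} {P O : Fin (n + 1) → Fin (N + 1)} {z : Fin (N + 1)}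
  {A : (Δ[N] : SSet.{u}).Subcomplex}

/-- The transverse vertex sets are paired by inserting or erasing `O i`, where `i` is least such
that they contain `P i`. -/
noncomputable def transversePivotRule (hO : Function.Injective O)
    (hPOz : (∀ i j, P i < O j ∧ O j < z) ∨ ∀ i j, z < O j ∧ O j < P i)
    (hA : ∀ {m : ℕ} (g : (Δ[N] : SSet.{u}) _⦋m⦌), g ∉ A.obj _ ↔ IsTransverse P O z (vertexSet g)) :
    PivotRule A :=
  have hP (i j) : P j ≠ O i := by
    rcases hPOz with h | h
    exacts [(h j i).1.ne, (h j i).2.ne']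
  have hz (i) : z ≠ O i := by
    rcases hPOz with h | h
    exacts [(h i i).2.ne', (h i i).1.ne]
  { missing := IsTransverse P O z
    pivot F := O (leastIndex P F)
    rank F := n - leastIndex P F
    notMem_iff := hA
    missing_insert hF := hF.insert _
    pivot_insert _ := by rw [leastIndex_insert (hP _)]
    missing_erase hF := hF.erase hO (apply_leastIndex_mem hF.2.1) (hP _) (hz _)
    pivot_erase _ := by rw [leastIndex_erase (hP _)]
    exists_lt_pivot {F} hF := by
      rcases hPOz with h | h
      exacts [⟨_, apply_leastIndex_mem hF.2.1, (h _ _).1⟩, ⟨z, hF.1, (h 0 _).1⟩]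
    exists_pivot_lt {F} hF := by
      rcases hPOz with h | h
      exacts [⟨z, hF.1, (h 0 _).2⟩, ⟨_, apply_leastIndex_mem hF.2.1, (h _ _).2⟩]
    rank_lt {F v} _ hp _ hvp hFv hpv := by
      have hne : leastIndex P F ≠ leastIndex P (F.erase v) := fun h =>
        hpv (h ▸ Finset.mem_erase.2 ⟨hvp.symm, hp⟩)
      have hlt : leastIndex P F < leastIndex P (F.erase v) :=
        (leastIndex_le_leastIndex_erase hFv.2.1).lt_of_ne hne
      rw [leastIndex_erase (hP _)]
      have := (leastIndex P (F.erase v)).is_le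
      simp only [Fin.lt_def] at hlt
      omega }

end Transverse

/-! ### Extending partially defined simplices -/

/-- The subcomplex of a standard simplex consisting of the simplices factoring through one of the
maps `f j`. -/
def coveredSubcomplex {J : Type w} {d : J → SimplexCategory} {q : SimplexCategory}
    (f : ∀ j, d j ⟶ q) : (SSet.stdSimplex.{u}.obj q).Subcomplex where
  obj m := {g | ∃ j h, h ≫ f j = SSet.stdSimplex.objEquiv g}
  map := by
    rintro m m' u g ⟨j, h, hg⟩
    exact ⟨j, u.unop ≫ h, by rw [Category.assoc, hg]; rfl⟩

lemma map_app_objEquiv_symm_id {q m : SimplexCategory} {C : SSet.{u}}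
    (φ : SSet.stdSimplex.{u}.obj q ⟶ C) (α : m ⟶ q) :
    C.map α.op (φ.app (op q) (SSet.stdSimplex.objEquiv.symm (𝟙 q))) =
      φ.app (op m) (SSet.stdSimplex.objEquiv.symm α) := by
  refine (ConcreteCategory.congr_hom (φ.naturality α.op) _).symm.trans ?_
  change φ.app (op m) (SSet.stdSimplex.objEquiv.symm (α ≫ 𝟙 q)) = _
  rw [Category.comp_id]

section Glue

variable {C : SSet.{u}} {J : Type w} {d : J → SimplexCategory} {q : SimplexCategory}
  {f : ∀ j, d j ⟶ q} {x : ∀ j, C.obj (op (d j))}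

lemma exists_glue (hx : Presieve.Arrows.Compatible C f x) :
    ∃ φ : (coveredSubcomplex.{u} f : SSet.{u}) ⟶ C,
      ∀ {m : SimplexCategory} {g} (j : J) (h : m ⟶ d j)
        (hg : h ≫ f j = SSet.stdSimplex.objEquiv g),
        φ.app (op m) ⟨g, j, h, hg⟩ = C.map h.op (x j) := by
  choose j h hg using fun m (g : (coveredSubcomplex.{u} f : SSet.{u}).obj m) => g.2
  refine ⟨{ app m := ↾fun g => C.map (h m g).op (x (j m g)), naturality m m' v := ?_ },
    fun _ _ hg' => hx _ _ _ _ _ ((hg _ _).trans hg'.symm)⟩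
  refine ConcreteCategory.hom_ext _ _ fun g => ?_
  change C.map _ _ = C.map v (C.map _ _)
  rw [← Functor.map_comp_apply, ← Quiver.Hom.op_unop v, ← op_comp]
  exact hx _ _ _ _ _ ((hg _ _).trans (by rw [Category.assoc, hg]; rfl))

theorem exists_amalgamation_of_innerAnodyne [SSet.Quasicategory C]
    (hf : SSet.innerAnodyneExtensions (coveredSubcomplex.{u} f).ι)
    (hx : Presieve.Arrows.Compatible C f x) :
    ∃ σ : C.obj (op q), ∀ j, C.map (f j).op σ = x j := by
  obtain ⟨φ, hφ⟩ := exists_glue hx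
  have : HasLiftingProperty (coveredSubcomplex f).ι (Limits.terminal.from C) :=
    hf _ (SSet.mem_innerFibrations _)
  have sq : CommSq φ (coveredSubcomplex f).ι (Limits.terminal.from C)
    (Limits.terminal.from _) := ⟨Subsingleton.elim _ _⟩
  refine ⟨sq.lift.app (op q) (SSet.stdSimplex.objEquiv.symm (𝟙 q)), fun j => ?_⟩
  rw [map_app_objEquiv_symm_id]
  calc sq.lift.app (op (d j)) (SSet.stdSimplex.objEquiv.symm (f j))
      = ((coveredSubcomplex f).ι ≫ sq.lift).app (op (d j))
          ⟨SSet.stdSimplex.objEquiv.symm (f j), j, 𝟙 _, Category.id_comp _⟩ := rfl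
    _ = C.map (𝟙 (d j)).op (x j) := by rw [sq.fac_left]; exact hφ j _ (Category.id_comp _)
    _ = x j := by simp

end Glue

section SimplexCategory

variable {k l m n : SimplexCategory}

lemma hom_ext_val {f g : k ⟶ l} (h : ∀ i, (f.toOrderHom i : ℕ) = g.toOrderHom i) : f = g :=
  SimplexCategory.Hom.ext _ _ (OrderHom.ext _ _ (funext fun i => Fin.ext (h i)))

lemma strictMono_toOrderHom (f : k ⟶ l) [Mono f] : StrictMono f.toOrderHom :=
  f.toOrderHom.monotone.strictMono_of_injective (SimplexCategory.mono_iff_injective.1 ‹_›)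

lemma exists_comp_eq_of_range_subset {f : k ⟶ m} [Mono f] {g : l ⟶ m}
    (h : Set.range g.toOrderHom ⊆ Set.range f.toOrderHom) : ∃ u : l ⟶ k, u ≫ f = g := by
  choose u hu using fun i => h ⟨i, rfl⟩
  refine ⟨SimplexCategory.Hom.mk
    ⟨u, fun i j hij => (strictMono_toOrderHom f).le_iff_le.1 ?_⟩, ?_⟩
  · rw [hu, hu]
    exact g.toOrderHom.monotone hij
  · exact hom_ext_val fun i => congrArg Fin.val (hu i)

lemma exists_mono_range_eq {S : Set (Fin (m.len + 1))} (hS : S.Nonempty) :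
    ∃ (k : SimplexCategory) (f : k ⟶ m), Mono f ∧ Set.range f.toOrderHom = S := by
  classical
  have hcard : S.toFinset.card = S.toFinset.card - 1 + 1 :=
    (Nat.sub_add_cancel (Finset.card_pos.2 (Set.toFinset_nonempty.2 hS))).symm
  refine ⟨⦋S.toFinset.card - 1⦌,
    SimplexCategory.Hom.mk (S.toFinset.orderEmbOfFin hcard).toOrderHom,
    SimplexCategory.mono_iff_injective.2 (S.toFinset.orderEmbOfFin hcard).injective, ?_⟩
  exact (Finset.range_orderEmbOfFin _ hcard).trans S.coe_toFinset

lemma isSplitMono_of_mono (f : k ⟶ l) [Mono f] : IsSplitMono f := by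
  refine ⟨⟨⟨SimplexCategory.Hom.mk ⟨fun j => (Finset.univ.filter (f.toOrderHom · ≤ j)).sup id, ?_⟩,
    SimplexCategory.Hom.ext _ _ (OrderHom.ext _ _ (funext fun i => ?_))⟩⟩⟩
  · exact fun j j' hj => Finset.sup_mono (Finset.monotone_filter_right _ fun _ _ h => h.trans hj)
  · change (Finset.univ.filter (f.toOrderHom · ≤ f.toOrderHom i)).sup id = i
    refine le_antisymm (Finset.sup_le fun i' hi' => ?_) (Finset.le_sup (f := id) ?_)
    · exact (strictMono_toOrderHom f).le_iff_le.1 (Finset.mem_filter.1 hi').2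
    · exact Finset.mem_filter.2 ⟨Finset.mem_univ _, le_rfl⟩

instance (F : SimplexCategory ⥤ SimplexCategory) (f : k ⟶ l) [Mono f] : Mono (F.map f) :=
  have := isSplitMono_of_mono f
  inferInstance

end SimplexCategory

/-- A functorial cover of simplices `Q k` by faces `D k` and `R k` with intersection `k`. The face
`D k` has the vertices `p i` and `o i`, and `R k` has the vertices `o i` and one vertex `z`, where
`i` runs through the vertices of `k`; the vertices `o i` lie between `z` and the `p i`. -/
structure FaceCover (D R Q : SimplexCategory ⥤ SimplexCategory) where
  ι : D ⟶ Q
  κ : R ⟶ Q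
  p : 𝟭 _ ⟶ D
  oD : 𝟭 _ ⟶ D
  oR : 𝟭 _ ⟶ R
  z : (Functor.const _).obj ⦋0⦌ ⟶ R
  oD_ι : oD ≫ ι = oR ≫ κ
  mono_ι (k : SimplexCategory) : Mono (ι.app k)
  mono_κ (k : SimplexCategory) : Mono (κ.app k)
  mono_p (k : SimplexCategory) : Mono (p.app k)
  mono_oD (k : SimplexCategory) : Mono (oD.app k)
  range_D (k : SimplexCategory) :
    Set.range (p.app k).toOrderHom ∪ Set.range (oD.app k).toOrderHom = Set.univ
  range_R (k : SimplexCategory) :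
    Set.range (oR.app k).toOrderHom ∪ Set.range (z.app k).toOrderHom = Set.univ
  range_Q (k : SimplexCategory) :
    Set.range (ι.app k).toOrderHom ∪ Set.range (κ.app k).toOrderHom = Set.univ
  between (k : SimplexCategory) :
    (∀ i j, ((p ≫ ι).app k).toOrderHom i < ((oD ≫ ι).app k).toOrderHom j ∧
      ((oD ≫ ι).app k).toOrderHom j < ((z ≫ κ).app k).toOrderHom 0) ∨
    (∀ i j, ((z ≫ κ).app k).toOrderHom 0 < ((oD ≫ ι).app k).toOrderHom j ∧
      ((oD ≫ ι).app k).toOrderHom j < ((p ≫ ι).app k).toOrderHom i)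

namespace FaceCover

variable {D R Q : SimplexCategory ⥤ SimplexCategory} (S : FaceCover D R Q)
  {k l m : SimplexCategory}

attribute [instance] mono_ι mono_κ mono_p mono_oD

/-- The vertices `p i` of `Q k`. -/
def P (k : SimplexCategory) : Fin (k.len + 1) → Fin ((Q.obj k).len + 1) :=
  ((S.p ≫ S.ι).app k).toOrderHom

/-- The vertices `o i` of `Q k`. -/
def O (k : SimplexCategory) : Fin (k.len + 1) → Fin ((Q.obj k).len + 1) :=
  ((S.oD ≫ S.ι).app k).toOrderHom

/-- The vertex `z` of `Q k`. -/
def Z (k : SimplexCategory) : Fin ((Q.obj k).len + 1) :=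
  ((S.z ≫ S.κ).app k).toOrderHom 0

lemma P_injective : Function.Injective (S.P k) :=
  SimplexCategory.mono_iff_injective.1 (mono_comp (S.p.app k) (S.ι.app k))

lemma O_injective : Function.Injective (S.O k) :=
  SimplexCategory.mono_iff_injective.1 (mono_comp (S.oD.app k) (S.ι.app k))

lemma P_ne_O (i j) : S.P k i ≠ S.O k j := by
  rcases S.between k with h | h
  exacts [(h i j).1.ne, (h i j).2.ne']

lemma Z_ne_O (j) : S.Z k ≠ S.O k j := by
  rcases S.between k with h | h
  exacts [(h j j).2.ne', (h j j).1.ne]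

lemma Z_ne_P (i) : S.Z k ≠ S.P k i := by
  rcases S.between k with h | h
  exacts [((h i i).1.trans (h i i).2).ne', ((h i i).1.trans (h i i).2).ne]

lemma map_P (α : k ⟶ l) (i) : (Q.map α).toOrderHom (S.P k i) = S.P l (α.toOrderHom i) :=
  congrArg (fun f => f.toOrderHom i) ((S.p ≫ S.ι).naturality α).symm

lemma map_O (α : k ⟶ l) (i) : (Q.map α).toOrderHom (S.O k i) = S.O l (α.toOrderHom i) :=
  congrArg (fun f => f.toOrderHom i) ((S.oD ≫ S.ι).naturality α).symm

lemma map_Z (α : k ⟶ l) : (Q.map α).toOrderHom (S.Z k) = S.Z l :=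
  congrArg (fun f => f.toOrderHom 0) ((S.z ≫ S.κ).naturality α).symm

lemma range_ι : Set.range (S.ι.app k).toOrderHom = Set.range (S.P k) ∪ Set.range (S.O k) := by
  have h : S.P k = (S.ι.app k).toOrderHom ∘ (S.p.app k).toOrderHom := rfl
  have h' : S.O k = (S.ι.app k).toOrderHom ∘ (S.oD.app k).toOrderHom := rfl
  rw [h, h', Set.range_comp, Set.range_comp, ← Set.image_union, S.range_D, Set.image_univ]

lemma range_κ : Set.range (S.κ.app k).toOrderHom = Set.range (S.O k) ∪ {S.Z k} := by
  have h : S.O k = (S.κ.app k).toOrderHom ∘ (S.oR.app k).toOrderHom := by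
    rw [O, S.oD_ι]; rfl
  have h' : {S.Z k} = Set.range ((S.κ.app k).toOrderHom ∘ (S.z.app k).toOrderHom) := by
    exact (Set.range_unique (ι := Fin 1)).symm
  rw [h, h', Set.range_comp, Set.range_comp, ← Set.image_union, S.range_R, Set.image_univ]

lemma eq_P_or_eq_O_or_eq_Z (v) : (∃ i, S.P k i = v) ∨ (∃ i, S.O k i = v) ∨ S.Z k = v := by
  have hv := Set.mem_univ v
  rw [← S.range_Q, range_ι, range_κ] at hv
  rcases hv with (h | h) | h | h
  exacts [Or.inl h, Or.inr (Or.inl h), Or.inr (Or.inl h), Or.inr (Or.inr h.symm)]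

lemma range_map (α : k ⟶ l) : Set.range (Q.map α).toOrderHom =
    S.P l '' Set.range α.toOrderHom ∪ (S.O l '' Set.range α.toOrderHom ∪ {S.Z l}) := by
  ext v
  constructor
  · rintro ⟨w, rfl⟩
    rcases S.eq_P_or_eq_O_or_eq_Z w with ⟨i, rfl⟩ | ⟨i, rfl⟩ | rfl
    · exact Or.inl ⟨_, ⟨i, rfl⟩, (S.map_P α i).symm⟩
    · exact Or.inr (Or.inl ⟨_, ⟨i, rfl⟩, (S.map_O α i).symm⟩)
    · exact Or.inr (Or.inr (S.map_Z α))
  · rintro (⟨_, ⟨i, rfl⟩, rfl⟩ | ⟨_, ⟨i, rfl⟩, rfl⟩ | rfl)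
    exacts [⟨_, S.map_P α i⟩, ⟨_, S.map_O α i⟩, ⟨_, S.map_Z α⟩]

end FaceCover

namespace FaceCover

variable {D R Q : SimplexCategory ⥤ SimplexCategory} (S : FaceCover D R Q)
  {k l m n : SimplexCategory}

lemma exists_comp_ι_eq {h : m ⟶ Q.obj k} (hZ : S.Z k ∉ Set.range h.toOrderHom) :
    ∃ u, u ≫ S.ι.app k = h := by
  refine exists_comp_eq_of_range_subset fun v hv => ?_
  rw [range_ι]
  rcases S.eq_P_or_eq_O_or_eq_Z v with h | h | rfl
  exacts [Or.inl h, Or.inr h, (hZ hv).elim]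

lemma exists_comp_κ_eq {h : m ⟶ Q.obj k} (hP : ∀ i, S.P k i ∉ Set.range h.toOrderHom) :
    ∃ u, u ≫ S.κ.app k = h := by
  refine exists_comp_eq_of_range_subset fun v hv => ?_
  rw [range_κ]
  rcases S.eq_P_or_eq_O_or_eq_Z v with ⟨i, rfl⟩ | h | h
  exacts [(hP i hv).elim, Or.inl h, Or.inr h.symm]

lemma exists_comp_map_eq {h : m ⟶ Q.obj k} {f : l ⟶ k} [Mono f]
    (hf : ∀ i ∉ Set.range f.toOrderHom,
      S.P k i ∉ Set.range h.toOrderHom ∧ S.O k i ∉ Set.range h.toOrderHom) :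
    ∃ u, u ≫ Q.map f = h := by
  refine exists_comp_eq_of_range_subset fun v hv => ?_
  rw [S.range_map]
  rcases S.eq_P_or_eq_O_or_eq_Z v with ⟨i, rfl⟩ | ⟨i, rfl⟩ | h
  · exact Or.inl ⟨i, not_imp_comm.1 (hf i) fun h => h.1 hv, rfl⟩
  · exact Or.inr (Or.inl ⟨i, not_imp_comm.1 (hf i) fun h => h.2 hv, rfl⟩)
  · exact Or.inr (Or.inr h.symm)

lemma Z_notMem_range_comp_ι (u : m ⟶ D.obj k) :
    S.Z k ∉ Set.range (u ≫ S.ι.app k).toOrderHom := by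
  rintro ⟨i, hi⟩
  have hZ : S.Z k ∈ Set.range (S.ι.app k).toOrderHom := ⟨_, hi⟩
  rw [range_ι] at hZ
  rcases hZ with ⟨j, hj⟩ | ⟨j, hj⟩
  exacts [S.Z_ne_P j hj.symm, S.Z_ne_O j hj.symm]

lemma P_notMem_range_comp_κ (u : m ⟶ R.obj k) (i) :
    S.P k i ∉ Set.range (u ≫ S.κ.app k).toOrderHom := by
  rintro ⟨j, hj⟩
  have hP : S.P k i ∈ Set.range (S.κ.app k).toOrderHom := ⟨_, hj⟩
  rw [range_κ] at hP
  rcases hP with ⟨j, hj⟩ | hj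
  exacts [S.P_ne_O i j hj.symm, S.Z_ne_P i hj.symm]

lemma notMem_range_comp_map {f : l ⟶ k} {i} (hi : i ∉ Set.range f.toOrderHom)
    (u : m ⟶ Q.obj l) :
    S.P k i ∉ Set.range (u ≫ Q.map f).toOrderHom ∧
      S.O k i ∉ Set.range (u ≫ Q.map f).toOrderHom := by
  have key {v} (hv : v ∈ Set.range (u ≫ Q.map f).toOrderHom) :
      v ∈ Set.range (Q.map f).toOrderHom := by
    obtain ⟨j, rfl⟩ := hv
    exact ⟨_, rfl⟩
  simp only [S.range_map] at key
  constructor <;> intro h <;> rcases key h with ⟨j, hj, e⟩ | ⟨j, hj, e⟩ | e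
  · exact hi (S.P_injective e ▸ hj)
  · exact S.P_ne_O i j e.symm
  · exact S.Z_ne_P i e.symm
  · exact S.P_ne_O j i e
  · exact hi (S.O_injective e ▸ hj)
  · exact S.Z_ne_O i e.symm

lemma exists_comp_oD_eq {g : m ⟶ D.obj k} {h : m ⟶ R.obj k}
    (e : g ≫ S.ι.app k = h ≫ S.κ.app k) :
    ∃ u : m ⟶ k, u ≫ S.oD.app k = g ∧ u ≫ S.oR.app k = h := by
  have w : S.oD.app k ≫ S.ι.app k = S.oR.app k ≫ S.κ.app k := congrArg (·.app k) S.oD_ι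
  obtain ⟨u, hu⟩ : ∃ u : m ⟶ k, u ≫ S.oD.app k = g := by
    refine exists_comp_eq_of_range_subset ?_
    rintro _ ⟨i, rfl⟩
    rcases (S.range_D k).ge (Set.mem_univ (g.toOrderHom i)) with ⟨j, hj⟩ | h
    · refine (S.P_notMem_range_comp_κ h j ⟨i, ?_⟩).elim
      rw [← e]
      exact congrArg (S.ι.app k).toOrderHom hj.symm
    · exact h
  refine ⟨u, hu, ?_⟩
  rw [← cancel_mono (S.κ.app k), Category.assoc, ← e, ← hu, Category.assoc, w]

lemma exists_comp_ι_eq_of_comp_map_eq {α : k ⟶ l} {g : m ⟶ Q.obj k} {h : m ⟶ D.obj l}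
    (e : g ≫ Q.map α = h ≫ S.ι.app l) : ∃ u, u ≫ S.ι.app k = g ∧ u ≫ D.map α = h := by
  obtain ⟨u, rfl⟩ : ∃ u, u ≫ S.ι.app k = g := by
    refine S.exists_comp_ι_eq ?_
    rintro ⟨i, hi⟩
    refine S.Z_notMem_range_comp_ι h ⟨i, ?_⟩
    rw [← e, ← S.map_Z α, ← hi]
    rfl
  refine ⟨u, rfl, ?_⟩
  rw [← cancel_mono (S.ι.app l), Category.assoc, S.ι.naturality, ← e, Category.assoc]

lemma exists_comp_κ_eq_of_comp_map_eq {α : k ⟶ l} {g : m ⟶ Q.obj k} {h : m ⟶ R.obj l}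
    (e : g ≫ Q.map α = h ≫ S.κ.app l) : ∃ u, u ≫ S.κ.app k = g ∧ u ≫ R.map α = h := by
  obtain ⟨u, rfl⟩ : ∃ u, u ≫ S.κ.app k = g := by
    refine S.exists_comp_κ_eq ?_
    rintro j ⟨i, hi⟩
    refine S.P_notMem_range_comp_κ h (α.toOrderHom j) ⟨i, ?_⟩
    rw [← e, ← S.map_P α, ← hi]
    rfl
  refine ⟨u, rfl, ?_⟩
  rw [← cancel_mono (S.κ.app l), Category.assoc, S.κ.naturality, ← e, Category.assoc]

lemma exists_comp_κ_or_exists_comp_map {α : k ⟶ n} {β : l ⟶ n} [Mono α] [Mono β]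
    {g : m ⟶ Q.obj k} {h : m ⟶ Q.obj l} (e : g ≫ Q.map α = h ≫ Q.map β) :
    (∃ u : m ⟶ R.obj k, u ≫ S.κ.app k = g) ∨
    ∃ (j : SimplexCategory) (s : j ⟶ k) (t : j ⟶ l) (u : m ⟶ Q.obj j),
      s ≫ α = t ≫ β ∧ u ≫ Q.map s = g ∧ u ≫ Q.map t = h := by
  by_cases hP : ∀ i, S.P k i ∉ Set.range g.toOrderHom
  · exact Or.inl (S.exists_comp_κ_eq hP)
  refine Or.inr ?_
  have mem {i} (hi : S.P k i ∈ Set.range g.toOrderHom ∨ S.O k i ∈ Set.range g.toOrderHom) :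
      α.toOrderHom i ∈ Set.range β.toOrderHom := by
    by_contra hβ
    have hn := S.notMem_range_comp_map hβ h
    rw [← e, ← S.map_P, ← S.map_O] at hn
    rcases hi with ⟨i', hi'⟩ | ⟨i', hi'⟩
    · exact hn.1 ⟨i', congrArg (Q.map α).toOrderHom hi'⟩
    · exact hn.2 ⟨i', congrArg (Q.map α).toOrderHom hi'⟩
  push Not at hP
  obtain ⟨i, hi⟩ := hP
  obtain ⟨j, s, _, hs⟩ := exists_mono_range_eq
    (S := α.toOrderHom ⁻¹' Set.range β.toOrderHom) ⟨i, mem (Or.inl hi)⟩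
  obtain ⟨t, ht⟩ : ∃ t, t ≫ β = s ≫ α := by
    refine exists_comp_eq_of_range_subset ?_
    rintro _ ⟨x, rfl⟩
    exact hs.le ⟨x, rfl⟩
  obtain ⟨u, hu⟩ : ∃ u, u ≫ Q.map s = g := by
    refine S.exists_comp_map_eq fun x hx => ?_
    rw [hs] at hx
    exact ⟨fun h => hx (mem (Or.inl h)), fun h => hx (mem (Or.inr h))⟩
  refine ⟨j, s, t, u, ht.symm, hu, ?_⟩
  rw [← cancel_mono (Q.map β), Category.assoc, ← Q.map_comp, ht, Q.map_comp, ← e, ← hu,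
    Category.assoc]

end FaceCover

/-- Index type of the faces `D n`, `R n` and `Q.map α` of `Q n`, where `α : k ⟶ n` is a proper
face. -/
inductive Piece (n : SimplexCategory)
  | left
  | right
  | face {k : SimplexCategory} (α : k ⟶ n) (mono : Mono α)
      (not_surjective : ¬ Function.Surjective α.toOrderHom)

namespace FaceCover

variable {D R Q : SimplexCategory ⥤ SimplexCategory} {n : SimplexCategory}

section Covered

variable (S : FaceCover D R Q)

/-- The domain of the face of `Q n` with the given index. -/
def pieceObj (_ : FaceCover D R Q) (j : Piece n) : SimplexCategory :=
  match j with
  | .left => D.obj n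
  | .right => R.obj n
  | .face (k := k) _ _ _ => Q.obj k

/-- The inclusion of the face of `Q n` with the given index. -/
def pieceMap (j : Piece n) : S.pieceObj j ⟶ Q.obj n :=
  match j with
  | .left => S.ι.app n
  | .right => S.κ.app n
  | .face α _ _ => Q.map α

lemma exists_comp_pieceMap_iff {m : SimplexCategory} {h : m ⟶ Q.obj n} :
    (∃ j u, u ≫ S.pieceMap j = h) ↔ S.Z n ∉ Set.range h.toOrderHom ∨
      (∀ i, S.P n i ∉ Set.range h.toOrderHom) ∨
      ∃ i, S.P n i ∉ Set.range h.toOrderHom ∧ S.O n i ∉ Set.range h.toOrderHom := by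
  constructor
  · rintro ⟨_ | _ | ⟨α, _, hα⟩, u, rfl⟩
    · exact Or.inl (S.Z_notMem_range_comp_ι u)
    · exact Or.inr (Or.inl (S.P_notMem_range_comp_κ u))
    · obtain ⟨i, hi⟩ := not_forall.1 hα
      exact Or.inr (Or.inr ⟨i, S.notMem_range_comp_map hi u⟩)
  · rintro (hZ | hP | ⟨i, hi⟩)
    · exact ⟨.left, S.exists_comp_ι_eq hZ⟩
    · exact ⟨.right, S.exists_comp_κ_eq hP⟩
    · rcases Set.eq_empty_or_nonempty ({i}ᶜ : Set (Fin (n.len + 1))) with h0 | h0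
      · have eq_i (j) : j = i := Set.mem_singleton_iff.1 (Set.compl_empty_iff.1 h0 ▸ Set.mem_univ j)
        exact ⟨.right, S.exists_comp_κ_eq fun j => eq_i j ▸ hi.1⟩
      · obtain ⟨k, α, hm, hα⟩ := exists_mono_range_eq h0
        have hi' : i ∉ Set.range α.toOrderHom := by simp [hα]
        refine ⟨.face α hm fun hs => hi' (hs i), S.exists_comp_map_eq fun j hj => ?_⟩
        rw [hα, Set.notMem_compl_iff, Set.mem_singleton_iff] at hj
        exact hj ▸ hi

theorem innerAnodyneExtensions_pieceMap :
    SSet.innerAnodyneExtensions (coveredSubcomplex.{u} (S.pieceMap (n := n))).ι := by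
  refine PivotRule.innerAnodyneExtensions (N := (Q.obj n).len)
    (transversePivotRule (P := S.P n) (O := S.O n) (z := S.Z n) S.O_injective (S.between n)
      fun {m} g => ?_)
  have hmem (v) : v ∈ vertexSet g ↔
      v ∈ Set.range (SSet.stdSimplex.objEquiv g).toOrderHom := mem_vertexSet
  refine (not_congr S.exists_comp_pieceMap_iff).trans ?_
  simp only [IsTransverse, hmem]
  push Not
  simp only [or_iff_not_imp_left]

end Covered

/-- A partially defined simplex of `C`: compatible values on the faces `D n`, `R n` and `Q.map α`
of `Q n`, where `α` is not surjective. -/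
structure PartialSimplex (S : FaceCover D R Q) (C : SSet.{u}) (n : SimplexCategory) where
  left : C.obj (op (D.obj n))
  right : C.obj (op (R.obj n))
  face {k : SimplexCategory} (α : k ⟶ n) (hα : ¬ Function.Surjective α.toOrderHom) :
    C.obj (op (Q.obj k))
  left_right : C.map (S.oD.app n).op left = C.map (S.oR.app n).op right
  face_left {k : SimplexCategory} (α : k ⟶ n) (hα) :
    C.map (S.ι.app k).op (face α hα) = C.map (D.map α).op left
  face_right {k : SimplexCategory} (α : k ⟶ n) (hα) :
    C.map (S.κ.app k).op (face α hα) = C.map (R.map α).op right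
  face_comp {k l : SimplexCategory} (u : k ⟶ l) (α : l ⟶ n) (hα) (h) :
    face (u ≫ α) h = C.map (Q.map u).op (face α hα)

namespace PartialSimplex

variable {S : FaceCover D R Q} {C : SSet.{u}} (x : S.PartialSimplex C n)

/-- The value of a partially defined simplex on the face with the given index. -/
def value (j : Piece n) : C.obj (op (S.pieceObj j)) :=
  match j with
  | .left => x.left
  | .right => x.right
  | .face α _ hα => x.face α hα

section Compatible

variable {k l m : SimplexCategory}

lemma map_left_eq_map_right {g : m ⟶ D.obj n} {h : m ⟶ R.obj n}
    (e : g ≫ S.ι.app n = h ≫ S.κ.app n) : C.map g.op x.left = C.map h.op x.right := by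
  obtain ⟨u, rfl, rfl⟩ := S.exists_comp_oD_eq e
  rw [op_comp, op_comp, Functor.map_comp_apply, Functor.map_comp_apply, x.left_right]

lemma map_face_eq_map_left {α : k ⟶ n} {hα} {g : m ⟶ Q.obj k} {h : m ⟶ D.obj n}
    (e : g ≫ Q.map α = h ≫ S.ι.app n) : C.map g.op (x.face α hα) = C.map h.op x.left := by
  obtain ⟨u, rfl, rfl⟩ := S.exists_comp_ι_eq_of_comp_map_eq e
  rw [op_comp, op_comp, Functor.map_comp_apply, Functor.map_comp_apply, x.face_left]

lemma map_face_eq_map_right {α : k ⟶ n} {hα} {g : m ⟶ Q.obj k} {h : m ⟶ R.obj n}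
    (e : g ≫ Q.map α = h ≫ S.κ.app n) : C.map g.op (x.face α hα) = C.map h.op x.right := by
  obtain ⟨u, rfl, rfl⟩ := S.exists_comp_κ_eq_of_comp_map_eq e
  rw [op_comp, op_comp, Functor.map_comp_apply, Functor.map_comp_apply, x.face_right]

lemma map_face_eq_map_face {α : k ⟶ n} {β : l ⟶ n} [Mono α] [Mono β] {hα hβ}
    {g : m ⟶ Q.obj k} {h : m ⟶ Q.obj l} (e : g ≫ Q.map α = h ≫ Q.map β) :
    C.map g.op (x.face α hα) = C.map h.op (x.face β hβ) := by
  rcases S.exists_comp_κ_or_exists_comp_map e with ⟨u, rfl⟩ | ⟨j, s, t, u, hst, rfl, rfl⟩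
  · have e' : (u ≫ S.κ.app k) ≫ Q.map α = (u ≫ R.map α) ≫ S.κ.app n := by
      rw [Category.assoc, Category.assoc, S.κ.naturality]
    rw [x.map_face_eq_map_right e', x.map_face_eq_map_right (e.symm.trans e')]
  · have hs : ¬ Function.Surjective (s ≫ α).toOrderHom := fun hs =>
      hα (Function.Surjective.of_comp (g := s.toOrderHom) hs)
    have ht : x.face (s ≫ α) hs = C.map (Q.map t).op (x.face β hβ) := by
      simp only [hst, x.face_comp t β hβ]
    rw [op_comp, op_comp, Functor.map_comp_apply, Functor.map_comp_apply,
      ← x.face_comp s α hα hs, ht]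

lemma compatible_value : Presieve.Arrows.Compatible C S.pieceMap x.value := by
  rintro (_ | _ | ⟨α, _, hα⟩) (_ | _ | ⟨β, _, hβ⟩) m g h e
  · rw [(cancel_mono (S.ι.app n)).1 e]
  · exact x.map_left_eq_map_right e
  · exact (x.map_face_eq_map_left e.symm).symm
  · exact (x.map_left_eq_map_right e.symm).symm
  · rw [(cancel_mono (S.κ.app n)).1 e]
  · exact (x.map_face_eq_map_right e.symm).symm
  · exact x.map_face_eq_map_left e
  · exact x.map_face_eq_map_right e
  · exact x.map_face_eq_map_face e

end Compatible

theorem exists_extension [SSet.Quasicategory C] :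
    ∃ σ : C.obj (op (Q.obj n)), C.map (S.ι.app n).op σ = x.left ∧
      C.map (S.κ.app n).op σ = x.right ∧
      ∀ {k : SimplexCategory} (α : k ⟶ n) (hα), C.map (Q.map α).op σ = x.face α hα := by
  obtain ⟨σ, hσ⟩ :=
    exists_amalgamation_of_innerAnodyne S.innerAnodyneExtensions_pieceMap x.compatible_value
  refine ⟨σ, hσ .left, hσ .right, fun {k} α hα => ?_⟩
  obtain ⟨l, β, hm, hβ⟩ := exists_mono_range_eq (Set.range_nonempty α.toOrderHom)
  obtain ⟨u, rfl⟩ := exists_comp_eq_of_range_subset hβ.ge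
  have hβs : ¬ Function.Surjective β.toOrderHom := fun hs => hα <| by
    rwa [← Set.range_eq_univ, ← hβ, Set.range_eq_univ]
  rw [Q.map_comp, op_comp, Functor.map_comp_apply, x.face_comp u β hβs]
  exact congrArg _ (hσ (.face β hm hβs))

end PartialSimplex

end FaceCover

/-! ### Joins of simplices -/

section TensorObjOf

variable {k l k' l' k'' l'' : SimplexCategory}

lemma inl'_comp_tensorHomOf (f : k ⟶ k') (g : l ⟶ l') :
    inl' k l ≫ tensorHomOf f g = f ≫ inl' k' l' :=
  AugmentedSimplexCategory.inl_comp_tensorHom (x₁ := .of k) (y₁ := .of k') (x₂ := .of l)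
    (y₂ := .of l') f g

lemma inr'_comp_tensorHomOf (f : k ⟶ k') (g : l ⟶ l') :
    inr' k l ≫ tensorHomOf f g = g ≫ inr' k' l' :=
  AugmentedSimplexCategory.inr_comp_tensorHom (x₁ := .of k) (y₁ := .of k') (x₂ := .of l)
    (y₂ := .of l') f g

lemma tensorObjOf_hom_ext {f g : tensorObjOf k l ⟶ k'} (h : inl' k l ≫ f = inl' k l ≫ g)
    (h' : inr' k l ≫ f = inr' k l ≫ g) : f = g :=
  AugmentedSimplexCategory.tensorObj_hom_ext (x := .of k) (y := .of l) (z := .of k') f g h h'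

lemma tensorHomOf_id : tensorHomOf (𝟙 k) (𝟙 l) = 𝟙 (tensorObjOf k l) :=
  AugmentedSimplexCategory.tensor_id (.of k) (.of l)

lemma tensorHomOf_comp (f : k ⟶ k') (f' : k' ⟶ k'') (g : l ⟶ l') (g' : l' ⟶ l'') :
    tensorHomOf (f ≫ f') (g ≫ g') = tensorHomOf f g ≫ tensorHomOf f' g' :=
  (AugmentedSimplexCategory.tensorHom_comp_tensorHom (x₁ := .of k) (y₁ := .of k') (z₁ := .of k'')
    (x₂ := .of l) (y₂ := .of l') (z₂ := .of l'') f g f' g').symm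

lemma val_inl' (i : Fin (k.len + 1)) : ((inl' k l).toOrderHom i : ℕ) = i := by
  rw [AugmentedSimplexCategory.inl'_eval]
  rfl

lemma val_inr' (i : Fin (l.len + 1)) : ((inr' k l).toOrderHom i : ℕ) = k.len + 1 + i := by
  rw [AugmentedSimplexCategory.inr'_eval]
  rfl

lemma inl'_lt_inr' (i : Fin (k.len + 1)) (j : Fin (l.len + 1)) :
    (inl' k l).toOrderHom i < (inr' k l).toOrderHom j := by
  rw [Fin.lt_def, val_inl', val_inr']
  exact i.isLt.trans_le (Nat.le_add_right _ _)

lemma range_inl'_union_range_inr' :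
    Set.range (inl' k l).toOrderHom ∪ Set.range (inr' k l).toOrderHom = Set.univ := by
  refine Set.eq_univ_of_forall fun v => ?_
  have hv : (v : ℕ) < k.len + l.len + 1 + 1 := v.isLt
  rcases lt_or_ge (v : ℕ) (k.len + 1) with h | h
  · exact Or.inl ⟨⟨v, h⟩, Fin.ext (val_inl' _)⟩
  · refine Or.inr ⟨⟨v - (k.len + 1), by omega⟩, Fin.ext ((val_inr' _).trans ?_)⟩
    exact Nat.add_sub_cancel' h

instance : Mono (inl' k l) :=
  SimplexCategory.mono_iff_injective.2 fun i j h => Fin.ext <| by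
    simpa only [val_inl'] using congrArg Fin.val h

instance : Mono (inr' k l) :=
  SimplexCategory.mono_iff_injective.2 fun i j h => Fin.ext <| by
    simpa only [val_inr', Nat.add_left_cancel_iff] using congrArg Fin.val h

instance mono_tensorHomOf (f : k ⟶ k') (g : l ⟶ l') [Mono f] [Mono g] :
    Mono (tensorHomOf f g) := by
  refine SimplexCategory.mono_iff_injective.2 (StrictMono.injective fun v w hvw => ?_)
  have hl (i) : (tensorHomOf f g).toOrderHom ((inl' k l).toOrderHom i) =
      (inl' k' l').toOrderHom (f.toOrderHom i) :=
    congrArg (·.toOrderHom i) (inl'_comp_tensorHomOf f g)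
  have hr (i) : (tensorHomOf f g).toOrderHom ((inr' k l).toOrderHom i) =
      (inr' k' l').toOrderHom (g.toOrderHom i) :=
    congrArg (·.toOrderHom i) (inr'_comp_tensorHomOf f g)
  rcases range_inl'_union_range_inr'.ge (Set.mem_univ v) with ⟨i, rfl⟩ | ⟨i, rfl⟩ <;>
    rcases range_inl'_union_range_inr'.ge (Set.mem_univ w) with ⟨j, rfl⟩ | ⟨j, rfl⟩
  · rw [hl, hl]
    exact strictMono_toOrderHom _ (strictMono_toOrderHom _
      ((strictMono_toOrderHom (inl' k l)).lt_iff_lt.1 hvw))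
  · rw [hl, hr]
    exact inl'_lt_inr' _ _
  · exact (hvw.asymm (inl'_lt_inr' j i)).elim
  · rw [hr, hr]
    exact strictMono_toOrderHom _ (strictMono_toOrderHom _
      ((strictMono_toOrderHom (inr' k l)).lt_iff_lt.1 hvw))

end TensorObjOf

section Join

variable {A A' A'' B B' B'' : SimplexCategory ⥤ SimplexCategory}

/-- The pointwise join `A k ⋆ B k` of two functors. -/
def join (A B : SimplexCategory ⥤ SimplexCategory) : SimplexCategory ⥤ SimplexCategory where
  obj k := tensorObjOf (A.obj k) (B.obj k)
  map f := tensorHomOf (A.map f) (B.map f)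
  map_id k := by rw [A.map_id, B.map_id, tensorHomOf_id]
  map_comp f g := by rw [A.map_comp, B.map_comp, tensorHomOf_comp]

variable (A B) in
/-- The inclusion of the left factor of a join. -/
def joinInl : A ⟶ join A B where
  app k := inl' (A.obj k) (B.obj k)
  naturality _ _ _ := (inl'_comp_tensorHomOf _ _).symm

variable (A B) in
/-- The inclusion of the right factor of a join. -/
def joinInr : B ⟶ join A B where
  app k := inr' (A.obj k) (B.obj k)
  naturality _ _ _ := (inr'_comp_tensorHomOf _ _).symm

/-- The functoriality of the join in both factors. -/
def joinMap (α : A ⟶ A') (β : B ⟶ B') : join A B ⟶ join A' B' where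
  app k := tensorHomOf (α.app k) (β.app k)
  naturality _ _ f := by
    change tensorHomOf _ _ ≫ tensorHomOf _ _ = tensorHomOf _ _ ≫ tensorHomOf _ _
    rw [← tensorHomOf_comp, ← tensorHomOf_comp, α.naturality, β.naturality]

lemma joinInl_joinMap (α : A ⟶ A') (β : B ⟶ B') :
    joinInl A B ≫ joinMap α β = α ≫ joinInl A' B' :=
  NatTrans.ext (funext fun _ => inl'_comp_tensorHomOf _ _)

lemma joinInr_joinMap (α : A ⟶ A') (β : B ⟶ B') :
    joinInr A B ≫ joinMap α β = β ≫ joinInr A' B' :=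
  NatTrans.ext (funext fun _ => inr'_comp_tensorHomOf _ _)

lemma joinMap_id : joinMap (𝟙 A) (𝟙 B) = 𝟙 (join A B) :=
  NatTrans.ext (funext fun _ => tensorHomOf_id)

lemma joinMap_comp (α : A ⟶ A') (α' : A' ⟶ A'') (β : B ⟶ B') (β' : B' ⟶ B'') :
    joinMap (α ≫ α') (β ≫ β') = joinMap α β ≫ joinMap α' β' :=
  NatTrans.ext (funext fun _ => tensorHomOf_comp _ _ _ _)

instance (k : SimplexCategory) : Mono ((joinInl A B).app k) :=
  inferInstanceAs (Mono (inl' (A.obj k) (B.obj k)))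

instance (k : SimplexCategory) : Mono ((joinInr A B).app k) :=
  inferInstanceAs (Mono (inr' (A.obj k) (B.obj k)))

instance (α : A ⟶ A') (β : B ⟶ B') (k : SimplexCategory) [Mono (α.app k)] [Mono (β.app k)] :
    Mono ((joinMap α β).app k) :=
  inferInstanceAs (Mono (tensorHomOf (α.app k) (β.app k)))

lemma range_joinInl_union_range_joinInr (k : SimplexCategory) :
    Set.range ((joinInl A B).app k).toOrderHom ∪ Set.range ((joinInr A B).app k).toOrderHom =
      Set.univ :=
  range_inl'_union_range_inr'

lemma range_joinMap_id_left_union_range_joinInr (β : B ⟶ B') (k : SimplexCategory) :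
    Set.range ((joinMap (𝟙 A) β).app k).toOrderHom ∪
      Set.range ((joinInr A B').app k).toOrderHom = Set.univ := by
  refine Set.eq_univ_of_forall fun v => ?_
  rcases (range_joinInl_union_range_joinInr k).ge (Set.mem_univ v) with ⟨i, rfl⟩ | h
  · exact Or.inl ⟨((joinInl A B).app k).toOrderHom i,
      congrArg (fun f => (f.app k).toOrderHom i) (joinInl_joinMap (𝟙 A) β)⟩
  · exact Or.inr h

lemma range_joinMap_id_right_union_range_joinInl (α : A ⟶ A') (k : SimplexCategory) :
    Set.range ((joinMap α (𝟙 B)).app k).toOrderHom ∪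
      Set.range ((joinInl A' B).app k).toOrderHom = Set.univ := by
  refine Set.eq_univ_of_forall fun v => ?_
  rcases (range_joinInl_union_range_joinInr k).ge (Set.mem_univ v) with h | ⟨i, rfl⟩
  · exact Or.inr h
  · exact Or.inl ⟨((joinInr A B).app k).toOrderHom i,
      congrArg (fun f => (f.app k).toOrderHom i) (joinInr_joinMap α (𝟙 B))⟩

variable (A B) in
lemma joinInl_app_lt_joinInr_app (k : SimplexCategory) (i : Fin ((A.obj k).len + 1))
    (j : Fin ((B.obj k).len + 1)) :
    ((joinInl A B).app k).toOrderHom i < ((joinInr A B).app k).toOrderHom j :=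
  inl'_lt_inr' i j

end Join

section JoinCovers

/-- The functor constant at the point. -/
abbrev point : SimplexCategory ⥤ SimplexCategory :=
  (Functor.const _).obj ⦋0⦌

/-- The cover of `k ⋆ (k ⋆ 0)` by `k ⋆ k` and `k ⋆ 0`. -/
def rightFaceCover : FaceCover (join (𝟭 _) (𝟭 _)) (join (𝟭 _) point)
    (join (𝟭 _) (join (𝟭 _) point)) where
  ι := joinMap (𝟙 _) (joinInl _ _)
  κ := joinInr _ _
  p := joinInl _ _
  oD := joinInr _ _
  oR := joinInl _ _
  z := joinInr _ _
  oD_ι := joinInr_joinMap _ _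
  mono_ι _ := inferInstance
  mono_κ _ := inferInstance
  mono_p _ := inferInstance
  mono_oD _ := inferInstance
  range_D := range_joinInl_union_range_joinInr
  range_R := range_joinInl_union_range_joinInr
  range_Q := range_joinMap_id_left_union_range_joinInr _
  between k := by
    rw [joinInl_joinMap, joinInr_joinMap]
    exact Or.inl fun i j => ⟨joinInl_app_lt_joinInr_app (𝟭 _) (join (𝟭 _) point) k i _,
      strictMono_toOrderHom ((joinInr _ _).app k) (joinInl_app_lt_joinInr_app (𝟭 _) point k j 0)⟩

/-- The cover of `(0 ⋆ k) ⋆ k` by `k ⋆ k` and `0 ⋆ k`. -/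
def leftFaceCover : FaceCover (join (𝟭 _) (𝟭 _)) (join point (𝟭 _))
    (join (join point (𝟭 _)) (𝟭 _)) where
  ι := joinMap (joinInr _ _) (𝟙 _)
  κ := joinInl _ _
  p := joinInr _ _
  oD := joinInl _ _
  oR := joinInr _ _
  z := joinInl _ _
  oD_ι := joinInl_joinMap _ _
  mono_ι _ := inferInstance
  mono_κ _ := inferInstance
  mono_p _ := inferInstance
  mono_oD _ := inferInstance
  range_D k := (Set.union_comm _ _).trans (range_joinInl_union_range_joinInr k)
  range_R k := (Set.union_comm _ _).trans (range_joinInl_union_range_joinInr k)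
  range_Q := range_joinMap_id_right_union_range_joinInl _
  between k := by
    rw [joinInl_joinMap, joinInr_joinMap]
    exact Or.inr fun i j => ⟨
      strictMono_toOrderHom ((joinInl _ _).app k) (joinInl_app_lt_joinInr_app point (𝟭 _) k 0 j),
      joinInl_app_lt_joinInr_app (join point (𝟭 _)) (𝟭 _) k _ i⟩

end JoinCovers

/-- The totally degenerate simplex of `C` at a vertex. -/
def constSimplex {C : SSet.{u}} (X : C _⦋0⦌) (k : SimplexCategory) : C.obj (op k) :=
  C.map (SimplexCategory.const k ⦋0⦌ 0).op X

section ConstSimplex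

variable {C : SSet.{u}} (X : C _⦋0⦌)

lemma map_constSimplex {k l : SimplexCategory} (f : k ⟶ l) :
    C.map f.op (constSimplex X l) = constSimplex X k := by
  rw [constSimplex, ← Functor.map_comp_apply, ← op_comp]
  rfl

lemma constSimplex_zero : constSimplex X ⦋0⦌ = X := by
  rw [constSimplex, toZero_unique (SimplexCategory.const ⦋0⦌ ⦋0⦌ 0) (𝟙 _), op_id,
    Functor.map_id_apply]

end ConstSimplex

lemma map_map_eq_of_comp_eq {C : SSet.{u}} {k l l' m : SimplexCategory} {f : k ⟶ l} {g : l ⟶ m}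
    {f' : k ⟶ l'} {g' : l' ⟶ m} (h : f ≫ g = f' ≫ g') (σ : C.obj (op m)) :
    C.map f.op (C.map g.op σ) = C.map f'.op (C.map g'.op σ) := by
  rw [← Functor.map_comp_apply, ← Functor.map_comp_apply, ← op_comp, ← op_comp, h]

section BoundaryLifting

open FaceCover

variable {D R Q : SimplexCategory ⥤ SimplexCategory} {S : FaceCover D R Q} {C : SSet.{u}}
  {W : C _⦋0⦌} {E : SSet.Subcomplex (D.op ⋙ C)} {E' : SSet.Subcomplex (Q.op ⋙ C)}
  {f : (E' : SSet.{u}) ⟶ E}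

/-- A lifting problem against `∂Δ[n] ⟶ Δ[n]` for a map of simplicial sets of `D`- and `Q`-simplices
of `C` is a partially defined simplex of `C`. -/
def partialSimplexOfBoundary
    (hf : ∀ k (x : (E' : SSet.{u}).obj (op k)), (f.app (op k) x).1 = C.map (S.ι.app k).op x.1)
    (hE : ∀ k, ∀ x ∈ E.obj (op k), C.map (S.oD.app k).op x = constSimplex W k)
    (hE' : ∀ k, ∀ x ∈ E'.obj (op k), C.map (S.κ.app k).op x = constSimplex W (R.obj k))
    {n : ℕ} {t : (SSet.boundary.{u} n : SSet.{u}) ⟶ E'} {d : Δ[n] ⟶ (E : SSet.{u})}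
    (sq : CommSq t (SSet.boundary n).ι f d) : S.PartialSimplex C ⦋n⦌ where
  left := (d.app (op ⦋n⦌) (SSet.stdSimplex.objEquiv.symm (𝟙 _))).1
  right := constSimplex W _
  face {k} α hα := (t.app (op k) ⟨SSet.stdSimplex.objEquiv.symm α, hα⟩).1
  left_right := (hE _ _ (Subtype.prop _)).trans (map_constSimplex W _).symm
  face_left {k} α hα := by
    have w := ConcreteCategory.congr_hom (congrArg (·.app (op k)) sq.w)
      ⟨SSet.stdSimplex.objEquiv.symm α, hα⟩
    exact (hf _ _).symm.trans (congrArg Subtype.val (w.trans (map_app_objEquiv_symm_id d α).symm))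
  face_right α hα := (hE' _ _ (Subtype.prop _)).trans (map_constSimplex W _).symm
  face_comp u α hα _ := congrArg Subtype.val
    (ConcreteCategory.congr_hom (t.naturality u.op) ⟨SSet.stdSimplex.objEquiv.symm α, hα⟩)

theorem rlp_boundary_of_faceCover [SSet.Quasicategory C]
    (hf : ∀ k (x : (E' : SSet.{u}).obj (op k)), (f.app (op k) x).1 = C.map (S.ι.app k).op x.1)
    (hE : ∀ k, ∀ x ∈ E.obj (op k), C.map (S.oD.app k).op x = constSimplex W k)
    (hE' : ∀ k (x : C.obj (op (Q.obj k))), x ∈ E'.obj (op k) ↔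
      C.map (S.ι.app k).op x ∈ E.obj (op k) ∧ C.map (S.κ.app k).op x = constSimplex W (R.obj k))
    (n : ℕ) : HasLiftingProperty (SSet.boundary.{u} n).ι f := by
  refine ⟨fun {t d} sq => ?_⟩
  obtain ⟨σ, hι, hκ, hσ⟩ := (partialSimplexOfBoundary hf hE
    (fun k x hx => ((hE' k x).1 hx).2) sq).exists_extension
  have hσE : σ ∈ E'.obj (op ⦋n⦌) := (hE' _ _).2 ⟨hι ▸ Subtype.prop _, hκ⟩
  refine ⟨⟨SSet.yonedaEquiv.symm ⟨σ, hσE⟩, ?_, ?_⟩⟩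
  · refine NatTrans.ext (funext fun k => ConcreteCategory.hom_ext _ _ fun x => Subtype.ext ?_)
    exact hσ (SSet.stdSimplex.objEquiv x.1) x.2
  · have hfσ : f.app (op ⦋n⦌) ⟨σ, hσE⟩ = d.app (op ⦋n⦌) (SSet.stdSimplex.objEquiv.symm (𝟙 _)) :=
      Subtype.ext ((hf _ _).trans hι)
    refine NatTrans.ext (funext fun k => ConcreteCategory.hom_ext _ _ fun x => ?_)
    let α := SSet.stdSimplex.objEquiv x
    exact (ConcreteCategory.congr_hom (f.naturality α.op) ⟨σ, hσE⟩).trans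
      ((congrArg ((E : SSet.{u}).map α.op) hfσ).trans (map_app_objEquiv_symm_id d α))

end BoundaryLifting

/-! ### Mapping spaces of join shape -/

section JoinHom

variable {A A' A'' B B' B'' : SimplexCategory ⥤ SimplexCategory} {C : SSet.{u}}

/-- The `k ⋆ l`-simplices of `C` that are totally degenerate at `X` on `k` and at `Y` on `l`. -/
def IsJoinConst (X Y : C _⦋0⦌) {k l : SimplexCategory} (σ : C.obj (op (tensorObjOf k l))) : Prop :=
  C.map (inl' k l).op σ = constSimplex X k ∧ C.map (inr' k l).op σ = constSimplex Y l

lemma map_inl'_map_tensorHomOf {k k' l l' : SimplexCategory} (a : k ⟶ k') (b : l ⟶ l')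
    (σ : C.obj (op (tensorObjOf k' l'))) :
    C.map (inl' k l).op (C.map (tensorHomOf a b).op σ) = C.map a.op (C.map (inl' k' l').op σ) :=
  map_map_eq_of_comp_eq (inl'_comp_tensorHomOf a b) σ

lemma map_inr'_map_tensorHomOf {k k' l l' : SimplexCategory} (a : k ⟶ k') (b : l ⟶ l')
    (σ : C.obj (op (tensorObjOf k' l'))) :
    C.map (inr' k l).op (C.map (tensorHomOf a b).op σ) = C.map b.op (C.map (inr' k' l').op σ) :=
  map_map_eq_of_comp_eq (inr'_comp_tensorHomOf a b) σ

variable {X Y : C _⦋0⦌}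

lemma IsJoinConst.map_tensorHomOf {k k' l l' : SimplexCategory} {σ : C.obj (op (tensorObjOf k' l'))}
    (hσ : IsJoinConst X Y σ) (a : k ⟶ k') (b : l ⟶ l') :
    IsJoinConst X Y (C.map (tensorHomOf a b).op σ) :=
  ⟨by rw [map_inl'_map_tensorHomOf, hσ.1, map_constSimplex],
    by rw [map_inr'_map_tensorHomOf, hσ.2, map_constSimplex]⟩

variable (X Y) in
/-- The mapping space from `X` to `Y` of shape `A ⋆ B`: its `k`-simplices are the
`A k ⋆ B k`-simplices of `C` that are totally degenerate at `X` on `A k` and at `Y` on `B k`. -/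
def joinHom (A B : SimplexCategory ⥤ SimplexCategory) : SSet.Subcomplex ((join A B).op ⋙ C) where
  obj _ := {σ | IsJoinConst X Y σ}
  map _ _ hσ := IsJoinConst.map_tensorHomOf hσ _ _

variable (X Y) in
/-- The contravariant functoriality of `joinHom` in its shape. -/
def joinHomMap (α : A ⟶ A') (β : B ⟶ B') :
    (joinHom X Y A' B' : SSet.{u}) ⟶ joinHom X Y A B where
  app k := ↾fun σ => ⟨C.map ((joinMap α β).app k.unop).op σ.1,
    IsJoinConst.map_tensorHomOf σ.2 _ _⟩
  naturality _ _ f := ConcreteCategory.hom_ext _ _ fun σ => Subtype.ext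
    (map_map_eq_of_comp_eq ((joinMap α β).naturality f.unop).symm σ.1)

variable (X Y) in
lemma joinHomMap_id : joinHomMap X Y (𝟙 A) (𝟙 B) = 𝟙 _ :=
  NatTrans.ext <| funext fun k => ConcreteCategory.hom_ext _ _ fun σ => Subtype.ext <| by
    change C.map ((joinMap (𝟙 A) (𝟙 B)).app k.unop).op σ.1 = σ.1
    rw [joinMap_id]
    exact C.map_id_apply _ σ.1

variable (X Y) in
lemma joinHomMap_comp (α : A ⟶ A') (α' : A' ⟶ A'') (β : B ⟶ B') (β' : B' ⟶ B'') :
    joinHomMap X Y (α ≫ α') (β ≫ β') = joinHomMap X Y α' β' ≫ joinHomMap X Y α β :=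
  NatTrans.ext <| funext fun k => ConcreteCategory.hom_ext _ _ fun σ => Subtype.ext <| by
    change C.map ((joinMap (α ≫ α') (β ≫ β')).app k.unop).op σ.1 = _
    rw [joinMap_comp]
    exact C.map_comp_apply _ _ _

theorem rlp_joinHomMap_id_joinInl [SSet.Quasicategory C] (n : ℕ) :
    HasLiftingProperty (SSet.boundary.{u} n).ι
      (joinHomMap X Y (𝟙 (𝟭 _)) (joinInl (𝟭 _) point)) := by
  refine rlp_boundary_of_faceCover (S := rightFaceCover) (W := Y) (fun _ _ => rfl) ?_ ?_ n
  · exact fun _ _ hx => hx.2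
  · refine fun k x => ⟨fun hx => ⟨IsJoinConst.map_tensorHomOf hx _ _, hx.2⟩, fun hx => ⟨?_, hx.2⟩⟩
    have h := (map_inl'_map_tensorHomOf (𝟙 k) (inl' k ⦋0⦌) x).symm.trans hx.1.1
    rwa [op_id, C.map_id_apply] at h

theorem rlp_joinHomMap_joinInr_id [SSet.Quasicategory C] (n : ℕ) :
    HasLiftingProperty (SSet.boundary.{u} n).ι
      (joinHomMap X Y (joinInr point (𝟭 _)) (𝟙 (𝟭 _))) := by
  refine rlp_boundary_of_faceCover (S := leftFaceCover) (W := X) (fun _ _ => rfl) ?_ ?_ n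
  · exact fun _ _ hx => hx.1
  · refine fun k x => ⟨fun hx => ⟨IsJoinConst.map_tensorHomOf hx _ _, hx.1⟩, fun hx => ⟨hx.2, ?_⟩⟩
    have h := (map_inr'_map_tensorHomOf (inr' ⦋0⦌ k) (𝟙 k) x).symm.trans hx.1.2
    rwa [op_id, C.map_id_apply] at h

end JoinHom

/-! ### Trivial fibrations are homotopy equivalences -/

section Homotopic

variable {A B D : SSet.{0}}

lemma Homotopic.refl (f : A ⟶ B) : Homotopic f f :=
  Relation.EqvGen.refl f

lemma Homotopic.trans {f g h : A ⟶ B} (hfg : Homotopic f g) (hgh : Homotopic g h) :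
    Homotopic f h :=
  Relation.EqvGen.trans _ _ _ hfg hgh

lemma Homotopic.comp_right {f g : A ⟶ B} (h : Homotopic f g) (u : B ⟶ D) :
    Homotopic (f ≫ u) (g ≫ u) := by
  induction h with
  | rel f g h =>
    obtain ⟨H, h₀, h₁⟩ := h
    exact .rel _ _ ⟨H ≫ u, by rw [← Category.assoc, h₀], by rw [← Category.assoc, h₁]⟩
  | refl f => exact .refl _
  | symm f g _ ih => exact .symm _ _ ih
  | trans f g k _ _ ih ih' => exact ih.trans ih'

lemma atVertex_comp_whiskerLeft (u : A ⟶ B) (i : Fin 2) :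
    atVertex A i ≫ MonoidalCategory.whiskerLeft _ u = u ≫ atVertex B i := by
  rw [atVertex, atVertex, CartesianMonoidalCategory.lift_whiskerLeft,
    CartesianMonoidalCategory.comp_lift, Category.id_comp, Category.comp_id]
  rfl

lemma Homotopic.comp_left {f g : B ⟶ D} (h : Homotopic f g) (u : A ⟶ B) :
    Homotopic (u ≫ f) (u ≫ g) := by
  induction h with
  | rel f g h =>
    obtain ⟨H, h₀, h₁⟩ := h
    exact .rel _ _ ⟨MonoidalCategory.whiskerLeft _ u ≫ H,
      by rw [← Category.assoc, atVertex_comp_whiskerLeft, Category.assoc, h₀],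
      by rw [← Category.assoc, atVertex_comp_whiskerLeft, Category.assoc, h₁]⟩
  | refl f => exact .refl _
  | symm f g _ ih => exact .symm _ _ ih
  | trans f g k _ _ ih ih' => exact ih.trans ih'

end Homotopic

section HomotopyEquivalent

variable {A B D : SSet.{0}}

/-- Two simplicial sets are homotopy equivalent if there is a homotopy equivalence from one to
the other. -/
def HomotopyEquivalent (A B : SSet.{0}) : Prop :=
  ∃ f : A ⟶ B, IsHomotopyEquivalence f

lemma HomotopyEquivalent.symm (h : HomotopyEquivalent A B) : HomotopyEquivalent B A := by
  obtain ⟨f, g, hfg, hgf⟩ := h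
  exact ⟨g, f, hgf, hfg⟩

lemma IsHomotopyEquivalence.comp {f : A ⟶ B} {f' : B ⟶ D} (hf : IsHomotopyEquivalence f)
    (hf' : IsHomotopyEquivalence f') : IsHomotopyEquivalence (f ≫ f') := by
  obtain ⟨g, hfg, hgf⟩ := hf
  obtain ⟨g', hfg', hgf'⟩ := hf'
  refine ⟨g' ≫ g, Homotopic.trans ?_ hfg, Homotopic.trans ?_ hgf'⟩
  · simpa only [Category.assoc, Category.id_comp] using (hfg'.comp_right g).comp_left f
  · simpa only [Category.assoc, Category.id_comp] using (hgf.comp_right f').comp_left g'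

lemma HomotopyEquivalent.trans (h : HomotopyEquivalent A B) (h' : HomotopyEquivalent B D) :
    HomotopyEquivalent A D := by
  obtain ⟨f, hf⟩ := h
  obtain ⟨f', hf'⟩ := h'
  exact ⟨f ≫ f', hf.comp hf'⟩

lemma HomotopyEquivalent.of_iso (e : A ≅ B) : HomotopyEquivalent A B :=
  ⟨e.hom, e.inv, e.hom_inv_id ▸ .refl _, e.inv_hom_id ▸ .refl _⟩

end HomotopyEquivalent

section TrivialFibration

variable {A B : SSet.{0}}

/-- The inclusion of the two ends `{0} × A` and `{1} × A` in the cylinder `Δ[1] × A`. -/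
def cylinderEnds (A : SSet.{0}) :
    (MonoidalCategory.tensorObj (Δ[1] : SSet.{0}) A).Subcomplex where
  obj m := {x | ∃ i, x.1 = SSet.stdSimplex.const 1 i m}
  map {a b} f x hx := by
    obtain ⟨i, hi⟩ := hx
    exact ⟨i, congrArg ((Δ[1] : SSet.{0}).map f) hi⟩

lemma const_zero_ne_const_one (m : SimplexCategoryᵒᵖ) :
    SSet.stdSimplex.const.{0} 1 0 m ≠ SSet.stdSimplex.const 1 1 m := fun h =>
  zero_ne_one (congrArg (fun x => (SSet.stdSimplex.objEquiv x).toOrderHom 0) h : (0 : Fin 2) = 1)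

open Classical in
/-- The map on the two ends of a cylinder that is `f` on `{0} × A` and `g` on `{1} × A`. -/
noncomputable def cylinderEndsDesc (f g : A ⟶ B) : (cylinderEnds A : SSet.{0}) ⟶ B where
  app m := ↾fun x => if x.1.1 = SSet.stdSimplex.const 1 0 m then f.app m x.1.2 else g.app m x.1.2
  naturality a b u := by
    refine ConcreteCategory.hom_ext _ _ fun ⟨⟨x, y⟩, i, (hx : x = _)⟩ => ?_
    change (if (Δ[1] : SSet.{0}).map u x = SSet.stdSimplex.const 1 0 b then
      f.app b (A.map u y) else g.app b (A.map u y)) =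
      B.map u (if x = SSet.stdSimplex.const 1 0 a then f.app a y else g.app a y)
    subst hx
    have hi : (Δ[1] : SSet.{0}).map u (SSet.stdSimplex.const 1 i a) =
      SSet.stdSimplex.const 1 i b := rfl
    rw [hi]
    fin_cases i
    · exact (if_pos rfl).trans ((NatTrans.naturality_apply f u y).trans
        (congrArg (B.map u) (if_pos rfl).symm))
    · have h (m) := (const_zero_ne_const_one m).symm
      exact (if_neg (h b)).trans ((NatTrans.naturality_apply g u y).trans
        (congrArg (B.map u) (if_neg (h a)).symm))

lemma const_mem_cylinderEnds {i : Fin 2} {m : SimplexCategoryᵒᵖ} (y : A.obj m) :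
    (SSet.stdSimplex.const 1 i m, y) ∈ (cylinderEnds A).obj m :=
  ⟨i, rfl⟩

lemma elemHomotopic_of_comp_eq_comp {D : SSet.{0}} {f g : A ⟶ B} {p : B ⟶ D}
    [HasLiftingProperty (cylinderEnds A).ι p] (h : f ≫ p = g ≫ p) : ElemHomotopic f g := by
  have sq : CommSq (cylinderEndsDesc f g) (cylinderEnds A).ι p
      (SemiCartesianMonoidalCategory.snd (Δ[1] : SSet.{0}) A ≫ f ≫ p) := by
    refine ⟨NatTrans.ext (funext fun m => ConcreteCategory.hom_ext _ _ fun x => ?_)⟩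
    change p.app m (if _ then f.app m x.1.2 else g.app m x.1.2) = (f ≫ p).app m x.1.2
    split_ifs
    · rfl
    · exact ConcreteCategory.congr_hom (congr_app h.symm m) x.1.2
  have hl (m) (x : (cylinderEnds A : SSet.{0}).obj m) :
      sq.lift.app m x.1 = (cylinderEndsDesc f g).app m x :=
    ConcreteCategory.congr_hom (congr_app sq.fac_left m) x
  refine ⟨sq.lift, ?_, ?_⟩
  · refine NatTrans.ext (funext fun m => ConcreteCategory.hom_ext _ _ fun y => ?_)
    exact (hl m ⟨_, const_mem_cylinderEnds y⟩).trans (if_pos rfl)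
  · refine NatTrans.ext (funext fun m => ConcreteCategory.hom_ext _ _ fun y => ?_)
    exact (hl m ⟨_, const_mem_cylinderEnds y⟩).trans (if_neg (const_zero_ne_const_one m).symm)

theorem isHomotopyEquivalence_of_rlp_boundary {p : A ⟶ B}
    (hp : ∀ n : ℕ, HasLiftingProperty (SSet.boundary.{0} n).ι p) : IsHomotopyEquivalence p := by
  have hI : SSet.modelCategoryQuillen.I.{0}.rlp p := by
    rintro _ _ _ ⟨n⟩
    exact hp n
  rw [← SSet.rlp_monomorphisms] at hI
  have hempty := hI (⊥ : B.Subcomplex).ι (.infer_property _)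
  have hends := hI (cylinderEnds A).ι (.infer_property _)
  have sq : CommSq (SSet.Subcomplex.isInitialBot.to A) (⊥ : B.Subcomplex).ι p (𝟙 B) :=
    ⟨SSet.Subcomplex.isInitialBot.hom_ext _ _⟩
  refine ⟨sq.lift, .rel _ _ (elemHomotopic_of_comp_eq_comp (p := p) ?_), ?_⟩
  · rw [Category.assoc, sq.fac_right, Category.comp_id, Category.id_comp]
  · rw [sq.fac_right]
    exact .refl _

end TrivialFibration

/-! ### Contractions -/

section Splice

variable {k k' l l' m m' : SimplexCategory}

/-- The map that agrees with `f` where `φ` is `0` and with the larger map `g` where `φ` is `1`. -/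
def splice (φ : k ⟶ ⦋1⦌) (f g : k ⟶ m) (h : f.toOrderHom ≤ g.toOrderHom) : k ⟶ m :=
  SimplexCategory.Hom.mk
    { toFun i := if φ.toOrderHom i = 0 then f.toOrderHom i else g.toOrderHom i
      monotone' i j hij := by
        dsimp only
        split_ifs with hi hj hj
        · exact f.toOrderHom.monotone hij
        · exact (h i).trans (g.toOrderHom.monotone hij)
        · exact (hi (Fin.le_zero_iff.1 (hj ▸ φ.toOrderHom.monotone hij))).elim
        · exact g.toOrderHom.monotone hij }

variable {f g : k ⟶ m}

lemma splice_apply (φ : k ⟶ ⦋1⦌) (h : f.toOrderHom ≤ g.toOrderHom) (i : Fin (k.len + 1)) :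
    (splice φ f g h).toOrderHom i =
      if φ.toOrderHom i = 0 then f.toOrderHom i else g.toOrderHom i :=
  rfl

lemma splice_le (φ : k ⟶ ⦋1⦌) (h : f.toOrderHom ≤ g.toOrderHom) :
    (splice φ f g h).toOrderHom ≤ g.toOrderHom := fun i => by
  rw [splice_apply]
  split_ifs
  · exact h i
  · exact le_rfl

lemma le_splice (φ : k ⟶ ⦋1⦌) (h : f.toOrderHom ≤ g.toOrderHom) :
    f.toOrderHom ≤ (splice φ f g h).toOrderHom := fun i => by
  rw [splice_apply]
  split_ifs
  · exact le_rfl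
  · exact h i

lemma splice_const_zero (h : f.toOrderHom ≤ g.toOrderHom) :
    splice (SimplexCategory.const _ _ 0) f g h = f :=
  SimplexCategory.Hom.ext _ _ <| OrderHom.ext _ _ <| funext fun i =>
    (splice_apply _ h i).trans (if_pos rfl)

lemma splice_const_one (h : f.toOrderHom ≤ g.toOrderHom) :
    splice (SimplexCategory.const _ _ 1) f g h = g :=
  SimplexCategory.Hom.ext _ _ <| OrderHom.ext _ _ <| funext fun i =>
    (splice_apply _ h i).trans (if_neg (one_ne_zero (α := Fin 2)))

lemma comp_splice_eq_splice_comp {u : k' ⟶ k} {w : m' ⟶ m} {φ : k ⟶ ⦋1⦌} {f' g' : k' ⟶ m'}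
    {h : f.toOrderHom ≤ g.toOrderHom} (h' : f'.toOrderHom ≤ g'.toOrderHom)
    (hf : u ≫ f = f' ≫ w) (hg : u ≫ g = g' ≫ w) :
    u ≫ splice φ f g h = splice (u ≫ φ) f' g' h' ≫ w := by
  refine hom_ext_val fun i => congrArg Fin.val ?_
  refine Eq.trans ?_ (apply_ite w.toOrderHom _ _ _).symm
  exact ite_congr rfl (fun _ => congrArg (·.toOrderHom i) hf) fun _ => congrArg (·.toOrderHom i) hg

end Splice

section TensorDesc

variable {k l k' l' m m' : SimplexCategory}

/-- The map out of `k ⋆ l` given by a map out of `k` and a larger map out of `l`. -/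
def tensorDesc (f : k ⟶ m) (g : l ⟶ m) (h : ∀ i j, f.toOrderHom i ≤ g.toOrderHom j) :
    tensorObjOf k l ⟶ m :=
  SimplexCategory.Hom.mk
    { toFun v := if hv : (v : ℕ) < k.len + 1 then f.toOrderHom ⟨v, hv⟩
        else g.toOrderHom ⟨v - (k.len + 1), by
          have : (v : ℕ) < k.len + l.len + 1 + 1 := v.isLt
          omega⟩
      monotone' v w hvw := by
        have hvw : (v : ℕ) ≤ w := hvw
        dsimp only
        split_ifs with hv hw hw
        · exact f.toOrderHom.monotone hvw
        · exact h _ _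
        · exact absurd hw (by omega)
        · exact g.toOrderHom.monotone (Nat.sub_le_sub_right hvw _) }

variable {f : k ⟶ m} {g : l ⟶ m}

lemma inl'_comp_tensorDesc (h : ∀ i j, f.toOrderHom i ≤ g.toOrderHom j) :
    inl' k l ≫ tensorDesc f g h = f := by
  refine hom_ext_val fun i => congrArg Fin.val ?_
  refine (dif_pos ((val_inl' i).trans_lt i.isLt)).trans (congrArg f.toOrderHom (Fin.ext ?_))
  exact val_inl' i

lemma inr'_comp_tensorDesc (h : ∀ i j, f.toOrderHom i ≤ g.toOrderHom j) :
    inr' k l ≫ tensorDesc f g h = g := by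
  refine hom_ext_val fun i => congrArg Fin.val ?_
  refine (dif_neg (by rw [val_inr']; omega)).trans (congrArg g.toOrderHom (Fin.ext ?_))
  change ((inr' k l).toOrderHom i : ℕ) - _ = _
  rw [val_inr', Nat.add_sub_cancel_left]

lemma tensorHomOf_comp_tensorDesc_eq {f' : k' ⟶ m'} {g' : l' ⟶ m'} {a : k' ⟶ k} {b : l' ⟶ l}
    {w : m' ⟶ m} (h : ∀ i j, f.toOrderHom i ≤ g.toOrderHom j)
    (h' : ∀ i j, f'.toOrderHom i ≤ g'.toOrderHom j) (hf : a ≫ f = f' ≫ w) (hg : b ≫ g = g' ≫ w) :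
    tensorHomOf a b ≫ tensorDesc f g h = tensorDesc f' g' h' ≫ w := by
  refine tensorObjOf_hom_ext ?_ ?_
  · rw [← Category.assoc, ← Category.assoc, inl'_comp_tensorHomOf, Category.assoc,
      inl'_comp_tensorDesc, inl'_comp_tensorDesc, hf]
  · rw [← Category.assoc, ← Category.assoc, inr'_comp_tensorHomOf, Category.assoc,
      inr'_comp_tensorDesc, inr'_comp_tensorDesc, hg]

end TensorDesc

section NatHomotopy

variable {A A' B B' : SimplexCategory ⥤ SimplexCategory}

/-- A homotopy between two natural transformations of functors between simplex categories, given
by maps `B k ⟶ B' k` depending naturally on a map `k ⟶ ⦋1⦌`. -/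
structure NatHomotopy (β₀ β₁ : B ⟶ B') where
  app {k : SimplexCategory} (φ : k ⟶ ⦋1⦌) : B.obj k ⟶ B'.obj k
  naturality {k l : SimplexCategory} (u : k ⟶ l) (φ : l ⟶ ⦋1⦌) :
    B.map u ≫ app φ = app (u ≫ φ) ≫ B'.map u
  app_zero (k : SimplexCategory) : app (SimplexCategory.const k ⦋1⦌ 0) = β₀.app k
  app_one (k : SimplexCategory) : app (SimplexCategory.const k ⦋1⦌ 1) = β₁.app k

/-- The constant homotopy at a natural transformation. -/
def NatHomotopy.refl (β : B ⟶ B') : NatHomotopy β β where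
  app _ := β.app _
  naturality u _ := β.naturality u
  app_zero _ := rfl
  app_one _ := rfl

variable {C : SSet.{0}} {X Y : C _⦋0⦌}

/-- The join of two homotopies. -/
def NatHomotopy.join {α₀ α₁ : A ⟶ A'} {β₀ β₁ : B ⟶ B'} (hα : NatHomotopy α₀ α₁)
    (hβ : NatHomotopy β₀ β₁) : NatHomotopy (joinMap α₀ β₀) (joinMap α₁ β₁) where
  app φ := tensorHomOf (hα.app φ) (hβ.app φ)
  naturality u φ := by
    change tensorHomOf _ _ ≫ tensorHomOf _ _ = tensorHomOf _ _ ≫ tensorHomOf _ _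
    rw [← tensorHomOf_comp, ← tensorHomOf_comp, hα.naturality, hβ.naturality]
  app_zero k := congrArg₂ tensorHomOf (hα.app_zero k) (hβ.app_zero k)
  app_one k := congrArg₂ tensorHomOf (hα.app_one k) (hβ.app_one k)

theorem NatHomotopy.elemHomotopic {α₀ α₁ : A ⟶ A'} {β₀ β₁ : B ⟶ B'} (hα : NatHomotopy α₀ α₁)
    (hβ : NatHomotopy β₀ β₁) :
    ElemHomotopic (joinHomMap X Y α₀ β₀) (joinHomMap X Y α₁ β₁) := by
  refine ⟨{
    app m := ↾fun x => ⟨C.map ((hα.join hβ).app (SSet.stdSimplex.objEquiv x.1)).op x.2.1,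
      IsJoinConst.map_tensorHomOf x.2.2 _ _⟩
    naturality {k l} u := ConcreteCategory.hom_ext _ _ fun x => Subtype.ext ?_ }, ?_, ?_⟩
  · exact map_map_eq_of_comp_eq
      ((hα.join hβ).naturality u.unop (SSet.stdSimplex.objEquiv x.1)).symm x.2.1
  · refine NatTrans.ext (funext fun k => ConcreteCategory.hom_ext _ _ fun σ => Subtype.ext ?_)
    exact congrArg (fun f => C.map f.op σ.1) ((hα.join hβ).app_zero k.unop)
  · refine NatTrans.ext (funext fun k => ConcreteCategory.hom_ext _ _ fun σ => Subtype.ext ?_)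
    exact congrArg (fun f => C.map f.op σ.1) ((hα.join hβ).app_one k.unop)

end NatHomotopy

section Contraction

/-- The projection onto the constant functor at the point. -/
def toPoint (B : SimplexCategory ⥤ SimplexCategory) : B ⟶ point where
  app _ := SimplexCategory.const _ _ 0
  naturality _ _ _ := toZero_unique _ _

lemma comp_toPoint {B : SimplexCategory ⥤ SimplexCategory} (f : point ⟶ B) :
    f ≫ toPoint B = 𝟙 point :=
  NatTrans.ext (funext fun _ => toZero_unique _ _)

/-- The contraction of `k ⋆ 0` onto its final vertex. -/
def contractionRight : NatHomotopy (𝟙 (join (𝟭 _) point))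
    (toPoint (join (𝟭 _) point) ≫ joinInr (𝟭 _) point) where
  app {k} φ := tensorDesc
    (splice φ (inl' k ⦋0⦌) (SimplexCategory.const k ⦋0⦌ 0 ≫ inr' k ⦋0⦌)
      fun _ => (inl'_lt_inr' _ _).le) (inr' k ⦋0⦌)
    fun i j => (splice_le _ _ i).trans ((inr' k ⦋0⦌).toOrderHom.monotone (Fin.zero_le j))
  naturality {k l} u φ := by
    have hr : 𝟙 ⦋0⦌ ≫ inr' l ⦋0⦌ = inr' k ⦋0⦌ ≫ tensorHomOf u (𝟙 ⦋0⦌) :=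
      (inr'_comp_tensorHomOf u (𝟙 _)).symm
    refine tensorHomOf_comp_tensorDesc_eq _ _ (comp_splice_eq_splice_comp _
      (inl'_comp_tensorHomOf u (𝟙 _)).symm ?_) hr
    exact congrArg (SimplexCategory.const k ⦋0⦌ 0 ≫ ·) hr
  app_zero _ := tensorObjOf_hom_ext
    ((inl'_comp_tensorDesc _).trans (splice_const_zero _)) (inr'_comp_tensorDesc _)
  app_one k := tensorObjOf_hom_ext
    ((inl'_comp_tensorDesc _).trans (splice_const_one _))
    ((inr'_comp_tensorDesc _).trans
      (congrArg (· ≫ inr' k ⦋0⦌) (congr_app (comp_toPoint (joinInr (𝟭 _) point)) k)).symm)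

/-- The contraction of `0 ⋆ k` onto its initial vertex. -/
def contractionLeft : NatHomotopy (toPoint (join point (𝟭 _)) ≫ joinInl point (𝟭 _))
    (𝟙 (join point (𝟭 _))) where
  app {k} φ := tensorDesc (inl' ⦋0⦌ k)
    (splice φ (SimplexCategory.const k ⦋0⦌ 0 ≫ inl' ⦋0⦌ k) (inr' ⦋0⦌ k)
      fun _ => (inl'_lt_inr' _ _).le)
    fun i j => ((inl' ⦋0⦌ k).toOrderHom.monotone (Fin.eq_zero i).le).trans
      (le_splice (f := SimplexCategory.const k ⦋0⦌ 0 ≫ inl' ⦋0⦌ k) _ _ j)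
  naturality {k l} u φ := by
    have hl : 𝟙 ⦋0⦌ ≫ inl' ⦋0⦌ l = inl' ⦋0⦌ k ≫ tensorHomOf (𝟙 ⦋0⦌) u :=
      (inl'_comp_tensorHomOf (𝟙 _) u).symm
    refine tensorHomOf_comp_tensorDesc_eq _ _ hl (comp_splice_eq_splice_comp _ ?_
      (inr'_comp_tensorHomOf (𝟙 _) u).symm)
    exact congrArg (SimplexCategory.const k ⦋0⦌ 0 ≫ ·) hl
  app_zero k := tensorObjOf_hom_ext
    ((inl'_comp_tensorDesc _).trans
      (congrArg (· ≫ inl' ⦋0⦌ k) (congr_app (comp_toPoint (joinInl point (𝟭 _))) k)).symm)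
    ((inr'_comp_tensorDesc _).trans (splice_const_zero _))
  app_one _ := tensorObjOf_hom_ext
    (inl'_comp_tensorDesc _) ((inr'_comp_tensorDesc _).trans (splice_const_one _))

end Contraction

section Contraction

variable {C : SSet.{0}} {X Y : C _⦋0⦌} {A A' B B' : SimplexCategory ⥤ SimplexCategory}

theorem isHomotopyEquivalence_joinHomMap_of_homotopic {α : A ⟶ A'} {α' : A' ⟶ A}
    {β : B ⟶ B'} {β' : B' ⟶ B} (hα : α ≫ α' = 𝟙 A) (hβ : β ≫ β' = 𝟙 B)
    (h : Homotopic (joinHomMap X Y (α' ≫ α) (β' ≫ β)) (joinHomMap X Y (𝟙 A') (𝟙 B'))) :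
    IsHomotopyEquivalence (joinHomMap X Y α β) := by
  refine ⟨joinHomMap X Y α' β', ?_, ?_⟩
  · rwa [← joinHomMap_comp, ← joinHomMap_id]
  · rw [← joinHomMap_comp, hα, hβ, joinHomMap_id]
    exact .refl _

variable (X Y)

theorem isHomotopyEquivalence_joinHomMap_id_joinInr :
    IsHomotopyEquivalence (joinHomMap X Y (𝟙 (𝟭 _)) (joinInr (𝟭 _) point)) :=
  isHomotopyEquivalence_joinHomMap_of_homotopic (Category.comp_id _) (comp_toPoint _)
    (.symm _ _ (.rel _ _ ((NatHomotopy.refl (𝟙 _)).elemHomotopic contractionRight)))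

theorem isHomotopyEquivalence_joinHomMap_joinInl_id :
    IsHomotopyEquivalence (joinHomMap X Y (joinInl point (𝟭 _)) (𝟙 (𝟭 _))) :=
  isHomotopyEquivalence_joinHomMap_of_homotopic (comp_toPoint _) (Category.comp_id _)
    (.rel _ _ (contractionLeft.elemHomotopic (NatHomotopy.refl (𝟙 _))))

end Contraction

/-! ### Comparison with the two mapping spaces -/

section RightHom

lemma inl'_zero_eq_botIncl (k : SimplexCategory) : inl' k ⦋0⦌ = botIncl k :=
  hom_ext_val fun i => val_inl' i

lemma inr'_zero_eq_lastVtx (k : SimplexCategory) : inr' k ⦋0⦌ = lastVtx k :=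
  hom_ext_val fun i => (val_inr' i).trans (congrArg (k.len + 1 + ·) (Fin.val_eq_zero i))

lemma tensorHomOf_id_right_eq_joinPt {k l : SimplexCategory} (u : k ⟶ l) :
    tensorHomOf u (𝟙 ⦋0⦌) = joinPt u := by
  refine tensorObjOf_hom_ext ?_ ?_
  · rw [inl'_comp_tensorHomOf, inl'_zero_eq_botIncl, inl'_zero_eq_botIncl]
    exact (botIncl_joinPt u).symm
  · rw [inr'_comp_tensorHomOf, Category.id_comp, inr'_zero_eq_lastVtx, inr'_zero_eq_lastVtx]
    exact (lastVtx_joinPt u).symm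

variable {C : SSet.{u}} (X Y : C _⦋0⦌)

lemma isJoinConst_zero_right_iff (k : SimplexCategory) (σ : C.obj (op (tensorObjOf k ⦋0⦌))) :
    IsJoinConst X Y σ ↔ C.map (botIncl k).op σ = C.map (SimplexCategory.const k ⦋0⦌ 0).op X ∧
      C.map (lastVtx k).op σ = Y := by
  rw [IsJoinConst, inl'_zero_eq_botIncl, inr'_zero_eq_lastVtx, constSimplex_zero]
  rfl

/-- Since `k ⋆ 0` is `⦋k.len + 1⦌`, the mapping space of shape `k ⋆ 0` is `Hom_C(X, Y)`. -/
def rightHomIso : RightHom C X Y ≅ (joinHom X Y (𝟭 _) point : SSet.{u}) :=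
  NatIso.ofComponents
    (fun k => (Equiv.subtypeEquivRight fun σ =>
      (isJoinConst_zero_right_iff X Y k.unop σ).symm).toIso)
    fun f => ConcreteCategory.hom_ext _ _ fun σ => Subtype.ext <|
      congrArg (fun g => C.map g.op σ.1) (tensorHomOf_id_right_eq_joinPt f.unop).symm

end RightHom

section LeftHom

lemma val_eqToHom {k l : SimplexCategory} (h : k = l) (i : Fin (k.len + 1)) :
    ((eqToHom h).toOrderHom i : ℕ) = i := by
  subst h
  rfl

lemma zero_tensorObjOf (k : SimplexCategory) : tensorObjOf ⦋0⦌ k = ⦋k.len + 1⦌ :=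
  congrArg (fun n => ⦋n + 1⦌) (Nat.zero_add k.len)

/-- The identification of `0 ⋆ k` with `⦋k.len + 1⦌`. -/
def zeroTensorIso (k : SimplexCategory) : tensorObjOf ⦋0⦌ k ≅ ⦋k.len + 1⦌ :=
  eqToIso (zero_tensorObjOf k)

lemma val_zeroTensorIso_hom (k : SimplexCategory) (i : Fin ((tensorObjOf ⦋0⦌ k).len + 1)) :
    ((zeroTensorIso k).hom.toOrderHom i : ℕ) = i :=
  val_eqToHom (zero_tensorObjOf k) i

lemma inl'_comp_zeroTensorIso_hom (k : SimplexCategory) :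
    inl' ⦋0⦌ k ≫ (zeroTensorIso k).hom = zeroVtx k :=
  hom_ext_val fun i => (val_zeroTensorIso_hom _ _).trans ((val_inl' i).trans (Fin.val_eq_zero i))

lemma inr'_comp_zeroTensorIso_hom (k : SimplexCategory) :
    inr' ⦋0⦌ k ≫ (zeroTensorIso k).hom = topIncl k :=
  hom_ext_val fun i => (val_zeroTensorIso_hom _ _).trans ((val_inr' i).trans (Nat.add_comm _ _))

lemma tensorHomOf_id_left_comp_zeroTensorIso_hom {k l : SimplexCategory} (u : k ⟶ l) :
    tensorHomOf (𝟙 ⦋0⦌) u ≫ (zeroTensorIso l).hom = (zeroTensorIso k).hom ≫ joinPtL u := by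
  refine tensorObjOf_hom_ext ?_ ?_
  · rw [← Category.assoc, ← Category.assoc, inl'_comp_tensorHomOf, Category.id_comp,
      inl'_comp_zeroTensorIso_hom, inl'_comp_zeroTensorIso_hom, zeroVtx_joinPtL]
  · rw [← Category.assoc, ← Category.assoc, inr'_comp_tensorHomOf, Category.assoc,
      inr'_comp_zeroTensorIso_hom, inr'_comp_zeroTensorIso_hom, topIncl_joinPtL]

variable {C : SSet.{u}} (X Y : C _⦋0⦌)

lemma isJoinConst_map_zeroTensorIso_hom_iff (k : SimplexCategory) (σ : C.obj (op ⦋k.len + 1⦌)) :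
    IsJoinConst X Y (C.map (zeroTensorIso k).hom.op σ) ↔ C.map (zeroVtx k).op σ = X ∧
      C.map (topIncl k).op σ = C.map (SimplexCategory.const k ⦋0⦌ 0).op Y := by
  rw [IsJoinConst, ← Functor.map_comp_apply, ← Functor.map_comp_apply, ← op_comp, ← op_comp,
    inl'_comp_zeroTensorIso_hom, inr'_comp_zeroTensorIso_hom, constSimplex_zero]
  rfl

/-- Since `0 ⋆ k` is `⦋k.len + 1⦌`, the mapping space of shape `0 ⋆ k` is `Hom^L_C(X, Y)`. -/
def leftHomIso : LeftHom C X Y ≅ (joinHom X Y point (𝟭 _) : SSet.{u}) :=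
  NatIso.ofComponents
    (fun k => ((C.mapIso (zeroTensorIso k.unop).op).toEquiv.subtypeEquiv fun σ =>
      (isJoinConst_map_zeroTensorIso_hom_iff X Y k.unop σ).symm).toIso)
    fun f => ConcreteCategory.hom_ext _ _ fun σ => Subtype.ext <|
      map_map_eq_of_comp_eq (tensorHomOf_id_left_comp_zeroTensorIso_hom f.unop).symm σ.1

end LeftHom

end SSetPaper

/-!
STATEMENT 1: Let `C` be a quasicategory and let `X` and `Y` be objects of `C`.  Then the
two models of the mapping space, `Hom_C(X,Y)` and `Hom^L_C(X,Y)`, are homotopy equivalent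
simplicial sets.
-/

open SSetPaper in
theorem rightHom_homotopyEquivalent_leftHom
    (C : SSet.{0}) [SSet.Quasicategory C] (X Y : C _⦋0⦌) :
    ∃ f : RightHom C X Y ⟶ LeftHom C X Y, IsHomotopyEquivalence f := by
  have right : HomotopyEquivalent (RightHom C X Y) (joinHom X Y (𝟭 _) (𝟭 _)) :=
    (HomotopyEquivalent.of_iso (rightHomIso X Y)).trans <|
      (HomotopyEquivalent.symm ⟨_, isHomotopyEquivalence_joinHomMap_id_joinInr X Y⟩).trans
        ⟨_, isHomotopyEquivalence_of_rlp_boundary rlp_joinHomMap_id_joinInl⟩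
  have left : HomotopyEquivalent (LeftHom C X Y) (joinHom X Y (𝟭 _) (𝟭 _)) :=
    (HomotopyEquivalent.of_iso (leftHomIso X Y)).trans <|
      (HomotopyEquivalent.symm ⟨_, isHomotopyEquivalence_joinHomMap_joinInl_id X Y⟩).trans
        ⟨_, isHomotopyEquivalence_of_rlp_boundary rlp_joinHomMap_joinInr_id⟩
  exact right.trans left.symm
end

section
/- Let C be a simplicial set such that for all n ≥ 2 and all 0 < i < n, every map Λ[n,i] → C from the inner horn extends uniquely to a map Δ[n] → C. Then C is isomorphic, as a simplicial set, to the nerve of a small category. -/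
open CategoryTheory Simplicial

/-!
STATEMENT 7: Let `C` be a simplicial set such that for all `n ≥ 2` and all `0 < i < n`,
every map `Λ[n,i] → C` from the inner horn extends *uniquely* to a map `Δ[n] → C`.
Then `C` is isomorphic, as a simplicial set, to the nerve of a small category.
-/

/-!
Filling `Λ[2, 1]` composes edges and filling `Λ[3, 1]` makes the composition associative, so the
vertices and edges of the simplicial set form a category, with a comparison map to its nerve which
is bijective on vertices and edges. Bijectivity propagates to higher dimensions: both sides are
determined by the faces of an inner horn, the source by unique filling and the nerve because the
first and last faces already contain the whole spine.
-/

open SSet Opposite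

universe u

/-- Every map from the single horn `Λ[n, i]` to `X` extends uniquely to `Δ[n]`; the index `i` need
not be inner. -/
def HasUniqueHornFilling (X : SSet.{u}) {n : ℕ} (i : Fin (n + 1)) : Prop :=
  ∀ σ₀ : (Λ[n, i] : SSet) ⟶ X, ∃! σ : (Δ[n] : SSet) ⟶ X, σ₀ = Λ[n, i].ι ≫ σ

/-- Any two consecutive edges of `X` have a unique composite, composites being witnessed by
2-simplices, and composition is associative. Associativity is required in one direction only: the
other one follows from uniqueness. -/
class HasUniqueComp (X : SSet.{u}) : Prop where
  existsUnique_comp {x y z : X _⦋0⦌} (f : Edge x y) (g : Edge y z) :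
    ∃! h : Edge x z, Nonempty (Edge.CompStruct f g h)
  assoc {x y z w : X _⦋0⦌} {f : Edge x y} {g : Edge y z} {h : Edge z w}
    {fg : Edge x z} {gh : Edge y w} {k : Edge x w} (s : Edge.CompStruct f g fg)
    (t : Edge.CompStruct g h gh) (r : Edge.CompStruct f gh k) : Nonempty (Edge.CompStruct fg h k)

section UniqueHornFilling

variable {X : SSet.{u}}

namespace HasUniqueHornFilling

lemma ext {n : ℕ} {i : Fin (n + 2)} (hi : HasUniqueHornFilling X i) {x y : X _⦋n + 1⦌}
    (h : ∀ j ≠ i, X.δ j x = X.δ j y) : x = y := by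
  refine yonedaEquiv.symm.injective
    ((hi (Λ[n + 1, i].ι ≫ yonedaEquiv.symm x)).unique rfl (horn.hom_ext' fun j hj ↦ ?_))
  rw [horn.ι_ι_assoc, horn.ι_ι_assoc, stdSimplex.δ_comp_yonedaEquiv_symm,
    stdSimplex.δ_comp_yonedaEquiv_symm, h j hj]

lemma exists_δ_eq {n : ℕ} {i : Fin (n + 3)} (hi : HasUniqueHornFilling X i)
    (x : Fin (n + 3) → X _⦋n + 1⦌)
    (hx : ∀ j k : Fin (n + 2), j ≤ k → j.castSucc ≠ i → k.succ ≠ i →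
      X.δ k (x j.castSucc) = X.δ j (x k.succ)) :
    ∃ s : X _⦋n + 2⦌, ∀ j ≠ i, X.δ j s = x j := by
  have compatible : horn.IsCompatible fun j (_ : j ≠ i) ↦ yonedaEquiv.symm (x j) := by
    refine (horn.isCompatible_iff _).2 fun j k hj hk hjk ↦ ?_
    obtain ⟨j, rfl⟩ := j.eq_castSucc_of_ne_last (Fin.ne_last_of_lt hjk)
    obtain ⟨k, rfl⟩ := k.eq_succ_of_ne_zero (Fin.ne_zero_of_lt hjk)
    rw [stdSimplex.δ_comp_yonedaEquiv_symm, stdSimplex.δ_comp_yonedaEquiv_symm, Fin.pred_succ,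
      Fin.castPred_castSucc, hx j k (Fin.castSucc_lt_succ_iff.1 hjk) hj hk]
  obtain ⟨σ, hσ, -⟩ := hi compatible.desc
  refine ⟨yonedaEquiv σ, fun j hj ↦ ?_⟩
  have restrict : stdSimplex.δ j ≫ σ = yonedaEquiv.symm (x j) := by
    rw [← horn.ι_ι_assoc i j hj, ← hσ, compatible.ι_desc]
  rw [← stdSimplex.yonedaEquiv_δ_comp, restrict, Equiv.apply_symm_apply]

lemma exists_comp (h₂ : HasUniqueHornFilling X (1 : Fin 3)) {x y z : X _⦋0⦌}
    (f : Edge x y) (g : Edge y z) : ∃ h : Edge x z, Nonempty (Edge.CompStruct f g h) := by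
  obtain ⟨s, hs⟩ := h₂.exists_δ_eq ![g.edge, g.edge, f.edge] fun j k hjk hj hk ↦ by
    obtain ⟨rfl, rfl⟩ : j = 0 ∧ k = 1 := by decide +revert
    exact g.src_eq.trans f.tgt_eq.symm
  have d₀ : X.δ 0 s = g.edge := hs 0 (by decide)
  have d₂ : X.δ 2 s = f.edge := hs 2 (by decide)
  refine ⟨Edge.mk (X.δ 1 s) ?_ ?_, ⟨Edge.CompStruct.mk s d₂ d₀ rfl⟩⟩
  · rw [← f.src_eq, ← d₂]
    exact (X.δ_comp_δ_apply (n := 0) (i := 1) (j := 1) le_rfl s).symm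
  · rw [← g.tgt_eq, ← d₀]
    exact X.δ_comp_δ_apply (n := 0) (i := 0) (j := 0) le_rfl s

lemma comp_unique (h₂ : HasUniqueHornFilling X (1 : Fin 3)) {x y z : X _⦋0⦌} {f : Edge x y}
    {g : Edge y z} {h h' : Edge x z} (s : Edge.CompStruct f g h) (s' : Edge.CompStruct f g h') :
    h = h' := by
  have simplex_eq : s.simplex = s'.simplex := h₂.ext fun j hj ↦ by
    obtain rfl | rfl : j = 0 ∨ j = 2 := by decide +revert
    · rw [s.d₀, s'.d₀]
    · rw [s.d₂, s'.d₂]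
  exact Edge.ext (by rw [← s.d₁, simplex_eq, s'.d₁])

lemma comp_assoc (h₃ : HasUniqueHornFilling X (1 : Fin 4)) {x y z w : X _⦋0⦌} {f : Edge x y}
    {g : Edge y z} {h : Edge z w} {fg : Edge x z} {gh : Edge y w} {k : Edge x w}
    (s : Edge.CompStruct f g fg) (t : Edge.CompStruct g h gh) (r : Edge.CompStruct f gh k) :
    Nonempty (Edge.CompStruct fg h k) := by
  obtain ⟨v, hv⟩ := h₃.exists_δ_eq ![t.simplex, t.simplex, r.simplex, s.simplex]
    fun j k hjk hj hk ↦ by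
      obtain ⟨rfl, rfl⟩ | ⟨rfl, rfl⟩ | ⟨rfl, rfl⟩ :
        (j = 0 ∧ k = 1) ∨ (j = 0 ∧ k = 2) ∨ (j = 2 ∧ k = 2) := by decide +revert
      · exact t.d₁.trans r.d₀.symm
      · exact t.d₂.trans s.d₀.symm
      · exact r.d₂.trans s.d₂.symm
  have d₀ : X.δ 0 v = t.simplex := hv 0 (by decide)
  have d₂ : X.δ 2 v = r.simplex := hv 2 (by decide)
  have d₃ : X.δ 3 v = s.simplex := hv 3 (by decide)
  refine ⟨Edge.CompStruct.mk (X.δ 1 v) ?_ ?_ ?_⟩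
  · rw [← s.d₁, ← d₃]
    exact (X.δ_comp_δ_apply (n := 1) (i := 1) (j := 2) (by decide) v).symm
  · rw [← t.d₀, ← d₀]
    exact X.δ_comp_δ_apply (n := 1) (i := 0) (j := 0) (by decide) v
  · rw [← r.d₁, ← d₂]
    exact (X.δ_comp_δ_apply (n := 1) (i := 1) (j := 1) (by decide) v).symm

lemma hasUniqueComp (h₂ : HasUniqueHornFilling X (1 : Fin 3))
    (h₃ : HasUniqueHornFilling X (1 : Fin 4)) : HasUniqueComp X where
  existsUnique_comp f g :=
    existsUnique_of_exists_of_unique (h₂.exists_comp f g) fun _ _ ⟨s⟩ ⟨s'⟩ ↦ h₂.comp_unique s s'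
  assoc := h₃.comp_assoc

end HasUniqueHornFilling

end UniqueHornFilling

/-- The category with the vertices of `X` as objects and the edges of `X` as morphisms. It is a type
synonym, whose category structure depends on `HasUniqueComp X`. -/
def EdgeCategory (X : SSet.{u}) : Type u := X _⦋0⦌

namespace EdgeCategory

variable (X : SSet.{u}) [HasUniqueComp X]

noncomputable instance : CategoryStruct (EdgeCategory X) where
  Hom x y := Edge (X := X) x y
  id x := Edge.id (X := X) x
  comp f g := (HasUniqueComp.existsUnique_comp f g).choose

variable {X}

/-- The 2-simplex witnessing a composite of `EdgeCategory X`. -/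
noncomputable def compStruct {x y z : EdgeCategory X} (f : x ⟶ y) (g : y ⟶ z) :
    Edge.CompStruct (X := X) f g (f ≫ g) :=
  (HasUniqueComp.existsUnique_comp f g).choose_spec.1.some

lemma comp_eq {x y z : EdgeCategory X} {f : x ⟶ y} {g : y ⟶ z} {h : x ⟶ z}
    (s : Edge.CompStruct (X := X) f g h) : f ≫ g = h :=
  (HasUniqueComp.existsUnique_comp f g).unique ⟨compStruct f g⟩ ⟨s⟩

noncomputable instance : SmallCategory (EdgeCategory X) where
  id_comp f := comp_eq (.idComp f)
  comp_id f := comp_eq (.compId f)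
  assoc f g h := comp_eq
    (HasUniqueComp.assoc (compStruct f g) (compStruct g h) (compStruct f (g ≫ h))).some

variable (X)

/-- The identity-on-objects functor which sends the class of an edge to that edge. -/
noncomputable def fromHomotopyCategory :
    ((truncation 2).obj X).HomotopyCategory ⥤ EdgeCategory X :=
  Truncated.HomotopyCategory.lift (V := (truncation 2).obj X) (D := EdgeCategory X)
    (fun x ↦ x) (fun e ↦ Edge.ofTruncated e) (fun _ ↦ rfl)
    (fun s ↦ comp_eq (Edge.CompStruct.ofTruncated s))

lemma fromHomotopyCategory_map_homMk {x y : EdgeCategory X} (f : x ⟶ y) :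
    (fromHomotopyCategory X).map
      (Truncated.HomotopyCategory.homMk (Edge.toTruncated (X := X) f)) = f :=
  Truncated.HomotopyCategory.lift_map_homMk (V := (truncation 2).obj X) (D := EdgeCategory X)
    _ _ _ (fun s ↦ comp_eq (Edge.CompStruct.ofTruncated s)) (Edge.toTruncated (X := X) f)

/-- The comparison map to the nerve. As the nerve is 2-coskeletal, it is determined by its
restriction to simplices of dimension at most 2, which is the transpose of
`fromHomotopyCategory X`. -/
noncomputable def toNerve : X ⟶ nerve (EdgeCategory X) :=
  (nerve (EdgeCategory X)).liftOfIsRightKanExtension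
    (𝟙 ((SimplexCategory.Truncated.inclusion 2).op ⋙ _)) X
    (Truncated.HomotopyCategory.homToNerveMk (fromHomotopyCategory X))

lemma toNerve_app {n : ℕ} (hn : n ≤ 2) (x : X _⦋n⦌) :
    (toNerve X).app (op ⦋n⦌) x =
      (Truncated.HomotopyCategory.homToNerveMk (fromHomotopyCategory X)).app (op ⟨⦋n⦌, hn⟩) x :=
  ConcreteCategory.congr_hom (Functor.liftOfIsRightKanExtension_fac_app
    (nerve (EdgeCategory X)) (𝟙 ((SimplexCategory.Truncated.inclusion 2).op ⋙ _)) X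
    (Truncated.HomotopyCategory.homToNerveMk (fromHomotopyCategory X)) (op ⟨⦋n⦌, hn⟩)) x

lemma toNerve_app_zero (x : EdgeCategory X) :
    (toNerve X).app (op ⦋0⦌) x = ComposableArrows.mk₀ x :=
  toNerve_app X (by simp) x

lemma toNerve_app_edge {x y : EdgeCategory X} (f : x ⟶ y) :
    (toNerve X).app (op ⦋1⦌) (Edge.edge (X := X) f) = ComposableArrows.mk₁ f :=
  (toNerve_app X (by simp) _).trans <|
    (Truncated.HomotopyCategory.homToNerveMk_app_edge _ (Edge.toTruncated (X := X) f)).trans <|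
      congrArg ComposableArrows.mk₁ (fromHomotopyCategory_map_homMk X f)

lemma toNerve_app_zero_bijective : Function.Bijective ((toNerve X).app (op ⦋0⦌)) :=
  (funext (toNerve_app_zero X)).symm ▸ (nerveEquiv (C := EdgeCategory X)).symm.bijective

lemma toNerve_app_one_bijective : Function.Bijective ((toNerve X).app (op ⦋1⦌)) := by
  refine ⟨fun e e' h ↦ ?_, fun G ↦ ?_⟩
  · obtain ⟨x, y, f, rfl⟩ := Edge.exists_of_simplex e
    obtain ⟨x', y', f', rfl⟩ := Edge.exists_of_simplex e'
    have arrows_eq : ComposableArrows.mk₁ (C := EdgeCategory X) (X₀ := x) (X₁ := y) f =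
        ComposableArrows.mk₁ (C := EdgeCategory X) (X₀ := x') (X₁ := y') f' :=
      (toNerve_app_edge X _).symm.trans (h.trans (toNerve_app_edge X _))
    exact congrArg (fun G : ComposableArrows (EdgeCategory X) 1 ↦ Edge.edge (X := X) (G.map' 0 1))
      arrows_eq
  · obtain ⟨x, y, f, rfl⟩ := ComposableArrows.mk₁_surjective G
    exact ⟨_, toNerve_app_edge X f⟩

end EdgeCategory

section Comparison

variable {X Y : SSet.{u}}

lemma eq_of_δ_zero_eq_of_δ_last_eq [Y.IsStrictSegal] {n : ℕ} {x y : Y _⦋n + 2⦌}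
    (h₀ : Y.δ 0 x = Y.δ 0 y) (h₁ : Y.δ (Fin.last _) x = Y.δ (Fin.last _) y) : x = y := by
  refine (IsStrictSegal.segal (n + 2)).injective (Path.ext' fun k ↦ ?_)
  simp only [spine_arrow]
  obtain rfl | ⟨k, rfl⟩ := k.eq_zero_or_eq_succ
  · have factor := SimplexCategory.mkOfSucc_δ_lt (n := n + 1) (i := 0) (j := Fin.last _)
      (by simp [Fin.lt_def])
    rw [Fin.castSucc_zero] at factor
    rw [← factor, op_comp, Functor.map_comp_apply, Functor.map_comp_apply,
      ← SimplicialObject.δ_def, h₁]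
  · rw [← SimplexCategory.mkOfSucc_δ_gt (n := n + 1) (i := k) (j := 0) (by simp [Fin.lt_def]),
      op_comp, Functor.map_comp_apply, Functor.map_comp_apply, ← SimplicialObject.δ_def, h₀]

namespace HasUniqueHornFilling

lemma app_injective {n : ℕ} {i : Fin (n + 2)} (hi : HasUniqueHornFilling X i) (F : X ⟶ Y)
    (hF : Function.Injective (F.app (op ⦋n⦌))) : Function.Injective (F.app (op ⦋n + 1⦌)) :=
  fun x y hxy ↦ hi.ext fun j _ ↦ hF <| by rw [δ_naturality_apply, δ_naturality_apply, hxy]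

lemma app_surjective [Y.IsStrictSegal] {n : ℕ} {i : Fin (n + 3)} (hi : HasUniqueHornFilling X i)
    (hi₀ : 0 < i) (hi₁ : i < Fin.last (n + 2)) (F : X ⟶ Y)
    (inj : Function.Injective (F.app (op ⦋n⦌)))
    (surj : Function.Surjective (F.app (op ⦋n + 1⦌))) :
    Function.Surjective (F.app (op ⦋n + 2⦌)) := fun y ↦ by
  choose x hx using fun j ↦ surj (Y.δ j y)
  obtain ⟨s, hs⟩ := hi.exists_δ_eq x fun j k hjk _ _ ↦ inj <| by
    rw [δ_naturality_apply, δ_naturality_apply, hx, hx]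
    exact (Y.δ_comp_δ_apply hjk y).symm
  have faces_eq (j) (hj : j ≠ i) : Y.δ j (F.app _ s) = Y.δ j y := by
    rw [← δ_naturality_apply, hs j hj, hx]
  exact ⟨s, eq_of_δ_zero_eq_of_δ_last_eq (faces_eq _ hi₀.ne) (faces_eq _ hi₁.ne')⟩

end HasUniqueHornFilling

lemma isIso_of_bijective_zero_one [Y.IsStrictSegal]
    (hX : ∀ n, ∃ i : Fin (n + 3), 0 < i ∧ i < Fin.last (n + 2) ∧ HasUniqueHornFilling X i)
    (F : X ⟶ Y) (h₀ : Function.Bijective (F.app (op ⦋0⦌)))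
    (h₁ : Function.Bijective (F.app (op ⦋1⦌))) :
    IsIso F := by
  have bijective (n : ℕ) : Function.Bijective (F.app (op ⦋n⦌)) := by
    induction n using Nat.twoStepInduction with
    | zero => exact h₀
    | one => exact h₁
    | more n ih ih' =>
      obtain ⟨i, hi₀, hi₁, hi⟩ := hX n
      exact ⟨hi.app_injective F ih'.1, hi.app_surjective hi₀ hi₁ F ih.1 ih'.2⟩
  rw [NatTrans.isIso_iff_isIso_app]
  exact fun n ↦ (isIso_iff_bijective _).2 (bijective n.unop.len)

end Comparison

theorem unique_inner_horn_filling_iff_nerve_general (C : SSet.{u})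
    (hC : ∀ n, HasUniqueHornFilling C (1 : Fin (n + 3))) :
    ∃ (Z : Type u) (_ : SmallCategory Z), Nonempty (C ≅ nerve Z) := by
  have : HasUniqueComp C := (hC 0).hasUniqueComp (hC 1)
  have : IsIso (EdgeCategory.toNerve C) :=
    isIso_of_bijective_zero_one (fun n ↦ ⟨1, by simp, by simp [Fin.lt_def], hC n⟩) _
      (EdgeCategory.toNerve_app_zero_bijective C)
      (EdgeCategory.toNerve_app_one_bijective C)
  exact ⟨EdgeCategory C, inferInstance, ⟨asIso (EdgeCategory.toNerve C)⟩⟩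

theorem unique_inner_horn_filling_iff_nerve
    (C : SSet.{0})
    (hC : ∀ ⦃n : ℕ⦄ ⦃i : Fin (n + 1)⦄, 0 < i → i < Fin.last n →
      ∀ σ₀ : (Λ[n, i] : SSet) ⟶ C, ∃! σ : (Δ[n] : SSet) ⟶ C,
        σ₀ = Λ[n, i].ι ≫ σ) :
    ∃ (Z : Type) (_ : SmallCategory Z), Nonempty (C ≅ nerve Z) :=
  unique_inner_horn_filling_iff_nerve_general C fun _ ↦
    hC (by simp) (by simp [Fin.lt_def])
end

section
/- Let C be a quasicategory, let n ≥ 2, and let σ: Λ[n,n] → C be a map from the outer horn such that the edge of σ joining the (n−1)-st and n-th vertices is an equivalence in C. Then σ extends along the inclusion Λ[n,n] ⊆ Δ[n] to a map Δ[n] → C. -/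
open CategoryTheory Simplicial Opposite

namespace SSetPaper

universe u

/-- An edge `f` of a simplicial set `C` is an equivalence if its class in the homotopy
category is an isomorphism: there is an edge `g` in the opposite direction together with
`2`-simplices witnessing that the two composites are (homotopic to) identities. -/
def IsEquivalenceEdge (C : SSet.{u}) (f : C _⦋1⦌) : Prop :=
  ∃ g : C _⦋1⦌,
    (∃ ρ : C _⦋2⦌, C.δ 0 ρ = g ∧ C.δ 2 ρ = f ∧ C.δ 1 ρ = C.σ 0 (C.δ 1 f)) ∧
    (∃ ρ : C _⦋2⦌, C.δ 0 ρ = f ∧ C.δ 2 ρ = g ∧ C.δ 1 ρ = C.σ 0 (C.δ 0 f))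

/-- The edge of the outer horn `Λ[n+2, n+2]` joining the `(n+1)`-st and `(n+2)`-nd
vertices. -/
def topEdge (n : ℕ) : (Λ[n + 2, Fin.last (n + 2)] : SSet) _⦋1⦌ :=
  SSet.horn.edge (n + 2) (Fin.last (n + 2)) ⟨n + 1, by omega⟩ (Fin.last (n + 2))
    (by simp [Fin.le_def])
    (by
      rw [Finset.insert_eq_self.mpr (by simp)]
      refine le_trans (Finset.card_insert_le _ _) ?_
      simp only [Finset.card_singleton]
      omega)

end SSetPaper

/-!
STATEMENT 10: Let `C` be a quasicategory, let `n ≥ 2`, and let `σ₀ : Λ[n,n] → C` be a map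
from the outer horn such that the edge of `σ₀` joining the `(n-1)`-st and `n`-th vertices is
an equivalence in `C`.  Then `σ₀` extends along `Λ[n,n] ⊆ Δ[n]` to a map `Δ[n] → C`.
-/

/-!
Let `f : x → y` be the given equivalence, with inverse `g`. Filling an inner horn gives a
`3`-simplex `τ` with vertices `x, y, x, y` and spine `f, g, f` whose faces opposite to the vertices
`2` and `3` are the degenerate triangle on `f` and a homotopy from `g ∘ f` to the identity.

View `Δ[n + 4]` as `Δ[n] ⋆ Δ[3]` and put `τ` on the second factor. On the faces of `Δ[n] ⋆ Δ[3]`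
that avoid the second `x` and one of the vertices `0, …, n + 1`, use the given horn, with both `y`'s
sent to its last vertex; on the join of `∂Δ[n]` with the edge from `x` to `x`, use the horn with
both `x`'s sent to its vertex `n + 1`. These agree on overlaps. Coning with apex the first `x` and
then the first `y` only fills inner horns, and extends the map to all faces avoiding one of the
vertices `0, …, n + 1`.

Now consider the simplex spanned by `Δ[n]`, the two `x`'s and the last `y`. All its faces other than
those opposite to the second `x` and to `y` are already mapped to `C`, and on the face opposite to
`y` one can use `Δ[n] ⋆ {x}`, with both `x`'s sent to the second one. The face opposite to the
second `x` is the only one missing, so this is an inner horn, because the second `x` is followed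
by `y`. In its filler, the missing face fills the given horn.
-/

namespace SpecialOuterHorn

open SSet SSetPaper

universe u

section Coning

variable {N : ℕ}

/-- The subcomplex of `Δ[N]` spanned by a downward closed family of sets of vertices. The empty set
may or may not belong to the family: this does not affect the subcomplex. -/
def ofFaces (P : LowerSet (Set (Fin (N + 1)))) : (Δ[N] : SSet.{u}).Subcomplex where
  obj _ := {x | Set.range (stdSimplex.asOrderHom x) ∈ P}
  map f _ hx := P.lower (Set.range_comp_subset_range f.unop.toOrderHom _) hx

lemma mem_ofFaces_iff {P : LowerSet (Set (Fin (N + 1)))} {d : ℕ} {x : (Δ[N] : SSet.{u}) _⦋d⦌} :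
    x ∈ (ofFaces P).obj _ ↔ Set.range x ∈ P := Iff.rfl

lemma ofFaces_mono : Monotone (ofFaces.{u} (N := N)) := fun _ _ h _ _ hx ↦ h hx

/-- The inclusion of subcomplexes induced by an inclusion of families of faces. -/
abbrev ofFacesHomOfLE {P Q : LowerSet (Set (Fin (N + 1)))} (h : P ≤ Q) :
    (ofFaces P : SSet.{u}) ⟶ ofFaces Q :=
  Subcomplex.homOfLE (ofFaces_mono h)

/-- The faces of the horn `Λ[N, i]`. The condition is the one used in the definition of `SSet.horn`,
so that `ofFaces (hornFaces i)` is definitionally `Λ[N, i]`. -/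
def hornFaces (i : Fin (N + 1)) : LowerSet (Set (Fin (N + 1))) where
  carrier := {S | S ∪ {i} ≠ Set.univ}
  lower' _ _ h hS hT := hS <|
    Set.univ_subset_iff.1 (hT.symm.subset.trans (Set.union_subset_union_left _ h))

lemma mem_nonDegenerate_iff_strictMono {K : (Δ[N] : SSet.{u}).Subcomplex} {d : ℕ}
    {x : (K : SSet) _⦋d⦌} : x ∈ (K : SSet).nonDegenerate d ↔ StrictMono x.1 :=
  (K.mem_nonDegenerate_iff x).trans (stdSimplex.mem_nonDegenerate_iff_strictMono _)

lemma mk_eq_mk_of_range_eq {K : (Δ[N] : SSet.{u}).Subcomplex} {d e : ℕ}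
    {x : (K : SSet) _⦋d⦌} {y : (K : SSet) _⦋e⦌}
    (hx : x ∈ (K : SSet).nonDegenerate d) (hy : y ∈ (K : SSet).nonDegenerate e)
    (h : Set.range x.1 = Set.range y.1) : S.mk x = S.mk y := by
  replace hx := mem_nonDegenerate_iff_strictMono.1 hx
  replace hy := mem_nonDegenerate_iff_strictMono.1 hy
  obtain rfl : d = e := by
    have := congrArg Set.ncard h
    rwa [Set.ncard_range_of_injective hx.injective, Set.ncard_range_of_injective hy.injective,
      Nat.card_fin, Nat.card_fin, Nat.add_right_cancel_iff] at this
  congr 1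
  exact Subtype.ext (DFunLike.coe_injective ((hx.range_inj hy).1 h))

lemma range_subset_of_le {K : (Δ[N] : SSet.{u}).Subcomplex} {s t : (K : SSet).S} (h : s ≤ t) :
    Set.range s.simplex.1 ⊆ Set.range t.simplex.1 := by
  obtain ⟨f, hf⟩ := S.le_iff.1 h
  rw [← hf]
  exact Set.range_comp_subset_range f.toOrderHom t.simplex.1

lemma range_eq_of_mk_eq_mk {K : (Δ[N] : SSet.{u}).Subcomplex} {d e : ℕ}
    {x : (K : SSet) _⦋d⦌} {y : (K : SSet) _⦋e⦌} (h : S.mk x = S.mk y) :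
    Set.range x.1 = Set.range y.1 :=
  (range_subset_of_le h.le).antisymm (range_subset_of_le h.ge)

/-- The faces of `Q` that are not in `P` come in pairs `S \ {k} ⊂ S ∪ {k}`, where `k` lies strictly
between two vertices of `S`. Then `ofFaces Q` is obtained from `ofFaces P` by filling inner horns,
one for each pair. -/
structure IsInnerConing (P Q : LowerSet (Set (Fin (N + 1)))) (k : Fin (N + 1)) : Prop where
  insert_mem {S : Set (Fin (N + 1))} : S ∈ Q → S ∉ P → insert k S ∈ Q
  diff_notMem {S : Set (Fin (N + 1))} : S ∈ Q → S ∉ P → S \ {k} ∉ P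
  exists_lt {S : Set (Fin (N + 1))} : S ∈ Q → S ∉ P → ∃ a ∈ S, a < k
  exists_gt {S : Set (Fin (N + 1))} : S ∈ Q → S ∉ P → ∃ b ∈ S, k < b

/-- The larger member of a pair of faces as in `IsInnerConing`, i.e. the one that contains the apex
`k`; it is the simplex along which an inner horn gets filled. -/
@[ext]
structure ConingFace (P Q : LowerSet (Set (Fin (N + 1)))) (k : Fin (N + 1)) where
  face : Finset (Fin (N + 1))
  apex_mem : k ∈ face
  mem : (face : Set (Fin (N + 1))) ∈ Q
  diff_notMem : (face : Set (Fin (N + 1))) \ {k} ∉ P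

namespace ConingFace

variable {P Q : LowerSet (Set (Fin (N + 1)))} {k : Fin (N + 1)}

variable (hPQ : IsInnerConing P Q k) (s : ConingFace P Q k)

lemma notMem : (s.face : Set (Fin (N + 1))) ∉ P :=
  fun h ↦ s.diff_notMem (P.lower Set.sdiff_subset h)

/-- The dimension of the smaller face `face \ {k}` of the pair, which determines the horn
`Λ[dim + 1, index]` to be filled. The subtraction does not truncate, see `card_face`. -/
def dim : ℕ := s.face.card - 2

include hPQ in
lemma card_face : s.face.card = s.dim + 2 := by
  obtain ⟨a, ha, hak⟩ := hPQ.exists_lt s.mem s.notMem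
  have := Finset.one_lt_card.2 ⟨a, ha, k, s.apex_mem, hak.ne⟩
  simp only [dim]
  omega

/-- The increasing enumeration of the vertices of `s.face`. -/
noncomputable def vertices : Fin (s.dim + 2) ↪o Fin (N + 1) :=
  s.face.orderEmbOfFin (s.card_face hPQ)

lemma exists_vertices_eq : ∃ i, s.vertices hPQ i = k :=
  (s.face.range_orderEmbOfFin (s.card_face hPQ)).superset s.apex_mem

/-- The position of the apex `k` among the vertices of `s.face`. -/
noncomputable def index : Fin (s.dim + 2) := (s.exists_vertices_eq hPQ).choose

lemma vertices_index : s.vertices hPQ (s.index hPQ) = k :=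
  (s.exists_vertices_eq hPQ).choose_spec

lemma range_vertices : Set.range (s.vertices hPQ) = s.face := s.face.range_orderEmbOfFin _

/-- The face `s.face`, as a simplex of `ofFaces Q`. -/
noncomputable def simplex : (ofFaces Q : SSet.{u}) _⦋s.dim + 1⦌ :=
  ⟨stdSimplex.objMk (s.vertices hPQ).toOrderHom,
    mem_ofFaces_iff.2 (s.range_vertices hPQ ▸ s.mem :)⟩

lemma range_simplex :
    Set.range (s.simplex hPQ : (ofFaces Q : SSet.{u}) _⦋s.dim + 1⦌).1 = s.face :=
  s.range_vertices hPQ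

lemma range_δ_simplex :
    Set.range ((ofFaces Q : SSet.{u}).δ (s.index hPQ) (s.simplex hPQ)).1 =
      (s.face : Set (Fin (N + 1))) \ {k} := by
  change Set.range (s.vertices hPQ ∘ (s.index hPQ).succAbove) = _
  rw [Set.range_comp, Fin.range_succAbove,
    Set.image_compl_eq_range_sdiff_image (s.vertices hPQ).injective, range_vertices,
    Set.image_singleton, vertices_index]

lemma simplex_mem_nonDegenerate :
    s.simplex hPQ ∈ (ofFaces Q : SSet.{u}).nonDegenerate (s.dim + 1) :=
  mem_nonDegenerate_iff_strictMono.2 (s.vertices hPQ).strictMono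

lemma index_ne_zero : s.index hPQ ≠ 0 := by
  obtain ⟨a, ha, hak⟩ := hPQ.exists_lt s.mem s.notMem
  obtain ⟨i, rfl⟩ := (s.range_vertices hPQ).superset ha
  have hi : s.vertices hPQ i < s.vertices hPQ (s.index hPQ) := by rwa [vertices_index]
  exact ((s.vertices hPQ).lt_iff_lt.1 hi).ne_bot

lemma index_ne_last : s.index hPQ ≠ Fin.last _ := by
  obtain ⟨b, hb, hkb⟩ := hPQ.exists_gt s.mem s.notMem
  obtain ⟨i, rfl⟩ := (s.range_vertices hPQ).superset hb
  have hi : s.vertices hPQ (s.index hPQ) < s.vertices hPQ i := by rwa [vertices_index]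
  exact ((s.vertices hPQ).lt_iff_lt.1 hi).ne_top

end ConingFace

namespace IsInnerConing

variable {P Q : LowerSet (Set (Fin (N + 1)))} {k : Fin (N + 1)} (h : IsInnerConing P Q k)

/-- The pairing `S \ {k} ⊂ S ∪ {k}` of the nondegenerate simplices of `ofFaces Q` that are not in
`ofFaces P`, in Mathlib's format for anodyne extensions. -/
noncomputable def pairingCore : ((ofFaces.{u} P).preimage (ofFaces Q).ι).PairingCore where
  ι := ConingFace P Q k
  dim := ConingFace.dim
  simplex s := s.simplex h
  index s := s.index h
  nonDegenerate₁ s := s.simplex_mem_nonDegenerate h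
  nonDegenerate₂ s := nonDegenerate_δ (s.simplex_mem_nonDegenerate h) _
  notMem₁ s hs := s.notMem (s.range_simplex h ▸ mem_ofFaces_iff.1 hs)
  notMem₂ s hs := s.diff_notMem (s.range_δ_simplex h ▸ mem_ofFaces_iff.1 hs)
  injective_type₁' {s t} hst := by
    have := range_eq_of_mk_eq_mk hst
    rw [s.range_simplex, t.range_simplex] at this
    exact ConingFace.ext (Finset.coe_injective this)
  injective_type₂' {s t} hst := by
    have := range_eq_of_mk_eq_mk hst
    rw [s.range_δ_simplex, t.range_δ_simplex] at this
    refine ConingFace.ext (Finset.coe_injective ?_)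
    rw [← Set.insert_sdiff_self_of_mem s.apex_mem, this, Set.insert_sdiff_self_of_mem t.apex_mem]
  type₁_ne_type₂' s t hst := by
    have := range_eq_of_mk_eq_mk hst
    rw [s.range_simplex, t.range_δ_simplex] at this
    exact (this.subset s.apex_mem).2 rfl
  surjective' x := by
    let F : Finset (Fin (N + 1)) := Finset.univ.image x.simplex.1
    have hF : (F : Set (Fin (N + 1))) = Set.range x.simplex.1 := by simp [F]
    have hQ : (F : Set _) ∈ Q := hF ▸ mem_ofFaces_iff.1 x.simplex.2
    have hP : (F : Set _) ∉ P := fun hP ↦ x.notMem (mem_ofFaces_iff.2 (hF ▸ hP))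
    by_cases hk : k ∈ F
    · let s : ConingFace P Q k := ⟨F, hk, hQ, h.diff_notMem hQ hP⟩
      refine ⟨s, Or.inl (mk_eq_mk_of_range_eq x.nonDegenerate (s.simplex_mem_nonDegenerate h) ?_)⟩
      rw [s.range_simplex, hF]
    · let s : ConingFace P Q k := ⟨insert k F, F.mem_insert_self k, by
        simpa using h.insert_mem hQ hP, by simpa [hk] using hP⟩
      refine ⟨s, Or.inr (mk_eq_mk_of_range_eq x.nonDegenerate
        (nonDegenerate_δ (s.simplex_mem_nonDegenerate h) _) ?_)⟩
      rw [s.range_δ_simplex, ← hF]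
      simp [s, hk]

instance : h.pairingCore.{u}.IsInner where
  ne_zero s := s.index_ne_zero h
  ne_last s := s.index_ne_last h

/-- Horns are filled in the order of the number of vertices of the paired faces. -/
noncomputable def rankFunction : h.pairingCore.{u}.RankFunction ℕ where
  rank s := s.face.card
  lt {s t} hst := by
    have hsub : (s.face : Set (Fin (N + 1))) \ {k} ⊆ t.face := by
      rw [← s.range_δ_simplex.{u} h, ← t.range_simplex.{u} h]
      exact range_subset_of_le hst.2.le
    have hle : s.face ⊆ t.face := fun i hi ↦ by
      by_cases hik : i = k
      · exact hik ▸ t.apex_mem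
      · exact hsub ⟨hi, hik⟩
    exact Finset.card_lt_card (hle.ssubset_of_ne fun he ↦ hst.1 (ConingFace.ext he))

instance : h.pairingCore.{u}.IsRegular := h.rankFunction.isRegular

include h in
lemma innerAnodyneExtensions :
    SSet.innerAnodyneExtensions ((ofFaces.{u} P).preimage (ofFaces Q).ι).ι :=
  h.pairingCore.pairing.innerAnodyneExtensions

include h in
lemma exists_extension {C : SSet.{u}} [Quasicategory C] (hPQ : P ≤ Q)
    (f : (ofFaces P : SSet) ⟶ C) : ∃ g : (ofFaces Q : SSet) ⟶ C, ofFacesHomOfLE hPQ ≫ g = f := by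
  let A := (ofFaces.{u} P).preimage (ofFaces Q).ι
  have : InnerFibration (Limits.terminal.from C) := inferInstance
  have := h.innerAnodyneExtensions.{u} _ (mem_innerFibrations (Limits.terminal.from C))
  have sq : CommSq ((ofFaces P).fromPreimage (ofFaces Q).ι ≫ f) A.ι
      (Limits.terminal.from C) (Limits.terminal.from _) := ⟨Subsingleton.elim _ _⟩
  refine ⟨sq.lift, ?_⟩
  let e : (ofFaces P : SSet) ⟶ (A : SSet) := Subcomplex.lift (ofFacesHomOfLE hPQ)
    (by rintro _ _ ⟨x, rfl⟩; exact x.2)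
  exact congrArg (e ≫ ·) sq.fac_left

end IsInnerConing

end Coning

section Maps

variable {N M : ℕ} {C : SSet.{u}}

lemma ofFaces_hom_ext_of_le_sup {P Q R : LowerSet (Set (Fin (N + 1)))} (hR : R ≤ P ⊔ Q)
    {f g : (ofFaces R : SSet) ⟶ C}
    (hP : ofFacesHomOfLE (inf_le_left : R ⊓ P ≤ R) ≫ f = ofFacesHomOfLE inf_le_left ≫ g)
    (hQ : ofFacesHomOfLE (inf_le_left : R ⊓ Q ≤ R) ≫ f = ofFacesHomOfLE inf_le_left ≫ g) :
    f = g := by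
  ext d ⟨x, hx⟩
  obtain hxP | hxQ := hR hx
  · exact ConcreteCategory.congr_hom (NatTrans.congr_app hP d) ⟨x, hx, hxP⟩
  · exact ConcreteCategory.congr_hom (NatTrans.congr_app hQ d) ⟨x, hx, hxQ⟩

lemma exists_desc_ofFaces_sup {P Q : LowerSet (Set (Fin (N + 1)))}
    (f : (ofFaces P : SSet) ⟶ C) (g : (ofFaces Q : SSet) ⟶ C)
    (h : ofFacesHomOfLE inf_le_left ≫ f = ofFacesHomOfLE (inf_le_right : P ⊓ Q ≤ Q) ≫ g) :
    ∃ φ : (ofFaces (P ⊔ Q) : SSet) ⟶ C,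
      ofFacesHomOfLE le_sup_left ≫ φ = f ∧ ofFacesHomOfLE le_sup_right ≫ φ = g :=
  (Subcomplex.BicartSq.isPushout (.mk rfl rfl)).exists_desc f g h

lemma exists_desc_ofFaces_sup_sup {P Q R : LowerSet (Set (Fin (N + 1)))}
    (f : (ofFaces P : SSet) ⟶ C) (g : (ofFaces Q : SSet) ⟶ C) (h : (ofFaces R : SSet) ⟶ C)
    (hfg : ofFacesHomOfLE inf_le_left ≫ f = ofFacesHomOfLE (inf_le_right : P ⊓ Q ≤ Q) ≫ g)
    (hfh : ofFacesHomOfLE inf_le_left ≫ f = ofFacesHomOfLE (inf_le_right : P ⊓ R ≤ R) ≫ h)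
    (hgh : ofFacesHomOfLE inf_le_left ≫ g = ofFacesHomOfLE (inf_le_right : Q ⊓ R ≤ R) ≫ h) :
    ∃ φ : (ofFaces (P ⊔ Q ⊔ R) : SSet) ⟶ C,
      ofFacesHomOfLE (le_sup_left.trans le_sup_left) ≫ φ = f ∧
      ofFacesHomOfLE (le_sup_right.trans le_sup_left) ≫ φ = g ∧
      ofFacesHomOfLE le_sup_right ≫ φ = h := by
  obtain ⟨ψ, rfl, rfl⟩ := exists_desc_ofFaces_sup f g hfg
  have hP : (P ⊔ Q) ⊓ R ⊓ P ≤ P ⊓ R := le_inf inf_le_right (inf_le_left.trans inf_le_right)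
  have hQ : (P ⊔ Q) ⊓ R ⊓ Q ≤ Q ⊓ R := le_inf inf_le_right (inf_le_left.trans inf_le_right)
  obtain ⟨φ, rfl, hφ⟩ := exists_desc_ofFaces_sup ψ h <|
    ofFaces_hom_ext_of_le_sup inf_le_left (congrArg (ofFacesHomOfLE hP ≫ ·) hfh)
      (congrArg (ofFacesHomOfLE hQ ≫ ·) hgh)
  exact ⟨φ, rfl, rfl, hφ⟩

/-- The map of subcomplexes induced by a monotone map on vertices. -/
def ofFacesMap {P : LowerSet (Set (Fin (N + 1)))} {Q : LowerSet (Set (Fin (M + 1)))}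
    (f : ⦋N⦌ ⟶ ⦋M⦌) (h : ∀ S ∈ P, f.toOrderHom '' S ∈ Q) :
    (ofFaces P : SSet.{u}) ⟶ ofFaces Q :=
  Subcomplex.lift ((ofFaces P).ι ≫ SSet.stdSimplex.map f) (by
    rintro _ _ ⟨x, rfl⟩
    exact (Set.range_comp f.toOrderHom (stdSimplex.asOrderHom x.1) ▸ h _ x.2 :))

lemma ofFaces_ι_ext {P : LowerSet (Set (Fin (N + 1)))} {φ ψ : (ofFaces P : SSet.{u}) ⟶ Δ[M]}
    (h : ∀ (d : ℕ) (x : (Δ[N] : SSet.{u}) _⦋d⦌) (hx : Set.range x ∈ P) (i : Fin (d + 1)),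
      (φ.app _ ⟨x, hx⟩ : Δ[M] _⦋d⦌) i = (ψ.app _ ⟨x, hx⟩ : Δ[M] _⦋d⦌) i) : φ = ψ := by
  ext ⟨d⟩ ⟨x, hx⟩
  induction d using SimplexCategory.rec with | _ d =>
  exact DFunLike.ext _ _ (h d x hx)

lemma ofFaces_hom_ext {P : LowerSet (Set (Fin (N + 1)))} {K : (Δ[M] : SSet.{u}).Subcomplex}
    {φ ψ : (ofFaces P : SSet.{u}) ⟶ K}
    (h : ∀ (d : ℕ) (x : (Δ[N] : SSet.{u}) _⦋d⦌) (hx : Set.range x ∈ P) (i : Fin (d + 1)),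
      (φ.app _ ⟨x, hx⟩).1 i = (ψ.app _ ⟨x, hx⟩).1 i) : φ = ψ := by
  rw [← cancel_mono K.ι]
  exact ofFaces_ι_ext h

/-- The faces that do not contain the vertex `v`. -/
def omits (v : ℕ) : LowerSet (Set (Fin (N + 1))) where
  carrier := {S | ∀ x ∈ S, x.val ≠ v}
  lower' _ _ h hS x hx := hS x (h hx)

/-- The faces that fail to contain some vertex `v ≤ n`, i.e. the union of the families `omits v`. -/
def omitsSomeLE (n : ℕ) : LowerSet (Set (Fin (N + 1))) where
  carrier := {S | ∃ v ≤ n, ∀ x ∈ S, x.val ≠ v}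
  lower' := fun _ _ h ⟨v, hv, hS⟩ ↦ ⟨v, hv, fun x hx ↦ hS x (h hx)⟩

lemma omitsSomeLE_mono : Monotone (omitsSomeLE (N := N)) :=
  fun _ _ h _ ⟨v, hv, hS⟩ ↦ ⟨v, hv.trans h, hS⟩

/-- The faces all of whose vertices are `≥ k`. -/
def atLeast (k : ℕ) : LowerSet (Set (Fin (N + 1))) where
  carrier := {S | ∀ x ∈ S, k ≤ x.val}
  lower' _ _ h hS x hx := hS x (h hx)

lemma mem_hornFaces {i : Fin (N + 1)} {S : Set (Fin (N + 1))} :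
    S ∈ hornFaces i ↔ ∃ v ≤ N, v ≠ i ∧ ∀ x ∈ S, x.val ≠ v := by
  change S ∪ {i} ≠ Set.univ ↔ _
  simp only [ne_eq, Set.eq_univ_iff_forall, not_forall, Set.mem_union, Set.mem_singleton_iff,
    not_or]
  constructor
  · rintro ⟨v, hv, hi⟩
    exact ⟨v, by omega, by simpa [Fin.ext_iff] using hi, fun x hx h ↦ hv (Fin.ext h ▸ hx)⟩
  · rintro ⟨v, hv, hi, h⟩
    exact ⟨⟨v, by omega⟩, fun hx ↦ h _ hx rfl, by simpa [Fin.ext_iff] using hi⟩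

lemma mem_hornFaces_last {S : Set (Fin (N + 2))} :
    S ∈ hornFaces (Fin.last (N + 1)) ↔ ∃ v ≤ N, ∀ x ∈ S, x.val ≠ v := by
  rw [mem_hornFaces]
  exact exists_congr fun v ↦ by rw [Fin.val_last]; grind

/-- The map on vertices that shifts down by `k` (sending the vertices below `k` to `0`, as in the
truncated subtraction of natural numbers) and sends everything beyond `m` to `m`. -/
def clamp (k : ℕ) (m : Fin (M + 1)) : ⦋N⦌ ⟶ ⦋M⦌ :=
  SimplexCategory.mkHom ⟨fun x ↦ ⟨min (x - k) m, by omega⟩, fun x y h ↦ by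
    have : x.val ≤ y.val := h
    simp only [Fin.mk_le_mk]
    omega⟩

lemma clamp_apply (k : ℕ) (m : Fin (M + 1)) (x : Fin (N + 1)) :
    ((clamp (N := N) k m).toOrderHom x).val = min (x.val - k) m.val := rfl

/-- The restriction to `ofFaces P` of the map `Δ[N] ⟶ Δ[m]` that shifts the vertices `k, …, k + m`
down to `0, …, m`. -/
def ofFacesClamp (P : LowerSet (Set (Fin (N + 1)))) (k m : ℕ) : (ofFaces P : SSet.{u}) ⟶ Δ[m] :=
  (ofFaces P).ι ≫ SSet.stdSimplex.map (clamp k (Fin.last m))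

end Maps

lemma exists_three_simplex_of_isEquivalenceEdge {C : SSet.{u}} [Quasicategory C] {f : C _⦋1⦌}
    (hf : IsEquivalenceEdge C f) :
    ∃ τ : Δ[3] ⟶ C, stdSimplex.δ 2 ≫ τ = stdSimplex.σ 1 ≫ yonedaEquiv.symm f ∧
      stdSimplex.δ 1 ≫ stdSimplex.δ 3 ≫ τ =
        stdSimplex.σ 0 ≫ stdSimplex.δ 1 ≫ yonedaEquiv.symm f := by
  obtain ⟨g, ⟨ρ, hρ₀, hρ₂, hρ₁⟩, ρ', -, hρ'₂, hρ'₁⟩ := hf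
  have h₁₂ : C.δ 2 ρ' = C.δ 0 ρ := hρ'₂.trans hρ₀.symm
  have h₁₃ : C.δ 1 ρ' = C.δ 0 (C.σ 1 f) :=
    hρ'₁.trans (δ_comp_σ_of_le_apply (S := C) (i := 0) (j := 0) le_rfl f).symm
  have h₂₃ : C.δ 2 (C.σ 1 f) = C.δ 2 ρ := (δ_comp_σ_succ_apply (S := C) 1 f).trans hρ₂.symm
  obtain ⟨φ, -, hφ₂, hφ₃⟩ := horn₃₁.exists_desc (yonedaEquiv.symm ρ')
    (yonedaEquiv.symm (C.σ 1 f)) (yonedaEquiv.symm ρ)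
    (by simp only [stdSimplex.δ_comp_yonedaEquiv_symm, h₁₂])
    (by simp only [stdSimplex.δ_comp_yonedaEquiv_symm, h₁₃])
    (by simp only [stdSimplex.δ_comp_yonedaEquiv_symm, h₂₃])
  obtain ⟨τ, rfl⟩ := Quasicategory.hornFilling (by decide) (by decide) φ
  refine ⟨τ, ?_, ?_⟩
  · rw [← horn.ι_ι_assoc 1 2 (by decide), hφ₂, stdSimplex.σ_comp_yonedaEquiv_symm]
  · rw [← horn.ι_ι_assoc 1 3 (by decide), hφ₃, stdSimplex.δ_comp_yonedaEquiv_symm, hρ₁,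
      stdSimplex.δ_comp_yonedaEquiv_symm, stdSimplex.σ_comp_yonedaEquiv_symm]

section Join

variable {C : SSet.{u}} {n : ℕ}

/-- The part of `Δ[n + 4] = Δ[n] ⋆ Δ[3]` on which the horn `Λ[n + 2, n + 2]` is prescribed, the
vertices `n + 2` and `n + 4` both playing the role of its last vertex. -/
def hornPart (n : ℕ) : LowerSet (Set (Fin (n + 4 + 1))) :=
  omitsSomeLE (n + 1) ⊓ omits (n + 3)

/-- The join of `∂Δ[n]` with the edge joining `n + 1` and `n + 3`, as a part of
`Δ[n + 4] = Δ[n] ⋆ Δ[3]`; both ends of the edge play the role of the vertex `n + 1` of the horn. -/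
def boundaryPart (n : ℕ) : LowerSet (Set (Fin (n + 4 + 1))) :=
  omitsSomeLE n ⊓ (omits (n + 2) ⊓ omits (n + 4))

/-- The faces reached from `hornPart`, `boundaryPart` and `Δ[3]` by coning with apex `n + 1`. -/
def firstStage (n : ℕ) : LowerSet (Set (Fin (n + 4 + 1))) :=
  omitsSomeLE n ⊔ omits (n + 1) ⊓ omits (n + 3)

lemma boundaryPart_le : boundaryPart n ≤ omitsSomeLE (n + 1) :=
  inf_le_left.trans (omitsSomeLE_mono n.le_succ)

lemma hornPart_sup_boundaryPart_sup_atLeast_le :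
    hornPart n ⊔ boundaryPart n ⊔ atLeast (n + 1) ≤ firstStage n := by
  rintro S ((⟨⟨v, hv, h⟩, h₃⟩ | h) | h)
  · obtain hv | rfl := Nat.le_succ_iff.1 hv
    · exact Or.inl ⟨v, hv, h⟩
    · exact Or.inr ⟨h, h₃⟩
  · exact Or.inl h.1
  · exact Or.inl ⟨0, n.zero_le, fun x hx h₀ ↦ by have := h x hx; omega⟩

lemma firstStage_le : firstStage n ≤ omitsSomeLE (n + 1) :=
  sup_le (omitsSomeLE_mono n.le_succ) fun _ h ↦ ⟨n + 1, le_rfl, h.1⟩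

lemma isInnerConing_firstStage :
    IsInnerConing (hornPart n ⊔ boundaryPart n ⊔ atLeast (n + 1)) (firstStage n)
      ⟨n + 1, by omega⟩ := by
  have mem_omitsSomeLE {S : Set (Fin (n + 4 + 1))} (hQ : S ∈ firstStage n)
      (hP : S ∉ hornPart n ⊔ boundaryPart n ⊔ atLeast (n + 1)) : S ∈ omitsSomeLE n :=
    hQ.resolve_right fun h ↦ hP (Or.inl (Or.inl ⟨⟨n + 1, le_rfl, h.1⟩, h.2⟩))
  have exists_eq {S : Set (Fin (n + 4 + 1))} (hQ : S ∈ firstStage n)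
      (hP : S ∉ hornPart n ⊔ boundaryPart n ⊔ atLeast (n + 1)) : ∃ b ∈ S, b.val = n + 3 := by
    by_contra! h
    exact hP (Or.inl (Or.inl ⟨omitsSomeLE_mono n.le_succ (mem_omitsSomeLE hQ hP), h⟩))
  refine ⟨fun {S} hQ hP ↦ ?_, fun {S} hQ hP h ↦ ?_, fun {S} _ hP ↦ ?_, fun {S} hQ hP ↦ ?_⟩
  · obtain ⟨v, hv, h⟩ := mem_omitsSomeLE hQ hP
    exact Or.inl ⟨v, hv, Set.forall_mem_insert.2 ⟨by dsimp only; omega, h⟩⟩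
  · rcases h with (h | h) | h
    · obtain ⟨b, hb, hb₃⟩ := exists_eq hQ hP
      exact h.2 b ⟨hb, by simp [Fin.ext_iff, hb₃]⟩ hb₃
    · refine hP (Or.inl (Or.inr ⟨mem_omitsSomeLE hQ hP, fun x hx hx₂ ↦ ?_, fun x hx hx₄ ↦ ?_⟩))
      · exact h.2.1 x ⟨hx, by simp [Fin.ext_iff, hx₂]⟩ hx₂
      · exact h.2.2 x ⟨hx, by simp [Fin.ext_iff, hx₄]⟩ hx₄
    · refine hP (Or.inr fun x hx ↦ ?_)
      by_contra! hlt
      exact hlt.not_ge (h x ⟨hx, by simp [Fin.ext_iff, hlt.ne]⟩)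
  · by_contra! h
    exact hP (Or.inr h)
  · obtain ⟨b, hb, hb₃⟩ := exists_eq hQ hP
    exact ⟨b, hb, by simp [Fin.lt_def, hb₃]⟩

lemma isInnerConing_omitsSomeLE :
    IsInnerConing (firstStage n) (omitsSomeLE (n + 1)) ⟨n + 2, by omega⟩ := by
  have mem_omits {S : Set (Fin (n + 4 + 1))} (hQ : S ∈ omitsSomeLE (n + 1))
      (hP : S ∉ firstStage n) : S ∈ omits (n + 1) := by
    obtain ⟨v, hv, h⟩ := hQ
    obtain hv | rfl := Nat.le_succ_iff.1 hv
    · exact absurd (Or.inl ⟨v, hv, h⟩) hP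
    · exact h
  have exists_eq {S : Set (Fin (n + 4 + 1))} (hQ : S ∈ omitsSomeLE (n + 1))
      (hP : S ∉ firstStage n) : ∃ b ∈ S, b.val = n + 3 := by
    by_contra! h
    exact hP (Or.inr ⟨mem_omits hQ hP, h⟩)
  refine ⟨fun {S} hQ hP ↦ ?_, fun {S} hQ hP h ↦ ?_, fun {S} _ hP ↦ ?_, fun {S} hQ hP ↦ ?_⟩
  · exact ⟨n + 1, le_rfl, Set.forall_mem_insert.2 ⟨by simp, mem_omits hQ hP⟩⟩
  · rcases h with ⟨v, hv, h⟩ | h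
    · refine hP (Or.inl ⟨v, hv, fun x hx hxv ↦ ?_⟩)
      exact h x ⟨hx, by simp only [Set.mem_singleton_iff, Fin.ext_iff]; omega⟩ hxv
    · obtain ⟨b, hb, hb₃⟩ := exists_eq hQ hP
      exact h.2 b ⟨hb, by simp [Fin.ext_iff, hb₃]⟩ hb₃
  · by_contra! h
    exact hP (Or.inl ⟨0, n.zero_le, fun x hx h₀ ↦ by
      have : n + 2 ≤ x.val := h x hx
      omega⟩)
  · obtain ⟨b, hb, hb₃⟩ := exists_eq hQ hP
    exact ⟨b, hb, by simp [Fin.lt_def, hb₃]⟩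

lemma image_clamp_mem_hornFaces_of_mem_hornPart :
    ∀ S ∈ hornPart n, (clamp 0 (Fin.last (n + 2))).toOrderHom '' S ∈
      hornFaces (Fin.last (n + 2)) := by
  rintro S ⟨⟨v, hv, h⟩, -⟩
  refine mem_hornFaces_last.2 ⟨v, hv, ?_⟩
  rintro _ ⟨x, hx, rfl⟩
  have := h x hx
  rw [clamp_apply, Fin.val_last]
  omega

lemma image_clamp_mem_hornFaces_of_mem_boundaryPart :
    ∀ S ∈ boundaryPart n, (clamp 0 ⟨n + 1, by omega⟩).toOrderHom '' S ∈
      hornFaces (Fin.last (n + 2)) := by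
  rintro S ⟨⟨v, hv, h⟩, -⟩
  refine mem_hornFaces_last.2 ⟨v, by omega, ?_⟩
  rintro _ ⟨x, hx, rfl⟩
  have := h x hx
  rw [clamp_apply]
  dsimp only
  omega

/-- Identifies the vertex `n + 4` with `n + 2`. -/
def hornPartMap (n : ℕ) :
    (ofFaces (hornPart n) : SSet.{u}) ⟶ ofFaces (hornFaces (Fin.last (n + 2))) :=
  ofFacesMap _ image_clamp_mem_hornFaces_of_mem_hornPart

/-- Identifies the vertex `n + 3` with `n + 1`. -/
def boundaryPartMap (n : ℕ) :
    (ofFaces (boundaryPart n) : SSet.{u}) ⟶ ofFaces (hornFaces (Fin.last (n + 2))) :=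
  ofFacesMap _ image_clamp_mem_hornFaces_of_mem_boundaryPart

/-- The edge `topEdge n` of `Λ[n + 2, n + 2]`, as a map out of `Δ[1]`. -/
def lastEdge (n : ℕ) : Δ[1] ⟶ (ofFaces (hornFaces (Fin.last (n + 2))) : SSet.{u}) :=
  yonedaEquiv.symm (topEdge n)

lemma lastEdge_app (n d : ℕ) (x : (Δ[1] : SSet.{u}) _⦋d⦌) (i : Fin (d + 1)) :
    (((lastEdge n).app _ x).1 i).val = n + 1 + (x i).val := by
  change ((![⟨n + 1, by omega⟩, Fin.last (n + 2)] : Fin 2 → Fin (n + 3)) (x i)).val = _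
  generalize x i = y
  fin_cases y <;> rfl

lemma hornPartMap_eq_boundaryPartMap :
    ofFacesHomOfLE inf_le_left ≫ hornPartMap.{u} n =
      ofFacesHomOfLE (inf_le_right : hornPart n ⊓ boundaryPart n ≤ boundaryPart n) ≫
        boundaryPartMap n := by
  refine ofFaces_hom_ext fun d x hx i ↦ Fin.ext ?_
  change min ((x i).val - 0) (n + 2) = min ((x i).val - 0) (n + 1)
  have h₂ : (x i).val ≠ n + 2 := hx.2.2.1 _ ⟨i, rfl⟩
  have h₃ : (x i).val ≠ n + 3 := hx.1.2 _ ⟨i, rfl⟩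
  have h₄ : (x i).val ≠ n + 4 := hx.2.2.2 _ ⟨i, rfl⟩
  omega

variable {s : (ofFaces (hornFaces (Fin.last (n + 2))) : SSet.{u}) ⟶ C} {τ : Δ[3] ⟶ C}

lemma hornPartMap_comp_eq (hτ : stdSimplex.δ 2 ≫ τ = stdSimplex.σ 1 ≫ lastEdge n ≫ s) :
    ofFacesHomOfLE inf_le_left ≫ hornPartMap n ≫ s =
      ofFacesHomOfLE (inf_le_right : hornPart n ⊓ atLeast (n + 1) ≤ atLeast (n + 1)) ≫
        ofFacesClamp _ (n + 1) 3 ≫ τ := by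
  have hδ : ofFacesHomOfLE inf_le_right ≫ ofFacesClamp (atLeast (n + 1)) (n + 1) 3 =
      ofFacesClamp (hornPart n ⊓ atLeast (n + 1)) (n + 1) 2 ≫ stdSimplex.δ.{u} 2 := by
    refine ofFaces_ι_ext fun d x hx i ↦ Fin.ext ?_
    change min ((x i).val - (n + 1)) 3 =
      ((2 : Fin 4).succAbove ⟨min ((x i).val - (n + 1)) 2, by omega⟩).val
    have h₃ : (x i).val ≠ n + 3 := hx.1.2 _ ⟨i, rfl⟩
    have succAbove_two : ∀ y : Fin 3, ((2 : Fin 4).succAbove y).val = y + y / 2 := by decide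
    rw [succAbove_two]
    dsimp only
    omega
  have hσ : ofFacesHomOfLE inf_le_left ≫ hornPartMap n =
      ofFacesClamp (hornPart n ⊓ atLeast (n + 1)) (n + 1) 2 ≫ stdSimplex.σ 1 ≫ lastEdge n := by
    refine ofFaces_hom_ext fun d x hx i ↦ Fin.ext ((lastEdge_app _ _ _ _).trans ?_).symm
    change n + 1 + ((1 : Fin 2).predAbove ⟨min ((x i).val - (n + 1)) 2, by omega⟩).val =
      min ((x i).val - 0) (n + 2)
    have h₁ : n + 1 ≤ (x i).val := hx.2 _ ⟨i, rfl⟩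
    have predAbove_one : ∀ y : Fin 3, ((1 : Fin 2).predAbove y).val = min y.val 1 := by decide
    rw [predAbove_one]
    dsimp only
    omega
  calc
    _ = ofFacesClamp _ (n + 1) 2 ≫ stdSimplex.σ 1 ≫ lastEdge n ≫ s := congrArg (· ≫ s) hσ
    _ = ofFacesClamp _ (n + 1) 2 ≫ stdSimplex.δ 2 ≫ τ := by rw [hτ]
    _ = _ := congrArg (· ≫ τ) hδ.symm

lemma boundaryPartMap_comp_eq (hτ : stdSimplex.δ 1 ≫ stdSimplex.δ 3 ≫ τ =
      stdSimplex.σ 0 ≫ stdSimplex.δ 1 ≫ lastEdge n ≫ s) :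
    ofFacesHomOfLE inf_le_left ≫ boundaryPartMap n ≫ s =
      ofFacesHomOfLE (inf_le_right : boundaryPart n ⊓ atLeast (n + 1) ≤ atLeast (n + 1)) ≫
        ofFacesClamp _ (n + 1) 3 ≫ τ := by
  have hδ : ofFacesHomOfLE inf_le_right ≫ ofFacesClamp (atLeast (n + 1)) (n + 1) 3 =
      ofFacesClamp (boundaryPart n ⊓ atLeast (n + 1)) (n + 2) 1 ≫
        stdSimplex.δ.{u} 1 ≫ stdSimplex.δ.{u} 3 := by
    refine ofFaces_ι_ext fun d x hx i ↦ Fin.ext ?_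
    change min ((x i).val - (n + 1)) 3 =
      ((3 : Fin 4).succAbove ((1 : Fin 3).succAbove ⟨min ((x i).val - (n + 2)) 1, by omega⟩)).val
    have h₂ : (x i).val ≠ n + 2 := hx.1.2.1 _ ⟨i, rfl⟩
    have h₄ : (x i).val ≠ n + 4 := hx.1.2.2 _ ⟨i, rfl⟩
    have succAbove_comp : ∀ y : Fin 2,
        ((3 : Fin 4).succAbove ((1 : Fin 3).succAbove y)).val = 2 * y := by decide
    rw [succAbove_comp]
    dsimp only
    omega
  have hσ : ofFacesHomOfLE inf_le_left ≫ boundaryPartMap n =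
      ofFacesClamp (boundaryPart n ⊓ atLeast (n + 1)) (n + 2) 1 ≫
        stdSimplex.σ 0 ≫ stdSimplex.δ 1 ≫ lastEdge n := by
    refine ofFaces_hom_ext fun d x hx i ↦ Fin.ext ((lastEdge_app _ _ _ _).trans ?_).symm
    change n + 1 + ((1 : Fin 2).succAbove ((0 : Fin 1).predAbove
      ⟨min ((x i).val - (n + 2)) 1, by omega⟩)).val = min ((x i).val - 0) (n + 1)
    have h₁ : n + 1 ≤ (x i).val := hx.2 _ ⟨i, rfl⟩
    have succAbove_predAbove : ∀ y : Fin 2,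
        ((1 : Fin 2).succAbove ((0 : Fin 1).predAbove y)).val = 0 := by decide
    rw [succAbove_predAbove]
    omega
  calc
    _ = ofFacesClamp _ (n + 2) 1 ≫ stdSimplex.σ 0 ≫ stdSimplex.δ 1 ≫ lastEdge n ≫ s :=
      congrArg (· ≫ s) hσ
    _ = ofFacesClamp _ (n + 2) 1 ≫ stdSimplex.δ 1 ≫ stdSimplex.δ 3 ≫ τ := by rw [hτ]
    _ = _ := congrArg (· ≫ τ) hδ.symm

lemma exists_common_extension [Quasicategory C]
    (hτ₁ : stdSimplex.δ 2 ≫ τ = stdSimplex.σ 1 ≫ lastEdge n ≫ s)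
    (hτ₂ : stdSimplex.δ 1 ≫ stdSimplex.δ 3 ≫ τ =
      stdSimplex.σ 0 ≫ stdSimplex.δ 1 ≫ lastEdge n ≫ s) :
    ∃ φ : (ofFaces (omitsSomeLE (n + 1)) : SSet) ⟶ C,
      ofFacesHomOfLE (inf_le_left : hornPart n ≤ _) ≫ φ = hornPartMap n ≫ s ∧
      ofFacesHomOfLE boundaryPart_le ≫ φ = boundaryPartMap n ≫ s := by
  obtain ⟨ψ, hψ₁, hψ₂, -⟩ := exists_desc_ofFaces_sup_sup
    (hornPartMap n ≫ s) (boundaryPartMap n ≫ s) (ofFacesClamp (atLeast (n + 1)) (n + 1) 3 ≫ τ)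
    (congrArg (· ≫ s) hornPartMap_eq_boundaryPartMap) (hornPartMap_comp_eq hτ₁)
    (boundaryPartMap_comp_eq hτ₂)
  obtain ⟨χ, rfl⟩ :=
    isInnerConing_firstStage.exists_extension hornPart_sup_boundaryPart_sup_atLeast_le ψ
  obtain ⟨φ, rfl⟩ := isInnerConing_omitsSomeLE.exists_extension firstStage_le χ
  exact ⟨φ, hψ₁, hψ₂⟩

end Join

section InnerHorn

variable {C : SSet.{u}} {n : ℕ}

lemma hornFaces_eq_sup :
    hornFaces (N := n + 3) ⟨n + 2, by omega⟩ = omitsSomeLE (n + 1) ⊔ omits (n + 3) := by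
  ext S
  change S ∈ hornFaces _ ↔ (∃ v ≤ n + 1, ∀ x ∈ S, x.val ≠ v) ∨ ∀ x ∈ S, x.val ≠ n + 3
  rw [mem_hornFaces]
  constructor
  · rintro ⟨v, hv, hne, h⟩
    obtain hv' | rfl : v ≤ n + 1 ∨ v = n + 3 := by dsimp only at hne; omega
    · exact Or.inl ⟨v, hv', h⟩
    · exact Or.inr h
  · rintro (⟨v, hv, h⟩ | h)
    · exact ⟨v, by omega, by dsimp only; omega, h⟩
    · exact ⟨n + 3, le_rfl, by dsimp only; omega, h⟩

lemma δ_apply (k : Fin (n + 2)) (x : Fin (n + 1)) :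
    ((SimplexCategory.δ k).toOrderHom x).val = if x.val < k.val then x.val else x.val + 1 := by
  change (k.succAbove x).val = _
  simp only [Fin.succAbove, Fin.lt_def, Fin.val_castSucc]
  split_ifs <;> rfl

lemma image_δ_mem_omitsSomeLE {N : ℕ} {k : Fin (N + 2)} (hk : n < k.val) :
    ∀ S ∈ omitsSomeLE n, (SimplexCategory.δ k).toOrderHom '' S ∈ omitsSomeLE n := by
  rintro S ⟨v, hv, h⟩
  refine ⟨v, hv, ?_⟩
  rintro _ ⟨x, hx, rfl⟩
  have := h x hx
  rw [δ_apply]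
  split_ifs <;> omega

/-- Sends the last three vertices to the vertex `n + 3` of `Δ[n + 4]`. -/
def fold (n : ℕ) : ⦋n + 3⦌ ⟶ ⦋n + 4⦌ :=
  SimplexCategory.mkHom ⟨fun x ↦ ⟨if x.val ≤ n then x else n + 3, by split_ifs <;> omega⟩,
    fun x y h ↦ by
      have : x.val ≤ y.val := h
      simp only [Fin.mk_le_mk]
      split_ifs <;> omega⟩

lemma fold_apply (x : Fin (n + 4)) :
    ((fold n).toOrderHom x).val = if x.val ≤ n then x.val else n + 3 :=
  rfl

lemma image_fold_mem_omitsSomeLE (S : Set (Fin (n + 4))) :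
    (fold n).toOrderHom '' S ∈ omitsSomeLE (n + 1) := by
  refine ⟨n + 1, le_rfl, ?_⟩
  rintro _ ⟨x, -, rfl⟩
  rw [fold_apply]
  split_ifs <;> omega

lemma image_fold_mem_boundaryPart :
    ∀ S ∈ omitsSomeLE n ⊓ omits (n + 3), (fold n).toOrderHom '' S ∈ boundaryPart n := by
  rintro S ⟨⟨v, hv, h⟩, -⟩
  refine ⟨⟨v, hv, ?_⟩, ?_, ?_⟩
  all_goals
    rintro _ ⟨x, hx, rfl⟩
    have := h x hx
    rw [fold_apply]
    split_ifs <;> omega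

lemma image_δ_mem_boundaryPart :
    ∀ S ∈ omitsSomeLE n ⊓ omits (n + 3),
      (SimplexCategory.δ (⟨n + 2, by omega⟩ : Fin (n + 5))).toOrderHom '' S ∈ boundaryPart n := by
  rintro S ⟨⟨v, hv, h⟩, h₃⟩
  refine ⟨image_δ_mem_omitsSomeLE (by dsimp only; omega) S ⟨v, hv, h⟩, ?_, ?_⟩
  all_goals
    rintro _ ⟨x, hx, rfl⟩
    have := h₃ x hx
    rw [δ_apply]
    dsimp only
    split_ifs <;> omega

/-- The faces `v ≤ n + 1` of `Λ[n + 3, n + 2]`, included into `Δ[n + 4] = Δ[n] ⋆ Δ[3]` as faces that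
omit `n + 2`. -/
def skipMap (n : ℕ) : (ofFaces (N := n + 3) (omitsSomeLE (n + 1)) : SSet.{u}) ⟶
    ofFaces (N := n + 4) (omitsSomeLE (n + 1)) :=
  ofFacesMap (SimplexCategory.δ ⟨n + 2, by omega⟩)
    (image_δ_mem_omitsSomeLE (by dsimp only; omega))

/-- The map that `fold` induces on the face `n + 3` of `Λ[n + 3, n + 2]`. -/
def foldMap (n : ℕ) : (ofFaces (N := n + 3) (omits (n + 3)) : SSet.{u}) ⟶
    ofFaces (N := n + 4) (omitsSomeLE (n + 1)) :=
  ofFacesMap (fold n) fun S _ ↦ image_fold_mem_omitsSomeLE S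

lemma skipMap_eq_foldMap :
    ofFacesHomOfLE (inf_le_left.trans inf_le_left :
        omitsSomeLE (n + 1) ⊓ omits (n + 3) ⊓ omits (n + 1) ≤ _) ≫ skipMap.{u} n =
      ofFacesHomOfLE (inf_le_left.trans inf_le_right) ≫ foldMap n := by
  refine ofFaces_hom_ext fun d x hx i ↦ Fin.ext ?_
  refine (δ_apply _ _).trans ?_
  change (if (x i).val < n + 2 then (x i).val else (x i).val + 1) =
    if (x i).val ≤ n then (x i).val else n + 3
  have h₁ : (x i).val ≠ n + 1 := hx.2 _ ⟨i, rfl⟩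
  have h₃ : (x i).val ≠ n + 3 := hx.1.2 _ ⟨i, rfl⟩
  split_ifs <;> omega

lemma δ_comp_boundaryPartMap :
    ofFacesMap _ image_δ_mem_boundaryPart ≫ boundaryPartMap.{u} n =
      ofFacesMap _ image_fold_mem_boundaryPart ≫ boundaryPartMap n := by
  refine ofFaces_hom_ext fun d x hx i ↦ Fin.ext ?_
  change min (((SimplexCategory.δ (⟨n + 2, by omega⟩ : Fin (n + 5))).toOrderHom (x i)).val - 0)
    (n + 1) = min ((if (x i).val ≤ n then (x i).val else n + 3) - 0) (n + 1)
  rw [δ_apply]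
  dsimp only
  split_ifs <;> omega

variable {s : (ofFaces (hornFaces (Fin.last (n + 2))) : SSet.{u}) ⟶ C}
  {φ : (ofFaces (omitsSomeLE (n + 1)) : SSet) ⟶ C}

lemma skipMap_comp_eq_foldMap_comp
    (hφ : ofFacesHomOfLE boundaryPart_le ≫ φ = boundaryPartMap n ≫ s) :
    ofFacesHomOfLE inf_le_left ≫ skipMap n ≫ φ =
      ofFacesHomOfLE (inf_le_right : omitsSomeLE (n + 1) ⊓ omits (n + 3) ≤ _) ≫
        foldMap n ≫ φ := by
  have hcover : omitsSomeLE (N := n + 3) (n + 1) ⊓ omits (n + 3) ≤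
      omits (n + 1) ⊔ omitsSomeLE n := by
    rintro S ⟨⟨v, hv, h⟩, -⟩
    obtain hv | rfl := Nat.le_succ_iff.1 hv
    · exact Or.inr ⟨v, hv, h⟩
    · exact Or.inl h
  refine ofFaces_hom_ext_of_le_sup hcover (congrArg (· ≫ φ) skipMap_eq_foldMap) ?_
  have hle : omitsSomeLE (N := n + 3) (n + 1) ⊓ omits (n + 3) ⊓ omitsSomeLE n ≤
      omitsSomeLE n ⊓ omits (n + 3) :=
    le_inf inf_le_right (inf_le_left.trans inf_le_right)
  calc
    _ = ofFacesHomOfLE hle ≫ ofFacesMap _ image_δ_mem_boundaryPart ≫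
        ofFacesHomOfLE boundaryPart_le ≫ φ := rfl
    _ = ofFacesHomOfLE hle ≫ (ofFacesMap _ image_δ_mem_boundaryPart ≫ boundaryPartMap n) ≫ s := by
      rw [hφ, Category.assoc]
    _ = ofFacesHomOfLE hle ≫ ofFacesMap _ image_fold_mem_boundaryPart ≫
        ofFacesHomOfLE boundaryPart_le ≫ φ := by
      rw [δ_comp_boundaryPartMap, hφ, Category.assoc]
    _ = _ := rfl

lemma image_δ_mem_omitsSomeLE_of_mem_hornFaces_last :
    ∀ S ∈ hornFaces (Fin.last (n + 2)),
      (SimplexCategory.δ (⟨n + 2, by omega⟩ : Fin (n + 4))).toOrderHom '' S ∈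
        omitsSomeLE (n + 1) :=
  fun S hS ↦ image_δ_mem_omitsSomeLE (by dsimp only; omega) S (mem_hornFaces_last.1 hS)

lemma image_δ_δ_mem_hornPart :
    ∀ S ∈ hornFaces (Fin.last (n + 2)),
      (SimplexCategory.δ (⟨n + 2, by omega⟩ : Fin (n + 4)) ≫
        SimplexCategory.δ (⟨n + 2, by omega⟩ : Fin (n + 5))).toOrderHom '' S ∈ hornPart n := by
  refine fun S hS ↦ ⟨?_, ?_⟩
  · have h := image_δ_mem_omitsSomeLE (k := (⟨n + 2, by omega⟩ : Fin (n + 5)))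
      (by dsimp only; omega) _ (image_δ_mem_omitsSomeLE_of_mem_hornFaces_last S hS)
    rwa [← Set.image_comp] at h
  · rintro _ ⟨x, -, rfl⟩
    change ((SimplexCategory.δ _).toOrderHom ((SimplexCategory.δ _).toOrderHom x)).val ≠ n + 3
    rw [δ_apply, δ_apply]
    dsimp only
    split_ifs <;> omega

lemma exists_filler_of_common_extension [Quasicategory C]
    (hφ₁ : ofFacesHomOfLE (inf_le_left : hornPart n ≤ _) ≫ φ = hornPartMap n ≫ s)
    (hφ₂ : ofFacesHomOfLE boundaryPart_le ≫ φ = boundaryPartMap n ≫ s) :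
    ∃ σ : Δ[n + 2] ⟶ C, s = (ofFaces (hornFaces (Fin.last (n + 2)))).ι ≫ σ := by
  obtain ⟨ψ, hψ, -⟩ := exists_desc_ofFaces_sup (skipMap n ≫ φ) (foldMap n ≫ φ)
    (skipMap_comp_eq_foldMap_comp hφ₂)
  obtain ⟨θ, hθ⟩ := Quasicategory.hornFilling (S := C) (n := n + 3) (i := ⟨n + 2, by omega⟩)
    (by simp [Fin.lt_def]) (by simp [Fin.lt_def])
    (ofFacesHomOfLE hornFaces_eq_sup.le ≫ ψ :)
  let face : Δ[n + 2] ⟶ (Δ[n + 3] : SSet.{u}) := stdSimplex.δ ⟨n + 2, by omega⟩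
  refine ⟨face ≫ θ, Eq.symm ?_⟩
  let δ₁ : (ofFaces (hornFaces (Fin.last (n + 2))) : SSet.{u}) ⟶ ofFaces (omitsSomeLE (n + 1)) :=
    ofFacesMap _ image_δ_mem_omitsSomeLE_of_mem_hornFaces_last
  let δ₂ : (ofFaces (hornFaces (Fin.last (n + 2))) : SSet.{u}) ⟶ ofFaces (hornPart n) :=
    ofFacesMap _ image_δ_δ_mem_hornPart
  have hδ₂ : δ₂ ≫ hornPartMap n = 𝟙 _ := by
    refine ofFaces_hom_ext fun d x _ i ↦ Fin.ext ?_
    change min (((SimplexCategory.δ (⟨n + 2, by omega⟩ : Fin (n + 5))).toOrderHom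
      ((SimplexCategory.δ (⟨n + 2, by omega⟩ : Fin (n + 4))).toOrderHom (x i))).val - 0) (n + 2) =
        (x i).val
    rw [δ_apply, δ_apply]
    dsimp only
    split_ifs <;> omega
  have hle : omitsSomeLE (n + 1) ≤ hornFaces (N := n + 3) ⟨n + 2, by omega⟩ :=
    le_sup_left.trans hornFaces_eq_sup.ge
  calc
    _ = δ₁ ≫ ofFacesHomOfLE hle ≫ (ofFaces (hornFaces (N := n + 3) ⟨n + 2, by omega⟩)).ι ≫ θ := rfl
    _ = δ₁ ≫ ofFacesHomOfLE le_sup_left ≫ ψ := congrArg (δ₁ ≫ ofFacesHomOfLE hle ≫ ·) hθ.symm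
    _ = δ₂ ≫ ofFacesHomOfLE inf_le_left ≫ φ := congrArg (δ₁ ≫ ·) hψ
    _ = (δ₂ ≫ hornPartMap n) ≫ s := congrArg (δ₂ ≫ ·) hφ₁
    _ = s := by rw [hδ₂, Category.id_comp]

end InnerHorn

end SpecialOuterHorn

open SSetPaper SpecialOuterHorn in
theorem outer_horn_filling_of_equivalence_general.{u}
    (C : SSet.{u}) [SSet.Quasicategory C] (n : ℕ)
    (σ₀ : (Λ[n + 2, Fin.last (n + 2)] : SSet) ⟶ C)
    (he : IsEquivalenceEdge C (σ₀.app (op ⦋1⦌) (topEdge n))) :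
    ∃ σ : (Δ[n + 2] : SSet) ⟶ C, σ₀ = Λ[n + 2, Fin.last (n + 2)].ι ≫ σ := by
  obtain ⟨τ, hτ₁, hτ₂⟩ := exists_three_simplex_of_isEquivalenceEdge he
  have hf : SSet.yonedaEquiv.symm (σ₀.app (op ⦋1⦌) (topEdge n)) = lastEdge n ≫ σ₀ :=
    (SSet.yonedaEquiv_symm_comp _ _).symm
  rw [hf] at hτ₁ hτ₂
  obtain ⟨φ, hφ₁, hφ₂⟩ := exists_common_extension hτ₁ hτ₂
  exact exists_filler_of_common_extension hφ₁ hφ₂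

open SSetPaper in
theorem outer_horn_filling_of_equivalence
    (C : SSet.{0}) [SSet.Quasicategory C] (n : ℕ)
    (σ₀ : (Λ[n + 2, Fin.last (n + 2)] : SSet) ⟶ C)
    (he : IsEquivalenceEdge C (σ₀.app (op ⦋1⦌) (topEdge n))) :
    ∃ σ : (Δ[n + 2] : SSet) ⟶ C, σ₀ = Λ[n + 2, Fin.last (n + 2)].ι ≫ σ :=
  outer_horn_filling_of_equivalence_general C n σ₀ he
end

section
/- Let C be a quasicategory. The restriction map Fun(Δ[2], C) → Fun(Λ[2,1], C) induced by the inner horn inclusion Λ[2,1] ⊆ Δ[2] is a trivial Kan fibration. In particular, for any pair of edges f: x → y and g: y → z of C, the fiber over the point of Fun(Λ[2,1], C) determined by (f, g) — the simplicial set of compositions of f and g — is a contractible Kan complex. -/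
open CategoryTheory Simplicial Opposite MonoidalCategory

namespace SSetPaper

/-- A map of simplicial sets is a trivial Kan fibration if every commutative square
whose left edge is a boundary inclusion `∂Δ[n] ⊆ Δ[n]` admits a diagonal lift. -/
def IsTrivialKanFibration {X Y : SSet.{0}} (p : X ⟶ Y) : Prop :=
  ∀ (n : ℕ) (t : (∂Δ[n] : SSet) ⟶ X) (b : (Δ[n] : SSet) ⟶ Y),
    t ≫ p = ∂Δ[n].ι ≫ b →
    ∃ l : (Δ[n] : SSet) ⟶ X, ∂Δ[n].ι ≫ l = t ∧ l ≫ p = b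

/-- A simplicial set is contractible if every map `∂Δ[n] ⟶ S` extends to `Δ[n] ⟶ S`
(equivalently, the map `S ⟶ Δ[0]` is a trivial Kan fibration). -/
def IsContractible (S : SSet.{0}) : Prop :=
  ∀ (n : ℕ) (t : (∂Δ[n] : SSet) ⟶ S), ∃ l : (Δ[n] : SSet) ⟶ S, ∂Δ[n].ι ≫ l = t

/-- A simplicial set `S` is a *Kan complex* if it satisfies the following horn-filling condition:
for every `n : ℕ` and `0 ≤ i ≤ n`,
every map of simplicial sets `σ₀ : Λ[n, i] → S` can be extended to a map `σ : Δ[n] → S`.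
(This is `SSet.KanComplex` of the older Mathlib, where `n = 0` is included.) -/
class KanComplex (S : SSet.{0}) : Prop where
  hornFilling : ∀ ⦃n : ℕ⦄ ⦃i : Fin (n + 1)⦄ (σ₀ : (Λ[n, i] : SSet) ⟶ S),
    ∃ σ : (Δ[n] : SSet) ⟶ S, σ₀ = Λ[n, i].ι ≫ σ

/-- The internal hom `Fun(A, X)` of simplicial sets: its `n`-simplices are the maps
`Δ[n] × A ⟶ X`. -/
noncomputable def FunSSet (A X : SSet.{0}) : SSet.{0} where
  obj a := MonoidalCategory.tensorObj (SSet.stdSimplex.obj a.unop) A ⟶ X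
  map {a b} f := ↾fun g => (SSet.stdSimplex.map f.unop ▷ A) ≫ g
  map_id a := by
    refine ConcreteCategory.hom_ext _ _ fun g => ?_
    show (SSet.stdSimplex.map (𝟙 a).unop ▷ A) ≫ g = g
    rw [unop_id, show SSet.stdSimplex.{0}.map (𝟙 a.unop) = 𝟙 (SSet.stdSimplex.obj a.unop) from
        CategoryTheory.Functor.map_id _ _, MonoidalCategory.id_whiskerRight,
      Category.id_comp]
  map_comp {a b c} f g := by
    refine ConcreteCategory.hom_ext _ _ fun s => ?_
    show (SSet.stdSimplex.map (f ≫ g).unop ▷ A) ≫ s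
        = (SSet.stdSimplex.map g.unop ▷ A) ≫ (SSet.stdSimplex.map f.unop ▷ A) ≫ s
    rw [unop_comp, show SSet.stdSimplex.{0}.map (g.unop ≫ f.unop)
        = SSet.stdSimplex.map g.unop ≫ SSet.stdSimplex.map f.unop from Functor.map_comp _ _ _,
      MonoidalCategory.comp_whiskerRight, Category.assoc]

/-- The restriction map `Fun(Δ[2], C) ⟶ Fun(Λ[2,1], C)` induced by the inner horn
inclusion `Λ[2,1] ⊆ Δ[2]`. -/
noncomputable def funRestrict (C : SSet.{0}) :
    FunSSet (Δ[2] : SSet) C ⟶ FunSSet (Λ[2, 1] : SSet) C where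
  app a := ↾fun g => (SSet.stdSimplex.obj a.unop ◁ Λ[2, 1].ι) ≫ g
  naturality a b f := by
    refine ConcreteCategory.hom_ext _ _ fun (g : SSet.stdSimplex.obj a.unop ⊗ (Δ[2] : SSet) ⟶ C) => ?_
    show (SSet.stdSimplex.obj b.unop ◁ Λ[2, 1].ι) ≫
        (SSet.stdSimplex.map f.unop ▷ (Δ[2] : SSet)) ≫ g
      = (SSet.stdSimplex.map f.unop ▷ (Λ[2, 1] : SSet)) ≫
        (SSet.stdSimplex.obj a.unop ◁ Λ[2, 1].ι) ≫ g
    rw [← Category.assoc, whisker_exchange, Category.assoc]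

/-- The fiber of the restriction map `Fun(Δ[2], C) ⟶ Fun(Λ[2,1], C)` over the point
determined by `u : Λ[2,1] ⟶ C`: the simplicial set of compositions. -/
noncomputable def CompositionSpace (C : SSet.{0}) (u : (Λ[2, 1] : SSet) ⟶ C) : SSet.{0} where
  obj a := { g : MonoidalCategory.tensorObj (SSet.stdSimplex.obj a.unop) (Δ[2] : SSet) ⟶ C //
      (SSet.stdSimplex.obj a.unop ◁ Λ[2, 1].ι) ≫ g
        = CartesianMonoidalCategory.snd _ _ ≫ u }
  map {a b} f := ↾fun g => ⟨(SSet.stdSimplex.map f.unop ▷ (Δ[2] : SSet)) ≫ g.1, by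
    rw [← Category.assoc, whisker_exchange, Category.assoc, g.2, ← Category.assoc,
      CartesianMonoidalCategory.whiskerRight_snd]⟩
  map_id a := by
    refine ConcreteCategory.hom_ext _ _ fun g => ?_
    apply Subtype.ext
    show (SSet.stdSimplex.map (𝟙 a).unop ▷ (Δ[2] : SSet)) ≫ g.1 = g.1
    rw [unop_id, show SSet.stdSimplex.{0}.map (𝟙 a.unop) = 𝟙 (SSet.stdSimplex.obj a.unop) from
        CategoryTheory.Functor.map_id _ _, MonoidalCategory.id_whiskerRight,
      Category.id_comp]
  map_comp {a b c} f g := by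
    refine ConcreteCategory.hom_ext _ _ fun s => ?_
    apply Subtype.ext
    show (SSet.stdSimplex.map (f ≫ g).unop ▷ (Δ[2] : SSet)) ≫ s.1
        = (SSet.stdSimplex.map g.unop ▷ (Δ[2] : SSet)) ≫
            (SSet.stdSimplex.map f.unop ▷ (Δ[2] : SSet)) ≫ s.1
    rw [unop_comp, show SSet.stdSimplex.{0}.map (g.unop ≫ f.unop)
        = SSet.stdSimplex.map g.unop ≫ SSet.stdSimplex.map f.unop from Functor.map_comp _ _ _,
      MonoidalCategory.comp_whiskerRight, Category.assoc]

/-- The edge `0 → 1` of the inner horn `Λ[2,1]`. -/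
def e01 : (Λ[2, 1] : SSet) _⦋1⦌ := SSet.horn.edge 2 1 0 1 (by decide) (by decide)

/-- The edge `1 → 2` of the inner horn `Λ[2,1]`. -/
def e12 : (Λ[2, 1] : SSet) _⦋1⦌ := SSet.horn.edge 2 1 1 2 (by decide) (by decide)

end SSetPaper

/-!
STATEMENT 11: Let `C` be a quasicategory.  The restriction map
`Fun(Δ[2], C) → Fun(Λ[2,1], C)` induced by the inner horn inclusion `Λ[2,1] ⊆ Δ[2]` is a
trivial Kan fibration.  In particular, for any pair of edges `f : x → y` and `g : y → z`
of `C`, the fiber over the point of `Fun(Λ[2,1], C)` determined by `(f, g)` — the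
simplicial set of compositions of `f` and `g` — is a contractible Kan complex.
-/

/-!
The pushout-product of a monomorphism with an inner anodyne map is inner anodyne. By adjunction,
for `i` inner anodyne and `C` a quasicategory, restriction along `i` lifts against every
monomorphism. The space of compositions is the pullback of such a restriction map
along a point, so its map to the point inherits this lifting property; applying it to boundary
inclusions gives contractibility, and to horn inclusions the Kan condition.
-/

namespace SSetPaper

open Limits
open MorphismProperty (monomorphisms)

section InnerAnodyne

universe u

variable {A B : SSet.{u}} {i : A ⟶ B}

lemma rlp_monomorphisms_pullbackObjObjπ (hi : SSet.innerAnodyneExtensions i)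
    {X Y : SSet.{u}} {p : X ⟶ Y} [SSet.InnerFibration p]
    (sq : MonoidalClosed.internalHom.PullbackObjObj i p) :
    (monomorphisms SSet.{u}).rlp sq.π := by
  intro K L j hj
  have : Mono j := hj
  let pushoutProduct := Functor.PushoutObjObj.ofHasPushout (curriedTensor SSet.{u}) i j
  rw [← MonoidalClosed.internalHomAdjunction₂.hasLiftingProperty_iff pushoutProduct]
  exact SSet.innerAnodyneExtensions_pushoutObjObjι' pushoutProduct hi _
    (SSet.mem_innerFibrations p)

lemma rlp_monomorphisms_pre_app (hi : SSet.innerAnodyneExtensions i)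
    (X : SSet.{u}) [SSet.Quasicategory X] :
    (monomorphisms SSet.{u}).rlp ((MonoidalClosed.pre i).app X) :=
  rlp_monomorphisms_pullbackObjObjπ hi
    (Functor.PullbackObjObj.ofIsTerminal _ i (terminal.from X) terminalIsTerminal)

end InnerAnodyne

section TrivialKanFibration

variable {X Y : SSet.{0}} {p : X ⟶ Y}

lemma isTrivialKanFibration_iff_rlp_monomorphisms :
    IsTrivialKanFibration p ↔ (monomorphisms SSet.{0}).rlp p := by
  rw [SSet.rlp_monomorphisms]
  constructor
  · rintro hp _ _ _ ⟨n⟩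
    refine ⟨fun {t b} sq ↦ ?_⟩
    obtain ⟨l, hleft, hright⟩ := hp n t b sq.w
    exact ⟨⟨⟨l, hleft, hright⟩⟩⟩
  · intro hp n t b w
    have : HasLiftingProperty ∂Δ[n].ι p :=
      hp _ (SSet.modelCategoryQuillen.boundary_ι_mem_I n)
    have sq : CommSq t ∂Δ[n].ι p b := ⟨w⟩
    exact ⟨sq.lift, sq.fac_left, sq.fac_right⟩

lemma IsTrivialKanFibration.of_isPullback {X' Y' : SSet.{0}} {p' : X' ⟶ Y'} {f : X' ⟶ X}
    {g : Y' ⟶ Y} (sq : IsPullback f p' p g) (hp : IsTrivialKanFibration p) :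
    IsTrivialKanFibration p' := by
  rw [isTrivialKanFibration_iff_rlp_monomorphisms] at hp ⊢
  exact MorphismProperty.of_isPullback sq hp

lemma isContractible_iff_isTrivialKanFibration (hY : IsTerminal Y) (p : X ⟶ Y) :
    IsContractible X ↔ IsTrivialKanFibration p := by
  constructor
  · intro hX n t b _
    obtain ⟨l, hl⟩ := hX n t
    exact ⟨l, hl, hY.hom_ext _ _⟩
  · intro hp n t
    obtain ⟨l, hl, -⟩ := hp n t (hY.from _) (hY.hom_ext _ _)
    exact ⟨l, hl⟩

lemma IsContractible.kanComplex (hX : IsContractible X) : KanComplex X where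
  hornFilling n i σ₀ := by
    rw [isContractible_iff_isTrivialKanFibration terminalIsTerminal (terminal.from X),
      isTrivialKanFibration_iff_rlp_monomorphisms] at hX
    have : HasLiftingProperty Λ[n, i].ι (terminal.from X) :=
      hX _ (MorphismProperty.monomorphisms.infer_property _)
    have sq : CommSq σ₀ Λ[n, i].ι (terminal.from X) (terminal.from _) :=
      ⟨terminal.hom_ext _ _⟩
    exact ⟨sq.lift, sq.fac_left.symm⟩

end TrivialKanFibration

section InternalHom

universe u

variable {A B X : SSet.{u}}

variable (A X) in
/-- The description of the `n`-simplices of the internal hom as maps `Δ[n] ⊗ A ⟶ X`. The braiding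
appears because the internal hom is right adjoint to `A ⊗ -`. -/
noncomputable def ihomSimplexEquiv (n : SimplexCategory) :
    (SSet.stdSimplex.obj n ⊗ A ⟶ X) ≃ ((ihom A).obj X).obj (op n) :=
  ((β_ (SSet.stdSimplex.obj n) A).homFromEquiv.trans
    ((ihom.adjunction A).homEquiv _ _)).trans SSet.yonedaEquiv

lemma ihomSimplexEquiv_apply {n : SimplexCategory} (g : SSet.stdSimplex.obj n ⊗ A ⟶ X) :
    ihomSimplexEquiv A X n g =
      SSet.yonedaEquiv (MonoidalClosed.curry ((β_ (SSet.stdSimplex.obj n) A).inv ≫ g)) :=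
  rfl

lemma ihomSimplexEquiv_whiskerRight_comp {m n : SimplexCategory} (f : m ⟶ n)
    (g : SSet.stdSimplex.obj n ⊗ A ⟶ X) :
    ihomSimplexEquiv A X m (SSet.stdSimplex.map f ▷ A ≫ g) =
      ((ihom A).obj X).map f.op (ihomSimplexEquiv A X n g) := by
  rw [ihomSimplexEquiv_apply, ihomSimplexEquiv_apply, SSet.yonedaEquiv_naturality,
    ← MonoidalClosed.curry_natural_left, BraidedCategory.braiding_inv_naturality_right_assoc]

lemma ihomSimplexEquiv_whiskerLeft_comp {n : SimplexCategory} (i : A ⟶ B)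
    (g : SSet.stdSimplex.obj n ⊗ B ⟶ X) :
    ihomSimplexEquiv A X n (SSet.stdSimplex.obj n ◁ i ≫ g) =
      ((MonoidalClosed.pre i).app X).app (op n) (ihomSimplexEquiv B X n g) := by
  rw [ihomSimplexEquiv_apply, ihomSimplexEquiv_apply, ← SSet.yonedaEquiv_comp,
    MonoidalClosed.curry_pre_app, BraidedCategory.braiding_inv_naturality_left_assoc]

end InternalHom

section RestrictionMap

/-- The comparison of `Fun(A, X)` with the internal hom of the cartesian closed structure on
simplicial sets. -/
noncomputable def funSSetIsoIhom (A X : SSet.{0}) : FunSSet A X ≅ (ihom A).obj X :=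
  NatIso.ofComponents (fun n ↦ (ihomSimplexEquiv A X n.unop).toIso) fun f ↦ by
    ext g
    exact ihomSimplexEquiv_whiskerRight_comp f.unop g

lemma funRestrict_comp_funSSetIsoIhom_hom (C : SSet.{0}) :
    funRestrict C ≫ (funSSetIsoIhom (Λ[2, 1] : SSet) C).hom =
      (funSSetIsoIhom (Δ[2] : SSet) C).hom ≫ (MonoidalClosed.pre Λ[2, 1].ι).app C := by
  ext n g
  exact ihomSimplexEquiv_whiskerLeft_comp Λ[2, 1].ι g

lemma isTrivialKanFibration_funRestrict (C : SSet.{0}) [SSet.Quasicategory C] :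
    IsTrivialKanFibration (funRestrict C) := by
  have horn_mem : SSet.innerAnodyneExtensions (SSet.horn.{0} 2 1).ι :=
    SSet.innerAnodyneExtensions.horn_ι (by decide) (by decide)
  let restrictionIso : Arrow.mk (funRestrict C) ≅
      Arrow.mk ((MonoidalClosed.pre (SSet.horn.{0} 2 1).ι).app C) :=
    Arrow.isoMk (funSSetIsoIhom _ C) (funSSetIsoIhom _ C)
      (funRestrict_comp_funSSetIsoIhom_hom C).symm
  rw [isTrivialKanFibration_iff_rlp_monomorphisms,
    MorphismProperty.arrow_mk_iso_iff (monomorphisms SSet.{0}).rlp restrictionIso]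
  exact rlp_monomorphisms_pre_app horn_mem C

end RestrictionMap

section CompositionSpace

variable (C : SSet.{0}) (u : (Λ[2, 1] : SSet) ⟶ C)

/-- The inclusion of the space of compositions into `Fun(Δ[2], C)`. -/
noncomputable def compositionSpaceι : CompositionSpace C u ⟶ FunSSet (Δ[2] : SSet) C where
  app _ := ↾Subtype.val

/-- The point of `Fun(Λ[2,1], C)` determined by `u`, as a map out of `Δ[0]`. -/
noncomputable def funPoint : (Δ[0] : SSet) ⟶ FunSSet (Λ[2, 1] : SSet) C :=
  SSet.const (CartesianMonoidalCategory.snd (Δ[0] : SSet) (Λ[2, 1] : SSet) ≫ u)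

lemma isPullback_compositionSpaceι :
    IsPullback (compositionSpaceι C u) (SSet.stdSimplex.isTerminalObj₀.from _)
      (funRestrict C) (funPoint C u) := by
  refine IsPullback.of_forall_isPullback_app fun n ↦ (Types.isPullback_iff _ _ _ _).2 ⟨?_, ?_, ?_⟩
  · ext g
    exact g.2
  · rintro g h ⟨hgh, -⟩
    exact Subtype.ext hgh
  · intro g x hgx
    exact ⟨⟨g, hgx⟩, rfl, SSet.yonedaEquiv.symm.injective SSet.stdSimplex.ext₀⟩

end CompositionSpace

lemma isContractible_compositionSpace (C : SSet.{0}) [SSet.Quasicategory C]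
    (u : (Λ[2, 1] : SSet) ⟶ C) : IsContractible (CompositionSpace C u) :=
  (isContractible_iff_isTrivialKanFibration SSet.stdSimplex.isTerminalObj₀ _).2
    ((isTrivialKanFibration_funRestrict C).of_isPullback (isPullback_compositionSpaceι C u))

end SSetPaper

open SSetPaper in
theorem funRestrict_trivialKanFibration_and_compositionSpaces_contractible
    (C : SSet.{0}) [SSet.Quasicategory C] :
    IsTrivialKanFibration (funRestrict C) ∧
      ∀ (f g : C _⦋1⦌) (u : (Λ[2, 1] : SSet) ⟶ C),
        u.app (op ⦋1⦌) e01 = f → u.app (op ⦋1⦌) e12 = g →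
        IsContractible (CompositionSpace C u) ∧ KanComplex (CompositionSpace C u) := by
  refine ⟨isTrivialKanFibration_funRestrict C, fun _ _ u _ _ ↦ ?_⟩
  have contractible := isContractible_compositionSpace C u
  exact ⟨contractible, contractible.kanComplex⟩
end
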